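/- For every integer g ≥ 1 there exists an integer κ ≥ 1 such that every graphical conjunctive query (H,X) whose linked matching number is at least κ has the g-grate as a query minor. -/

import Mathlib

/-!
The endpoints `S ⊆ Y` of a linked matching form a large well-linked set in `H[Y]`. The theorem
follows from a grid theorem for well-linked sets in which the grid is rooted at `S`.

*Grid.* A well-linked set determines, for every small separator `Z`, a component of `G - Z` with
more than half of `S` (`exists_bigComp`). Growing a subcubic tree-like graph as far as possible
towards the big component gives a mesh (`exists_mesh`): a connected subcubic graph containing a
large set `X`, such that any two equal-sized subsets of `X` are linked outside of the mesh, and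
every subset of `X` is linked to `S`. The subcubic graph splits into many connected parts, each
with many vertices of `X` (`split_many`). Either all pairs of parts can be joined by disjoint paths,
which gives a large complete minor, or two of the linkages between parts cross heavily (`demands`);
a linkage with fewest edges outside of the other one then traverses it in an orderly way
(`crossing_of_min`), and a grid arises (`crossing_grid`). In both cases every row of the grid
contains a vertex of `X` (`exists_gridM`).

*Rooting.* A linkage from `S` to the rows of the grid with fewest edges outside the grid interferes
with only few rows (`exists_bad_rows`), so some `g` consecutive rows are met only along edges
of the grid. By Menger's theorem `2 * g` disjoint paths run from `S` to this block of rows; they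
enter it through its first or its last row, and hence `g` of them enter it from the same side, in
distinct columns (`exists_rooted`). Merging the columns between consecutive entries gives a
`g × g` grid with all vertices of one side rooted at `S`; the half above the diagonal, with each
column below the diagonal contracted onto the diagonal, is the half-grid of the grate with its
diagonal rooted at `S` (`RootedM.exists_grateM`). The matching edges at the roots supply the free
vertices (`GrateM.isMinorOf`), and `MinorModel.isMinorOf` turns this model into a sequence of
minor operations.
-/

/-- A graphical conjunctive query: a finite simple graph together with a set of
free variables. -/
structure Query where
  V : Type
  fin : Fintype V
  graph : SimpleGraph V
  free : Set V

attribute [instance] Query.fin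

/-- Edge deletion: delete the edge `{u, v}`, keeping the free variables. -/
def Query.deleteEdge (Q : Query) (u v : Q.V) : Query :=
  ⟨Q.V, Q.fin, Q.graph.deleteEdges {s(u, v)}, Q.free⟩

/-- Vertex deletion: delete the (isolated) vertex `v`, removing it from the free
variables if present. -/
noncomputable def Query.deleteVertex (Q : Query) (v : Q.V) : Query :=
  ⟨↥({u : Q.V | u ≠ v}), Fintype.ofFinite _, Q.graph.induce {u : Q.V | u ≠ v},
    {u : ↥({u : Q.V | u ≠ v}) | (u : Q.V) ∈ Q.free}⟩

/-- Edge contraction: contract the edge `{u, v}` to the vertex `u` (which represents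
the merged vertex `w`); `w` is free iff `u` or `v` was free. -/
noncomputable def Query.contract (Q : Query) (u v : Q.V) : Query :=
  ⟨↥({x : Q.V | x ≠ v}), Fintype.ofFinite _,
    SimpleGraph.fromRel (fun a b => Q.graph.Adj a.val b.val ∨ (a.val = u ∧ Q.graph.Adj v b.val)),
    {x : ↥({x : Q.V | x ≠ v}) | (x : Q.V) ∈ Q.free ∨ ((x : Q.V) = u ∧ v ∈ Q.free)}⟩

/-- Two queries are isomorphic if there is a graph isomorphism mapping the free
variables of one onto those of the other. -/
def Query.IsoTo (Q Q' : Query) : Prop :=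
  ∃ e : Q.graph ≃g Q'.graph, ⇑e '' Q.free = Q'.free

/-- One-step minor operations on queries (up to isomorphism / renaming). -/
inductive QueryStep : Query → Query → Prop
  | edgeDel (Q : Query) (u v : Q.V) (h : Q.graph.Adj u v) : QueryStep Q (Q.deleteEdge u v)
  | vertexDel (Q : Query) (v : Q.V) (h : ∀ w, ¬ Q.graph.Adj v w) : QueryStep Q (Q.deleteVertex v)
  | contract (Q : Query) (u v : Q.V) (h : Q.graph.Adj u v) : QueryStep Q (Q.contract u v)
  | iso (Q Q' : Query) (h : Q.IsoTo Q') : QueryStep Q Q'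

/-- `Q'` is a query minor of `Q` if it arises from `Q` by a finite sequence of
one-step minor operations. -/
def Query.IsMinorOf (Q' Q : Query) : Prop := Relation.ReflTransGen QueryStep Q Q'

/-- A set `S` is node-well-linked in `G` if for all disjoint equal-sized subsets
`A, B ⊆ S` there are `|A|` pairwise vertex-disjoint paths joining `A` to `B`,
such that every vertex of `A ∪ B` is an endpoint of one of the paths. -/
def NodeWellLinked {V : Type} (G : SimpleGraph V) (S : Set V) : Prop :=
  ∀ A B : Finset V, (A : Set V) ⊆ S → (B : Set V) ⊆ S → Disjoint A B → A.card = B.card →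
    ∃ P : A → (u : V) × (v : V) × G.Walk u v,
      (∀ a, (P a).1 ∈ A ∧ (P a).2.1 ∈ B ∧ (P a).2.2.IsPath) ∧
      (∀ a b : A, a ≠ b → ∀ x, x ∈ (P a).2.2.support → x ∉ (P b).2.2.support) ∧
      (∀ v : V, (v ∈ A ∨ v ∈ B) → ∃ a, (P a).1 = v ∨ (P a).2.1 = v)

/-- `Q` has a linked matching of size at least `m`: a matching `M` from the free
variables `X` to the quantified variables `Y = Xᶜ` whose endpoints in `Y` form a
node-well-linked set in the induced subgraph on `Y`. -/
def Query.HasLinkedMatchingOfSize (Q : Query) (m : ℕ) : Prop :=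
  ∃ M : Finset (Q.V × Q.V),
    m ≤ M.card ∧
    (∀ p ∈ M, p.1 ∈ Q.free ∧ p.2 ∉ Q.free ∧ Q.graph.Adj p.1 p.2) ∧
    (∀ p ∈ M, ∀ q ∈ M, p ≠ q → p.1 ≠ q.1 ∧ p.2 ≠ q.2) ∧
    NodeWellLinked (Q.graph.induce Q.freeᶜ)
      {y : ↥(Q.freeᶜ) | ∃ x, (x, (y : Q.V)) ∈ M}

/-- Vertices of the k-grate: free variables `x^i_{k-1-i}` (encoded `Sum.inl i`) and
quantified variables `y^i_j` with `i + j ≤ k − 1` (encoded `Sum.inr ⟨(i,j), _⟩`). -/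
abbrev GrateV (k : ℕ) : Type :=
  Fin k ⊕ {p : Fin k × Fin k // (p.1 : ℕ) + (p.2 : ℕ) ≤ k - 1}

/-- Edges of the k-grate: `x^i_j y^i_j` for `i + j = k − 1`, and the half-grid
edges `y^i_j y^i_{j+1}` and `y^i_j y^{i+1}_j` among the quantified variables. -/
def grateRel (k : ℕ) : GrateV k → GrateV k → Prop := fun a b =>
  match a, b with
  | Sum.inl i, Sum.inr p => p.val.1 = i ∧ (i : ℕ) + (p.val.2 : ℕ) = k - 1
  | Sum.inr p, Sum.inr q =>
      (p.val.1 = q.val.1 ∧ (p.val.2 : ℕ) + 1 = (q.val.2 : ℕ)) ∨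
      (p.val.2 = q.val.2 ∧ (p.val.1 : ℕ) + 1 = (q.val.1 : ℕ))
  | _, _ => False

/-- The k-grate as a graphical conjunctive query; the free variables are the
vertices on the diagonal boundary, matched into the half-grid. -/
def grateQuery (k : ℕ) : Query :=
  ⟨GrateV k, inferInstance, SimpleGraph.fromRel (grateRel k), Set.range Sum.inl⟩

open Relation

set_option linter.unusedSectionVars false

/-! ### Walks inside vertex sets -/

/-- `RIn G s u v`: the vertices `u` and `v` are joined by a walk of `G` inside the set `s`. -/
def RIn {V : Type} (G : SimpleGraph V) (s : Set V) (u v : V) : Prop :=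
  u ∈ s ∧ ReflTransGen (fun x y => G.Adj x y ∧ y ∈ s) u v

/-- `ConnOn G s`: any two vertices of `s` are joined by a walk of `G` inside `s`
(the empty set is allowed). -/
def ConnOn {V : Type} (G : SimpleGraph V) (s : Set V) : Prop :=
  ∀ u ∈ s, ∀ v ∈ s, RIn G s u v

section Basic

variable {V : Type} {G G' : SimpleGraph V} {s t : Set V} {u v w : V}

theorem RIn.refl (h : u ∈ s) : RIn G s u u := ⟨h, .refl⟩

theorem RIn.left (h : RIn G s u v) : u ∈ s := h.1

theorem RIn.right (h : RIn G s u v) : v ∈ s := by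
  rcases h with ⟨h, h2⟩
  induction h2 with
  | refl => exact h
  | tail _ h _ => exact h.2

theorem RIn.tail (h : RIn G s u v) (hv : G.Adj v w) (hw : w ∈ s) : RIn G s u w :=
  ⟨h.1, h.2.tail ⟨hv, hw⟩⟩

theorem RIn.trans (h : RIn G s u v) (h' : RIn G s v w) : RIn G s u w :=
  ⟨h.1, h.2.trans h'.2⟩

theorem RIn.step (hu : u ∈ s) (hv : G.Adj u v) (hw : v ∈ s) : RIn G s u v :=
  (RIn.refl hu).tail hv hw

theorem RIn.symm (h : RIn G s u v) : RIn G s v u := by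
  rcases h with ⟨h, h2⟩
  induction h2 with
  | refl => exact RIn.refl h
  | tail h1 h2 ih => exact (RIn.step h2.2 h2.1.symm (RIn.right ⟨h, h1⟩)).trans ih

theorem RIn.mono (h : RIn G s u v) (hs : s ⊆ t) : RIn G t u v :=
  ⟨hs h.1, ReflTransGen.mono (fun _ _ hh => ⟨hh.1, hs hh.2⟩) _ _ h.2⟩

theorem RIn.monoG (h : RIn G s u v) (hG : G ≤ G') : RIn G' s u v :=
  ⟨h.1, ReflTransGen.mono (fun _ _ hh => ⟨hG hh.1, hh.2⟩) _ _ h.2⟩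

/-- Induction along a walk, starting at `u`. -/
theorem RIn.ind (h : RIn G s u v) {P : V → Prop} (h0 : P u)
    (hs : ∀ x y, RIn G s u x → P x → G.Adj x y → y ∈ s → P y) : P v := by
  rcases h with ⟨h, h2⟩
  induction h2 with
  | refl => exact h0
  | tail h1 h2 ih => exact hs _ _ ⟨h, h1⟩ ih h2.1 h2.2

/-- A walk leaving the set `C` contains an edge from `C` to its complement. -/
theorem RIn.exit (h : RIn G s u v) {C : Set V} (hu : u ∈ C) (hv : v ∉ C) :
    ∃ x y, x ∈ C ∧ y ∉ C ∧ G.Adj x y ∧ RIn G s u x ∧ RIn G s u y := by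
  by_contra hcon
  push Not at hcon
  refine hv (h.ind (P := fun x => x ∈ C) hu ?_)
  intro x y hx hxC hxy hy
  by_contra hyC
  exact hcon x y hxC hyC hxy hx (hx.tail hxy hy)

/-- The part of `s` reachable from `u` inside `s` already witnesses reachability. -/
theorem RIn.in_comp (h : RIn G s u v) : RIn G {x | RIn G s u x} u v := by
  refine h.ind (P := fun x => RIn G {x | RIn G s u x} u x) (RIn.refl (RIn.refl h.1)) ?_
  intro x y hx hP hxy hy
  exact hP.tail hxy (hx.tail hxy hy)

theorem connOn_comp (G : SimpleGraph V) (s : Set V) (u : V) : ConnOn G {x | RIn G s u x} := by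
  intro x hx y hy
  exact (RIn.in_comp hx).symm.trans (RIn.in_comp hy)

theorem ConnOn.monoG (h : ConnOn G s) (hG : G ≤ G') : ConnOn G' s :=
  fun u hu v hv => (h u hu v hv).monoG hG

theorem connOn_singleton (G : SimpleGraph V) (u : V) : ConnOn G {u} := by
  rintro x rfl y rfl; exact RIn.refl rfl

theorem connOn_of_center (c : V) (h : ∀ x ∈ s, RIn G s c x) : ConnOn G s :=
  fun u hu v hv => (h u hu).symm.trans (h v hv)

theorem ConnOn.union (hs : ConnOn G s) (ht : ConnOn G t)
    (h : ∃ x ∈ s, ∃ y ∈ t, x = y ∨ G.Adj x y) : ConnOn G (s ∪ t) := by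
  obtain ⟨x, hx, y, hy, hxy⟩ := h
  have hxy' : RIn G (s ∪ t) x y := by
    rcases hxy with rfl | hxy
    · exact RIn.refl (Or.inl hx)
    · exact RIn.step (Or.inl hx) hxy (Or.inr hy)
  refine connOn_of_center x ?_
  rintro z (hz | hz)
  · exact (hs x hx z hz).mono Set.subset_union_left
  · exact hxy'.trans ((ht y hy z hz).mono Set.subset_union_right)

theorem RIn.of_seq (r : ℕ → V) {i j : ℕ} (hij : i ≤ j) (hm : ∀ k, i ≤ k → k ≤ j → r k ∈ s)
    (ha : ∀ k, i ≤ k → k < j → G.Adj (r k) (r (k + 1))) : RIn G s (r i) (r j) := by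
  induction j, hij using Nat.le_induction with
  | base => exact RIn.refl (hm i le_rfl le_rfl)
  | succ j hij ih =>
    exact (ih (fun k h1 h2 => hm k h1 (by omega)) (fun k h1 h2 => ha k h1 (by omega))).tail
      (ha j hij (by omega)) (hm _ (by omega) le_rfl)

theorem connOn_seq (r : ℕ → V) (i j : ℕ)
    (ha : ∀ k, i ≤ k → k + 1 < j → G.Adj (r k) (r (k + 1))) :
    ConnOn G {x | ∃ k, i ≤ k ∧ k < j ∧ r k = x} := by
  have key : ∀ k l, i ≤ k → k ≤ l → l < j →
      RIn G {x | ∃ k, i ≤ k ∧ k < j ∧ r k = x} (r k) (r l) := by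
    intro k l hk hkl hl
    exact RIn.of_seq r hkl (fun m h1 h2 => ⟨m, by omega, by omega, rfl⟩)
      (fun m h1 h2 => ha m (by omega) (by omega))
  rintro x ⟨k, hk, hk', rfl⟩ y ⟨l, hl, hl', rfl⟩
  rcases le_total k l with h | h
  · exact key k l hk h hl'
  · exact (key l k hl h hk').symm

theorem RIn.exists_seq (h : RIn G s u v) : ∃ (n : ℕ) (r : ℕ → V), r 0 = u ∧ r n = v ∧
    (∀ k, k < n → G.Adj (r k) (r (k + 1))) ∧ (∀ k, k ≤ n → r k ∈ s) := by
  have hu := h.1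
  refine h.ind (P := fun v => ∃ (n : ℕ) (r : ℕ → V), r 0 = u ∧ r n = v ∧
    (∀ k, k < n → G.Adj (r k) (r (k + 1))) ∧ (∀ k, k ≤ n → r k ∈ s))
    ⟨0, fun _ => u, rfl, rfl, by simp, fun _ _ => hu⟩ ?_
  rintro x y - ⟨n, r, h0, hn, ha, hm⟩ hxy hy
  refine ⟨n + 1, fun k => if k ≤ n then r k else y, by simp [h0], by simp, ?_, ?_⟩
  · intro k hk
    rcases Nat.lt_or_ge k n with h | h
    · simp [h.le, Nat.succ_le_of_lt h, ha k h]
    · have : k = n := by omega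
      subst this
      simpa [hn] using hxy
  · intro k hk
    by_cases h : k ≤ n
    · simp [h, hm k h]
    · simp [h, hy]

/-- A shortest walk from `A` to `B` inside `s` is a path that meets `A` only in its first
and `B` only in its last vertex. -/
theorem exists_min_seq {A B : Set V} (h : ∃ a ∈ A, ∃ b ∈ B, RIn G s a b) :
    ∃ (n : ℕ) (r : ℕ → V), r 0 ∈ A ∧ r n ∈ B ∧
      (∀ k, k < n → G.Adj (r k) (r (k + 1))) ∧ (∀ k, k ≤ n → r k ∈ s) ∧
      (∀ k l, k ≤ n → l ≤ n → r k = r l → k = l) ∧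
      (∀ k, k ≤ n → r k ∈ A → k = 0) ∧ (∀ k, k ≤ n → r k ∈ B → k = n) := by
  classical
  have hex : ∃ n, ∃ (r : ℕ → V), r 0 ∈ A ∧ r n ∈ B ∧
      (∀ k, k < n → G.Adj (r k) (r (k + 1))) ∧ (∀ k, k ≤ n → r k ∈ s) := by
    obtain ⟨a, ha, b, hb, hab⟩ := h
    obtain ⟨n, r, h0, hn, h1, h2⟩ := hab.exists_seq
    exact ⟨n, r, h0 ▸ ha, hn ▸ hb, h1, h2⟩
  obtain ⟨r, h0, hn, ha, hm⟩ := Nat.find_spec hex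
  have hmin := fun m => Nat.find_min (H := hex) (m := m)
  set n := Nat.find hex
  refine ⟨n, r, h0, hn, ha, hm, ?_, ?_, ?_⟩
  · have key : ∀ k l, k < l → l ≤ n → r k ≠ r l := by
      intro k l hkl hl heq
      refine hmin (n - (l - k)) (by omega) ⟨fun i => if i ≤ k then r i else r (i + (l - k)),
        by simpa using h0, ?_, ?_, ?_⟩
      · by_cases h : n - (l - k) ≤ k
        · have h1 : n = l := by omega
          have h2 : n - (l - k) = k := by omega
          simp only [h, if_true]
          rw [h2, heq, ← h1]; exact hn
        · simp only [h, if_false]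
          rw [show n - (l - k) + (l - k) = n by omega]; exact hn
      · intro i hi
        rcases lt_trichotomy i k with h | h | h
        · simp only [h.le, Nat.succ_le_of_lt h, if_true]
          exact ha i (by omega)
        · subst h
          simp only [le_refl, if_true, show ¬ (i + 1 ≤ i) by omega, if_false]
          rw [heq, show i + 1 + (l - i) = l + 1 by omega]
          exact ha l (by omega)
        · simp only [show ¬ (i ≤ k) by omega, show ¬ (i + 1 ≤ k) by omega, if_false]
          rw [show i + 1 + (l - k) = i + (l - k) + 1 by omega]
          exact ha _ (by omega)
      · intro i hi
        by_cases h : i ≤ k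
        · simp only [h, if_true]; exact hm i (by omega)
        · simp only [h, if_false]; exact hm _ (by omega)
    intro k l hk hl heq
    rcases lt_trichotomy k l with h | h | h
    · exact absurd heq (key k l h hl)
    · exact h
    · exact absurd heq.symm (key l k h hk)
  · intro k hk hkA
    by_contra h
    refine hmin (n - k) (by omega) ⟨fun i => r (i + k), by simpa using hkA, ?_, ?_, ?_⟩
    · simp only [show n - k + k = n by omega]; exact hn
    · intro i hi
      have := ha (i + k) (by omega)
      rwa [show i + k + 1 = i + 1 + k by omega] at this
    · intro i hi; exact hm _ (by omega)
  · intro k hk hkB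
    by_contra h
    exact hmin k (by omega) ⟨r, h0, hkB, fun i hi => ha i (by omega), fun i hi => hm i (by omega)⟩

end Basic

/-! ### Menger's theorem -/

section Menger

variable {V : Type}

/-- A linkage: `k` pairwise disjoint paths of `G` inside `s` from `A` to `B`, the `i`-th one
being `r i 0, …, r i (len i)`; each path meets `A` and `B` only in its ends. -/
structure Lk (G : SimpleGraph V) (s A B : Set V) (k : ℕ) where
  len : Fin k → ℕ
  r : Fin k → ℕ → V
  adj : ∀ i t, t < len i → G.Adj (r i t) (r i (t + 1))
  mem : ∀ i t, t ≤ len i → r i t ∈ s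
  inj : ∀ i j t t', t ≤ len i → t' ≤ len j → r i t = r j t' → i = j ∧ t = t'
  start : ∀ i, r i 0 ∈ A
  fin : ∀ i, r i (len i) ∈ B
  onlyA : ∀ i t, t ≤ len i → r i t ∈ A → t = 0
  onlyB : ∀ i t, t ≤ len i → r i t ∈ B → t = len i

/-- A set-based version of a linkage: disjoint sets, each joining `A` to `B`. -/
def SetLk (G : SimpleGraph V) (s A B : Set V) (k : ℕ) : Prop :=
  ∃ (a b : Fin k → V) (P : Fin k → Set V), (∀ i, a i ∈ A) ∧ (∀ i, b i ∈ B) ∧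
    (∀ i, P i ⊆ s) ∧ (∀ i, RIn G (P i) (a i) (b i)) ∧ (∀ i j, i ≠ j → Disjoint (P i) (P j))

theorem SetLk.toLk {G : SimpleGraph V} {s A B : Set V} {k : ℕ} (h : SetLk G s A B k) :
    Nonempty (Lk G s A B k) := by
  obtain ⟨a, b, P, ha, hb, hs, hr, hd⟩ := h
  have := fun i => exists_min_seq (G := G) (s := P i) ⟨a i, ha i, b i, hb i, hr i⟩
  choose n r h0 hn hadj hm hinj hA hB using this
  refine ⟨⟨n, r, hadj, fun i t ht => hs i (hm i t ht), ?_, h0, hn, hA, hB⟩⟩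
  intro i j t t' ht ht' heq
  have hij : i = j := by
    by_contra hij
    exact Set.disjoint_left.1 (hd i j hij) (hm i t ht) (heq ▸ hm j t' ht')
  subst hij
  exact ⟨rfl, hinj i t t' ht ht' heq⟩

/-- Removing one edge: a walk of `G` either survives or reaches the removed edge. -/
theorem RIn.delete_edge {G : SimpleGraph V} {s : Set V} {u v x y : V} (h : RIn G s u v) :
    RIn (G.deleteEdges {s(x, y)}) s u v ∨
      ((RIn (G.deleteEdges {s(x, y)}) s u x ∨ RIn (G.deleteEdges {s(x, y)}) s u y) ∧
       (RIn (G.deleteEdges {s(x, y)}) s x v ∨ RIn (G.deleteEdges {s(x, y)}) s y v)) := by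
  refine h.ind (P := fun v => RIn (G.deleteEdges {s(x, y)}) s u v ∨
      ((RIn (G.deleteEdges {s(x, y)}) s u x ∨ RIn (G.deleteEdges {s(x, y)}) s u y) ∧
       (RIn (G.deleteEdges {s(x, y)}) s x v ∨ RIn (G.deleteEdges {s(x, y)}) s y v)))
    (Or.inl (RIn.refl h.1)) ?_
  intro p q hp ih hpq hq
  by_cases he : s(p, q) = s(x, y)
  · have hpx : (p = x ∧ q = y) ∨ (p = y ∧ q = x) := by simpa using he
    right
    constructor
    · rcases ih with ih | ih
      · rcases hpx with ⟨rfl, rfl⟩ | ⟨rfl, rfl⟩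
        · exact Or.inl ih
        · exact Or.inr ih
      · exact ih.1
    · rcases hpx with ⟨rfl, rfl⟩ | ⟨rfl, rfl⟩
      · exact Or.inr (RIn.refl hq)
      · exact Or.inl (RIn.refl hq)
  · have hadj : (G.deleteEdges {s(x, y)}).Adj p q := by
      rw [SimpleGraph.deleteEdges_adj]; exact ⟨hpq, by simpa using he⟩
    rcases ih with ih | ⟨ih1, ih2⟩
    · exact Or.inl (ih.tail hadj hq)
    · right
      refine ⟨ih1, ?_⟩
      rcases ih2 with ih2 | ih2
      · exact Or.inl (ih2.tail hadj hq)
      · exact Or.inr (ih2.tail hadj hq)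

/-- One half of the induction step of Menger's theorem: if `Z` separates `A` from `B` after the
deletion of `xy`, and `A` does not reach `y` there, then every set that separates `A` from
`Z ∪ {x}` in the smaller graph separates `A` from `B` in the larger one. -/
theorem menger_half {G : SimpleGraph V} {s A B Z : Set V} {x y : V}
    (hsep : ∀ a ∈ A, ∀ b ∈ B, ¬ RIn (G.deleteEdges {s(x, y)}) (s \ Z) a b)
    (hAy : ∀ a ∈ A, ¬ RIn (G.deleteEdges {s(x, y)}) (s \ Z) a y) (W : Set V)
    (hW : ∀ a ∈ A, ∀ p ∈ insert x Z, ¬ RIn (G.deleteEdges {s(x, y)}) (s \ W) a p) :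
    ∀ a ∈ A, ∀ b ∈ B, ¬ RIn G (s \ W) a b := by
  intro a ha b hb hab
  have haP : a ∉ insert x Z := fun h => hW a ha a h (RIn.refl hab.left)
  have ha' : a ∈ (s \ W) \ insert x Z := ⟨hab.left, haP⟩
  have hsub : (s \ W) \ insert x Z ⊆ s \ Z :=
    fun v hv => ⟨hv.1.1, fun h => hv.2 (Or.inr h)⟩
  set C := {v | RIn (G.deleteEdges {s(x, y)}) ((s \ W) \ insert x Z) a v} with hC
  have hbC : b ∉ C := fun h => hsep a ha b hb (RIn.mono h hsub)
  obtain ⟨p, q, hp, hq, hpq, -, haq⟩ := hab.exit (C := C) (RIn.refl ha') hbC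
  have hpP : p ∉ insert x Z := (RIn.right hp).2
  have hpx : p ≠ x := fun h => hpP (Or.inl h)
  by_cases he : s(p, q) = s(x, y)
  · have hpx' : (p = x ∧ q = y) ∨ (p = y ∧ q = x) := by simpa using he
    rcases hpx' with ⟨h, _⟩ | ⟨h, _⟩
    · exact hpx h
    · have h3 : RIn (G.deleteEdges {s(x, y)}) (s \ Z) a p := RIn.mono hp hsub
      rw [h] at h3
      exact hAy a ha h3
  · have hadj : (G.deleteEdges {s(x, y)}).Adj p q := by
      rw [SimpleGraph.deleteEdges_adj]; exact ⟨hpq, by simpa using he⟩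
    by_cases hqP : q ∈ insert x Z
    · exact hW a ha q hqP ((RIn.mono hp Set.sdiff_subset).tail hadj haq.right)
    · exact hq (RIn.tail hp hadj ⟨haq.right, hqP⟩)

/-- A joining set can be shrunk so that its vertices are reached before the last vertex. -/
theorem RIn.shrink {G : SimpleGraph V} {P : Set V} {a b : V} (h : RIn G P a b) :
    RIn G ({v | RIn G (P \ {b}) a v} ∪ {b}) a b := by
  by_cases hab : a = b
  · subst hab; exact RIn.refl (Or.inr rfl)
  · have key := h.ind (P := fun v => (v ≠ b ∧ RIn G (P \ {b}) a v) ∨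
      RIn G ({v | RIn G (P \ {b}) a v} ∪ {b}) a b) (Or.inl ⟨hab, RIn.refl ⟨h.1, hab⟩⟩) ?_
    · rcases key with key | key
      · exact absurd rfl key.1
      · exact key
    · intro x y _ hx hxy hy
      rcases hx with ⟨_, hx⟩ | hx
      · by_cases hyb : y = b
        · right
          subst hyb
          exact (hx.in_comp.mono Set.subset_union_left).tail hxy (Or.inr rfl)
        · left
          exact ⟨hyb, hx.tail hxy ⟨hy, hyb⟩⟩
      · exact Or.inr hx

open Classical in
/-- Gluing step of Menger's theorem: linkages from `A` to `Z ∪ {x}` and from `B` to `Z ∪ {y}`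
combine, along `Z` and the edge `xy`, to a linkage from `A` to `B`. -/
theorem menger_glue {G : SimpleGraph V} {s A B : Set V} {x y : V} (hxy : G.Adj x y)
    (Z : Finset V)
    (hsep : ∀ a ∈ A, ∀ b ∈ B, ¬ RIn (G.deleteEdges {s(x, y)}) (s \ Z) a b)
    (hxZ : x ∉ Z) (hyZ : y ∉ Z) {k : ℕ} (hk : Z.card + 1 = k)
    (h1 : SetLk (G.deleteEdges {s(x, y)}) s A (insert x Z : Set V) k)
    (h2 : SetLk (G.deleteEdges {s(x, y)}) s B (insert y Z : Set V) k) : SetLk G s A B k := by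
  set G' := G.deleteEdges {s(x, y)} with hG'
  have hle : G' ≤ G := G.deleteEdges_le _
  obtain ⟨a1, b1, P1, ha1, hb1, hs1, hr1, hd1⟩ := h1
  obtain ⟨a2, b2, P2, ha2, hb2, hs2, hr2, hd2⟩ := h2
  have surj : ∀ (w : V) (b : Fin k → V) (P : Fin k → Set V), w ∉ Z →
      (∀ i, b i ∈ (insert w Z : Set V)) → (∀ i, b i ∈ P i) →
      (∀ i j, i ≠ j → Disjoint (P i) (P j)) → ∀ p ∈ (insert w Z : Set V), ∃ i, b i = p := by
    intro w b P hw hb hbP hd p hp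
    have hinj : Function.Injective b := by
      intro i j hij
      by_contra hne
      exact Set.disjoint_left.1 (hd i j hne) (hbP i) (hij ▸ hbP j)
    have hc : (Finset.univ.image b) = insert w Z := by
      apply Finset.eq_of_subset_of_card_le
      · intro v hv
        obtain ⟨i, -, rfl⟩ := Finset.mem_image.1 hv
        have := hb i
        simpa using this
      · rw [Finset.card_image_of_injective _ hinj, Finset.card_insert_of_notMem hw]
        simp [hk]
    have : p ∈ Finset.univ.image b := by rw [hc]; simpa using hp
    simpa using this
  have s1 := surj x b1 P1 hxZ hb1 (fun i => (hr1 i).right) hd1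
  have s2 := surj y b2 P2 hyZ hb2 (fun i => (hr2 i).right) hd2
  have u1 : ∀ i, ∀ p ∈ P1 i, p ∈ (insert x Z : Set V) → p = b1 i := by
    intro i p hp hpP
    obtain ⟨j, rfl⟩ := s1 p hpP
    by_contra hne
    have hij : i ≠ j := fun h => hne (by rw [h])
    exact Set.disjoint_left.1 (hd1 i j hij) hp (hr1 j).right
  have u2 : ∀ i, ∀ p ∈ P2 i, p ∈ (insert y Z : Set V) → p = b2 i := by
    intro i p hp hpP
    obtain ⟨j, rfl⟩ := s2 p hpP
    by_contra hne
    have hij : i ≠ j := fun h => hne (by rw [h])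
    exact Set.disjoint_left.1 (hd2 i j hij) hp (hr2 j).right
  set Q1 : Fin k → Set V := fun i => {v | RIn G' (P1 i \ {b1 i}) (a1 i) v} ∪ {b1 i} with hQ1
  set Q2 : Fin k → Set V := fun i => {v | RIn G' (P2 i \ {b2 i}) (a2 i) v} ∪ {b2 i} with hQ2
  have hQP1 : ∀ i, Q1 i ⊆ P1 i := by
    rintro i v (hv | hv)
    · exact (RIn.right hv).1
    · rw [Set.mem_singleton_iff.1 hv]; exact (hr1 i).right
  have hQP2 : ∀ i, Q2 i ⊆ P2 i := by
    rintro i v (hv | hv)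
    · exact (RIn.right hv).1
    · rw [Set.mem_singleton_iff.1 hv]; exact (hr2 i).right
  have r1 : ∀ i, ∀ v ∈ Q1 i, v ∉ Z → RIn G' (s \ Z) (a1 i) v := by
    rintro i v (hv | hv) hvZ
    · refine RIn.mono hv ?_
      intro w hw
      exact ⟨hs1 i hw.1, fun hwZ => hw.2 (u1 i w hw.1 (Or.inr hwZ))⟩
    · rw [Set.mem_singleton_iff.1 hv] at hvZ ⊢
      refine (hr1 i).mono ?_
      intro w hw
      exact ⟨hs1 i hw, fun hwZ => hvZ (u1 i w hw (Or.inr hwZ) ▸ hwZ)⟩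
  have r2 : ∀ i, ∀ v ∈ Q2 i, v ∉ Z → RIn G' (s \ Z) (a2 i) v := by
    rintro i v (hv | hv) hvZ
    · refine RIn.mono hv ?_
      intro w hw
      exact ⟨hs2 i hw.1, fun hwZ => hw.2 (u2 i w hw.1 (Or.inr hwZ))⟩
    · rw [Set.mem_singleton_iff.1 hv] at hvZ ⊢
      refine (hr2 i).mono ?_
      intro w hw
      exact ⟨hs2 i hw, fun hwZ => hvZ (u2 i w hw (Or.inr hwZ) ▸ hwZ)⟩
  have meet : ∀ i j v, v ∈ Q1 i → v ∈ Q2 j → v ∈ Z ∧ v = b1 i ∧ v = b2 j := by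
    intro i j v hv1 hv2
    have hvZ : v ∈ Z := by
      by_contra hvZ
      exact hsep _ (ha1 i) _ (ha2 j) ((r1 i v hv1 hvZ).trans (r2 j v hv2 hvZ).symm)
    exact ⟨hvZ, u1 i v (hQP1 i hv1) (Or.inr hvZ), u2 j v (hQP2 j hv2) (Or.inr hvZ)⟩
  have hτ : ∀ i, ∃ j, (b1 i = x ∧ b2 j = y) ∨ (b1 i ∈ Z ∧ b2 j = b1 i) := by
    intro i
    rcases hb1 i with h | h
    · obtain ⟨j, hj⟩ := s2 y (Or.inl rfl)
      exact ⟨j, Or.inl ⟨h, hj⟩⟩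
    · obtain ⟨j, hj⟩ := s2 (b1 i) (Or.inr h)
      exact ⟨j, Or.inr ⟨h, hj⟩⟩
  choose σ hσ using hτ
  have b1inj : ∀ i j, b1 i = b1 j → i = j := by
    intro i j hij
    by_contra hne
    exact Set.disjoint_left.1 (hd1 i j hne) (hr1 i).right (hij ▸ (hr1 j).right)
  have σinj : ∀ i j, σ i = σ j → i = j := by
    intro i j hij
    have h1 := hσ i
    have h2 := hσ j
    rw [hij] at h1
    apply b1inj
    rcases h1 with ⟨h1, h1'⟩ | ⟨h1, h1'⟩ <;> rcases h2 with ⟨h2, h2'⟩ | ⟨h2, h2'⟩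
    · rw [h1, h2]
    · exact absurd (h1' ▸ h2' ▸ h2) hyZ
    · exact absurd (h2' ▸ h1' ▸ h1) hyZ
    · rw [← h1', ← h2']
  have cross : ∀ i i', i ≠ i' → Disjoint (Q1 i) (Q2 (σ i')) := by
    intro i i' hne
    rw [Set.disjoint_left]
    intro v hv1 hv2
    obtain ⟨hvZ, e1, e2⟩ := meet i (σ i') v hv1 hv2
    rcases hσ i' with ⟨_, h⟩ | ⟨_, h⟩
    · exact hyZ (h ▸ e2 ▸ hvZ)
    · exact hne (b1inj _ _ (by rw [← e1, e2, h]))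
  refine ⟨a1, fun i => a2 (σ i), fun i => Q1 i ∪ Q2 (σ i), ha1, fun i => ha2 _, ?_, ?_, ?_⟩
  · intro i
    exact Set.union_subset ((hQP1 i).trans (hs1 i)) ((hQP2 _).trans (hs2 _))
  · intro i
    have e1 : RIn G (Q1 i ∪ Q2 (σ i)) (a1 i) (b1 i) :=
      ((hr1 i).shrink.monoG hle).mono Set.subset_union_left
    have e2 : RIn G (Q1 i ∪ Q2 (σ i)) (b2 (σ i)) (a2 (σ i)) :=
      (((hr2 (σ i)).shrink.monoG hle).mono Set.subset_union_right).symm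
    rcases hσ i with ⟨h, h'⟩ | ⟨h, h'⟩
    · exact (e1.tail (by rw [h, h']; exact hxy) e2.left).trans e2
    · rw [h'] at e2; exact e1.trans e2
  · intro i j hij
    simp only [Set.disjoint_union_left, Set.disjoint_union_right]
    exact ⟨⟨(hd1 i j hij).mono (hQP1 i) (hQP1 j), (cross j i hij.symm).symm⟩,
      cross i j hij,
      (hd2 _ _ (fun h => hij (σinj _ _ h))).mono (hQP2 _) (hQP2 _)⟩

open Classical in
/-- Menger's theorem by induction on the number of edges, with linkages given by vertex sets. -/
theorem menger_set [Finite V] (n : ℕ) : ∀ (G : SimpleGraph V), G.edgeSet.ncard = n →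
    ∀ (s A B : Set V) (k : ℕ),
    (∀ Z : Finset V, (∀ a ∈ A, ∀ b ∈ B, ¬ RIn G (s \ Z) a b) → k ≤ Z.card) →
    SetLk G s A B k := by
  induction n using Nat.strong_induction_on with
  | _ n ih =>
  intro G hn s A B k hyp
  by_cases hE : ∃ x y, G.Adj x y
  swap
  · push Not at hE
    have hf : (A ∩ B ∩ s).Finite := Set.toFinite _
    have hk := hyp hf.toFinset (by
      intro a ha b hb hab
      have hs := hab.left
      have : a = b := hab.ind (P := fun v => a = v) rfl (fun x y _ _ hxy _ => absurd hxy (hE x y))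
      subst this
      exact hs.2 (by simpa using ⟨⟨ha, hb⟩, hs.1⟩))
    let f : Fin k → V := fun i => (hf.toFinset.equivFin.symm (Fin.castLE hk i)).1
    have hfm : ∀ i, f i ∈ A ∩ B ∩ s := fun i => by
      have := (hf.toFinset.equivFin.symm (Fin.castLE hk i)).2
      exact hf.mem_toFinset.1 this
    refine ⟨f, f, fun i => {f i}, fun i => (hfm i).1.1, fun i => (hfm i).1.2, ?_, ?_, ?_⟩
    · intro i v hv
      rw [Set.mem_singleton_iff.1 hv]; exact (hfm i).2
    · intro i; exact RIn.refl rfl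
    · intro i j hij
      rw [Set.disjoint_singleton]
      intro h
      exact hij (Fin.castLE_injective hk (hf.toFinset.equivFin.symm.injective (Subtype.ext h)))
  · obtain ⟨x, y, hxy⟩ := hE
    have hlt : ∀ x y, G.Adj x y → (G.deleteEdges {s(x, y)}).edgeSet.ncard < n := by
      intro x y hxy
      rw [← hn, SimpleGraph.edgeSet_deleteEdges]
      exact Set.ncard_sdiff_singleton_lt_of_mem hxy (Set.toFinite _)
    by_cases hG' : ∀ Z : Finset V,
        (∀ a ∈ A, ∀ b ∈ B, ¬ RIn (G.deleteEdges {s(x, y)}) (s \ Z) a b) → k ≤ Z.card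
    · obtain ⟨a, b, P, h1, h2, h3, h4, h5⟩ := ih _ (hlt x y hxy) _ rfl s A B k hG'
      exact ⟨a, b, P, h1, h2, h3, fun i => (h4 i).monoG (G.deleteEdges_le _), h5⟩
    push Not at hG'
    obtain ⟨Z, hZ, hZk⟩ := hG'
    have hnot : ∃ a ∈ A, ∃ b ∈ B, RIn G (s \ Z) a b := by
      by_contra hcon
      push Not at hcon
      exact absurd (hyp Z hcon) (by omega)
    obtain ⟨a0, ha0, b0, hb0, h0⟩ := hnot
    have core : ∀ x y, G.Adj x y →
        (∀ a ∈ A, ∀ b ∈ B, ¬ RIn (G.deleteEdges {s(x, y)}) (s \ Z) a b) →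
        (∃ a ∈ A, RIn (G.deleteEdges {s(x, y)}) (s \ Z) a x) → SetLk G s A B k := by
      intro x y hxy hZ ⟨a, ha, hax⟩
      have hBx : ∀ b ∈ B, ¬ RIn (G.deleteEdges {s(x, y)}) (s \ Z) x b :=
        fun b hb h => hZ a ha b hb (hax.trans h)
      have hyb : RIn (G.deleteEdges {s(x, y)}) (s \ Z) y b0 := by
        rcases h0.delete_edge (x := x) (y := y) with h | ⟨_, h | h⟩
        · exact absurd h (hZ _ ha0 _ hb0)
        · exact absurd h (hBx _ hb0)
        · exact h
      have hAy : ∀ a ∈ A, ¬ RIn (G.deleteEdges {s(x, y)}) (s \ Z) a y :=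
        fun a ha h => hZ a ha b0 hb0 (h.trans hyb)
      have hxZ : x ∉ Z := hax.right.2
      have hyZ : y ∉ Z := hyb.left.2
      have hswap : G.deleteEdges {s(y, x)} = G.deleteEdges {s(x, y)} := by rw [Sym2.eq_swap]
      have half1 := menger_half (G := G) (B := B) hZ hAy
      have half2 := menger_half (G := G) (s := s) (A := B) (B := A) (Z := Z) (x := y) (y := x)
        (by rw [hswap]; exact fun b hb a ha h => hZ a ha b hb h.symm)
        (by rw [hswap]; exact fun b hb h => hBx b hb h.symm)
      rw [hswap] at half2
      have hk : Z.card + 1 = k := by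
        have := hyp (insert x Z) (by
          simp only [Finset.coe_insert]
          refine half1 _ ?_
          intro a ha p hp h
          exact h.right.2 hp)
        rw [Finset.card_insert_of_notMem hxZ] at this
        omega
      refine menger_glue hxy Z hZ hxZ hyZ hk ?_ ?_
      · refine ih _ (hlt x y hxy) _ rfl s A _ k ?_
        intro W hW
        exact hyp W (half1 W hW)
      · refine ih _ (hlt x y hxy) _ rfl s B _ k ?_
        intro W hW
        exact hyp W (fun a ha b hb h => half2 W hW b hb a ha h.symm)
    rcases h0.delete_edge (x := x) (y := y) with h | ⟨h | h, _⟩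
    · exact absurd h (hZ _ ha0 _ hb0)
    · exact core x y hxy hZ ⟨a0, ha0, h⟩
    · refine core y x hxy.symm ?_ ⟨a0, ha0, ?_⟩
      · rw [Sym2.eq_swap]; exact hZ
      · rw [Sym2.eq_swap]; exact h

/-- Menger's theorem inside a vertex set `s`. -/
theorem menger [Finite V] (G : SimpleGraph V) (s A B : Set V) (k : ℕ)
    (h : ∀ Z : Finset V, (∀ a ∈ A, ∀ b ∈ B, ¬ RIn G (s \ Z) a b) → k ≤ Z.card) :
    Nonempty (Lk G s A B k) :=
  (menger_set _ G rfl s A B k h).toLk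

end Menger

/-! ### Well-linked sets and big components -/

section Big

variable {V : Type} [Finite V]

/-- The separation form of node-well-linkedness: a set `Z` separating two disjoint subsets of `S`
of equal size has at least that size. -/
def WL (G : SimpleGraph V) (S : Set V) : Prop :=
  ∀ A B Z : Set V, A ⊆ S → B ⊆ S → Disjoint A B → A.ncard = B.ncard →
    (∀ a ∈ A, ∀ b ∈ B, ¬ RIn G Zᶜ a b) → A.ncard ≤ Z.ncard

/-- `C` contains more than half of `S`. -/
def Big (S C : Set V) : Prop := S.ncard < 2 * (S ∩ C).ncard

/-- `C` is a component of `G - Z` that contains more than half of `S`. -/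
structure BigComp (G : SimpleGraph V) (S Z C : Set V) : Prop where
  conn : ConnOn G C
  disj : Disjoint C Z
  big : Big S C
  closed : ∀ u ∈ C, ∀ v, v ∉ Z → G.Adj u v → v ∈ C

theorem Big.inter {S C D : Set V} (hC : Big S C) (hD : Big S D) : (S ∩ C ∩ D).Nonempty := by
  by_contra h
  rw [Set.not_nonempty_iff_eq_empty] at h
  have hd : Disjoint (S ∩ C) (S ∩ D) := by
    rw [Set.disjoint_left]
    intro x hx hx'
    have : x ∈ S ∩ C ∩ D := ⟨hx, hx'.2⟩
    rw [h] at this; exact this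
  have h1 := Set.ncard_union_eq hd (Set.toFinite _) (Set.toFinite _)
  have h2 : ((S ∩ C) ∪ (S ∩ D)).ncard ≤ S.ncard :=
    Set.ncard_le_ncard (Set.union_subset Set.inter_subset_left Set.inter_subset_left)
      (Set.toFinite _)
  unfold Big at hC hD
  omega

theorem Big.nonempty {S C : Set V} (hC : Big S C) : (S ∩ C).Nonempty := by
  obtain ⟨x, hx⟩ := hC.inter hC
  exact ⟨x, hx.1⟩

theorem BigComp.sub {G : SimpleGraph V} {S Z C D : Set V} (hC : BigComp G S Z C) (hD : ConnOn G D)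
    (hDZ : Disjoint D Z) (hDb : Big S D) : D ⊆ C := by
  obtain ⟨x, hx⟩ := hC.big.inter hDb
  intro y hy
  refine (hD x hx.2 y hy).ind (P := fun y => y ∈ C) hx.1.2 ?_
  intro p q _ hp hpq hq
  exact hC.closed p hp q (Set.disjoint_left.1 hDZ hq) hpq

theorem exists_sub_ncard {A : Set V} {k : ℕ} (h : k ≤ A.ncard) : ∃ B ⊆ A, B.ncard = k := by
  obtain ⟨B, h1, h2⟩ := Set.exists_subset_card_eq (s := A) h
  exact ⟨B, h1, h2⟩

theorem closed_RIn {G : SimpleGraph V} {Z U : Set V}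
    (hU : ∀ u ∈ U, ∀ v, v ∉ Z → G.Adj u v → v ∈ U) {a b : V} (h : RIn G Zᶜ a b) (ha : a ∈ U) :
    b ∈ U :=
  h.ind (P := fun x => x ∈ U) ha (fun x y _ hx hxy hy => hU x hx y hy hxy)

/-- After the deletion of fewer than `|S| / 4` vertices, some component contains more than half
of the well-linked set `S`: otherwise the components could be split into two groups, each with
more than `|Z|` vertices of `S`, contradicting that `Z` separates them. -/
theorem exists_bigComp {G : SimpleGraph V} {S : Set V} (hS : WL G S) (Z : Set V)
    (hZ : 4 * Z.ncard + 1 ≤ S.ncard) : ∃ C, BigComp G S Z C := by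
  classical
  -- `cl U`: the set `U` is a union of components of `G - Z`.
  set cl : Set V → Prop := fun U => Disjoint U Z ∧ ∀ u ∈ U, ∀ v, v ∉ Z → G.Adj u v → v ∈ U with hcl
  have split : ∀ U U' : Set V, cl U → cl U' → Disjoint U U' → Z.ncard + 1 ≤ (S ∩ U).ncard →
      Z.ncard + 1 ≤ (S ∩ U').ncard → False := by
    intro U U' hU hU' hd h1 h2
    obtain ⟨A, hA, hAc⟩ := exists_sub_ncard h1
    obtain ⟨B, hB, hBc⟩ := exists_sub_ncard h2
    have := hS A B Z (hA.trans Set.inter_subset_left) (hB.trans Set.inter_subset_left)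
      (hd.mono (hA.trans Set.inter_subset_right) (hB.trans Set.inter_subset_right))
      (by rw [hAc, hBc]) (by
        intro a ha b hb hab
        exact Set.disjoint_left.1 hd (closed_RIn hU.2 hab (hA ha).2) (hB hb).2)
    omega
  have part : ∀ U W : Set V, W ⊆ U → (S ∩ U).ncard ≤ (S ∩ W).ncard + (S ∩ (U \ W)).ncard := by
    intro U W _
    refine le_trans (Set.ncard_le_ncard ?_ (Set.toFinite _)) (Set.ncard_union_le _ _)
    intro x hx
    by_cases h : x ∈ W
    · exact Or.inl ⟨hx.1, h⟩
    · exact Or.inr ⟨hx.1, hx.2, h⟩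
  have clC : ∀ U, cl U → cl (Zᶜ \ U) := by
    intro U hU
    refine ⟨?_, ?_⟩
    · rw [Set.disjoint_left]; exact fun x hx => hx.1
    · intro u hu v hv huv
      exact ⟨hv, fun h => hu.2 (hU.2 v h u hu.1 huv.symm)⟩
  have hZc : S.ncard ≤ Z.ncard + (S ∩ Zᶜ).ncard := by
    refine le_trans (Set.ncard_le_ncard ?_ (Set.toFinite _)) (Set.ncard_union_le _ _)
    intro x hx
    by_cases h : x ∈ Z
    · exact Or.inl h
    · exact Or.inr ⟨hx, h⟩
  have hex : ∃ n, ∃ U, cl U ∧ Z.ncard + 1 ≤ (S ∩ U).ncard ∧ U.ncard = n := by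
    refine ⟨_, Zᶜ, ⟨?_, fun u _ v hv _ => hv⟩, by omega, rfl⟩
    rw [Set.disjoint_left]; exact fun x hx => hx
  obtain ⟨U, hU, hUS, hUn⟩ := Nat.find_spec hex
  have hmin : ∀ W, cl W → W ⊂ U → (S ∩ W).ncard ≤ Z.ncard := by
    intro W hW hWU
    by_contra hcon
    have := Set.ncard_lt_ncard hWU (Set.toFinite _)
    exact Nat.find_min hex (m := W.ncard) (by omega) ⟨W, hW, by omega, rfl⟩
  have hrest : (S ∩ (Zᶜ \ U)).ncard ≤ Z.ncard := by
    by_contra hcon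
    exact split U _ hU (clC U hU) Set.disjoint_sdiff_right hUS (by omega)
  have hUZ : U ⊆ Zᶜ := fun x hx => Set.disjoint_left.1 hU.1 hx
  have hpart := part Zᶜ U hUZ
  refine ⟨U, ?_, hU.1, by unfold Big; omega, hU.2⟩
  intro u hu v hv
  have hCsub : {x | RIn G Zᶜ u x} ⊆ U := fun x hx => closed_RIn hU.2 hx hu
  have hCcl : cl {x | RIn G Zᶜ u x} := by
    refine ⟨?_, fun x hx y hy hxy => RIn.tail hx hxy hy⟩
    rw [Set.disjoint_left]; exact fun x hx => RIn.right hx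
  by_cases hCU : {x | RIn G Zᶜ u x} = U
  · have := connOn_comp G Zᶜ u
    rw [hCU] at this
    exact this u hu v hv
  · exfalso
    have h1 := hmin _ hCcl (LE.le.ssubset_of_ne hCsub hCU)
    have hD : cl (U \ {x | RIn G Zᶜ u x}) := by
      refine ⟨hU.1.mono_left Set.sdiff_subset, ?_⟩
      intro x hx y hy hxy
      refine ⟨hU.2 x hx.1 y hy hxy, fun h => hx.2 ?_⟩
      exact RIn.tail h hxy.symm (hUZ hx.1)
    have h2 := hmin _ hD (by
      refine LE.le.ssubset_of_ne Set.sdiff_subset ?_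
      intro h
      have : u ∈ U \ {x | RIn G Zᶜ u x} := by rw [h]; exact hu
      exact this.2 (RIn.refl (hUZ hu)))
    have h3 := part U _ hCsub
    omega

end Big

/-! ### A mesh: a subcubic connected graph attached to a big, highly linked component -/

section Mesh

variable {V : Type} [Finite V]

/-- A connected subcubic subgraph `F` on the vertex set `U`, and a big connected set `C`
disjoint from `U` whose neighbourhood is `X ⊆ U`. The degrees on `X` are at most two, and at
most one somewhere, so that `F` can be grown into `C`. -/
structure Mesh (G : SimpleGraph V) (S : Set V) (h : ℕ) (F : SimpleGraph V) (U X C : Set V) :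
    Prop where
  le : F ≤ G
  within : ∀ u v, F.Adj u v → u ∈ U
  conn : ConnOn F U
  deg3 : ∀ v, (F.neighborSet v).ncard ≤ 3
  XU : X ⊆ U
  deg2 : ∀ x ∈ X, (F.neighborSet x).ncard ≤ 2
  leaf : ∃ x ∈ X, (F.neighborSet x).ncard ≤ 1
  disj : Disjoint U C
  bdry : ∀ x, x ∈ X ↔ x ∉ C ∧ ∃ c ∈ C, G.Adj c x
  card : X.ncard ≤ h
  connC : ConnOn G C
  big : Big S C

/-- Growing a mesh along a linkage `L` into `C`, where `C' ⊂ C` avoids the linkage. -/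
theorem Mesh.grow {G F : SimpleGraph V} {S U X C : Set V} {h : ℕ} (hM : Mesh G S h F U X C)
    {Y Z C' : Set V} {k : ℕ} (hY : Y ⊆ X) (L : Lk G (C ∪ Y) Y Z k)
    (hLC' : ∀ i t, t ≤ L.len i → L.r i t ∉ C')
    (hC'C : C' ⊆ C) (hC' : ConnOn G C') (hB : Big S C')
    (hN : ∀ x, x ∉ C' → (∃ c ∈ C', G.Adj c x) → (x ∈ X ∧ x ∉ Y) ∨
      (x ∈ Y ∧ (F.neighborSet x).ncard ≤ 1) ∨ ∃ i, L.r i (L.len i) = x)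
    (hl : ∃ i, L.r i (L.len i) ∈ C ∧ ∃ c ∈ C', G.Adj c (L.r i (L.len i)))
    (hcard : {x | x ∉ C' ∧ ∃ c ∈ C', G.Adj c x}.ncard ≤ h) :
    ∃ F' U', Mesh G S h F' U' {x | x ∉ C' ∧ ∃ c ∈ C', G.Adj c x} C' := by
  have hnU : ∀ i t, 0 < t → t ≤ L.len i → L.r i t ∉ U := by
    intro i t h0 ht hU
    rcases L.mem i t ht with hc | hy
    · exact Set.disjoint_left.1 hM.disj hU hc
    · have := L.onlyA i t ht hy; omega
  set E : V → V → Prop := fun x y => ∃ i t, t < L.len i ∧ L.r i t = x ∧ L.r i (t + 1) = y with hE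
  set F' : SimpleGraph V := F ⊔ SimpleGraph.fromRel E with hF'
  set U' : Set V := U ∪ {x | ∃ i t, t ≤ L.len i ∧ L.r i t = x} with hU'
  have hadj : ∀ x y, F'.Adj x y ↔ F.Adj x y ∨ (x ≠ y ∧ (E x y ∨ E y x)) := by
    intro x y; simp [hF', SimpleGraph.fromRel_adj]
  have hstep : ∀ i t, t < L.len i → F'.Adj (L.r i t) (L.r i (t + 1)) := by
    intro i t ht
    exact (hadj _ _).2 (Or.inr ⟨(L.adj i t ht).ne, Or.inl ⟨i, t, ht, rfl, rfl⟩⟩)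
  have hFU : ∀ u v, F.Adj u v → v ∈ U := fun u v huv => hM.within v u huv.symm
  have degOff : ∀ v, (∀ i t, t ≤ L.len i → L.r i t ≠ v) → F'.neighborSet v ⊆ F.neighborSet v := by
    intro v hv w hw
    rcases (hadj v w).1 hw with h | ⟨_, ⟨i, t, ht, h, _⟩ | ⟨i, t, ht, _, h⟩⟩
    · exact h
    · exact absurd h (hv i t ht.le)
    · exact absurd h (hv i (t + 1) ht)
  have deg0 : ∀ i, F'.neighborSet (L.r i 0) ⊆
      F.neighborSet (L.r i 0) ∪ {x | x = L.r i 1 ∧ 0 < L.len i} := by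
    intro i w hw
    rcases (hadj _ w).1 hw with h | ⟨_, ⟨j, t, ht, h, h'⟩ | ⟨j, t, ht, h', h⟩⟩
    · exact Or.inl h
    · obtain ⟨rfl, rfl⟩ := L.inj _ _ _ _ ht.le (Nat.zero_le _) h
      exact Or.inr ⟨h'.symm, ht⟩
    · obtain ⟨rfl, h1⟩ := L.inj _ _ _ _ ht (Nat.zero_le _) h
      omega
  have degp : ∀ i t, 0 < t → t ≤ L.len i → F'.neighborSet (L.r i t) ⊆
      {L.r i (t - 1)} ∪ {x | x = L.r i (t + 1) ∧ t < L.len i} := by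
    intro i t h0 ht w hw
    rcases (hadj _ w).1 hw with h | ⟨_, ⟨j, t', ht', h, h'⟩ | ⟨j, t', ht', h', h⟩⟩
    · exact absurd (hM.within _ _ h) (hnU i t h0 ht)
    · obtain ⟨rfl, rfl⟩ := L.inj _ _ _ _ ht'.le ht h
      exact Or.inr ⟨h'.symm, ht'⟩
    · obtain ⟨rfl, rfl⟩ := L.inj _ _ _ _ ht' ht h
      exact Or.inl h'.symm
  have one : ∀ (a : V) (p : Prop), {x | x = a ∧ p}.ncard ≤ 1 := by
    intro a p
    rw [← Set.ncard_singleton a]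
    exact Set.ncard_le_ncard (fun x hx => hx.1) (Set.toFinite _)
  have le : ∀ {A B : Set V}, A ⊆ B → A.ncard ≤ B.ncard :=
    fun h => Set.ncard_le_ncard h (Set.toFinite _)
  have d0 : ∀ i, (F'.neighborSet (L.r i 0)).ncard ≤ (F.neighborSet (L.r i 0)).ncard + 1 := by
    intro i
    have h1 := le (deg0 i)
    have h2 := Set.ncard_union_le (F.neighborSet (L.r i 0)) {x | x = L.r i 1 ∧ 0 < L.len i}
    have h3 := one (L.r i 1) (0 < L.len i)
    omega
  have dp : ∀ i t, 0 < t → t ≤ L.len i → (F'.neighborSet (L.r i t)).ncard ≤ 2 := by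
    intro i t h0 ht
    have h1 := le (degp i t h0 ht)
    have h2 := Set.ncard_union_le {L.r i (t - 1)} {x | x = L.r i (t + 1) ∧ t < L.len i}
    have h3 := one (L.r i (t + 1)) (t < L.len i)
    rw [Set.ncard_singleton] at h2
    omega
  have dend : ∀ i, 0 < L.len i → (F'.neighborSet (L.r i (L.len i))).ncard ≤ 1 := by
    intro i h0
    rw [← Set.ncard_singleton (L.r i (L.len i - 1))]
    refine le ((degp i _ h0 le_rfl).trans ?_)
    rintro x (hx | hx)
    · exact hx
    · exact absurd hx.2 (lt_irrefl _)
  refine ⟨F', U', ?_, ?_, ?_, ?_, ?_, ?_, ?_, ?_, fun x => Iff.rfl, hcard, hC', hB⟩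
  · intro x y hxy
    rcases (hadj x y).1 hxy with h | ⟨_, ⟨i, t, ht, rfl, rfl⟩ | ⟨i, t, ht, rfl, rfl⟩⟩
    · exact hM.le h
    · exact L.adj i t ht
    · exact (L.adj i t ht).symm
  · intro x y hxy
    rcases (hadj x y).1 hxy with h | ⟨_, ⟨i, t, ht, h, _⟩ | ⟨i, t, ht, _, h⟩⟩
    · exact Or.inl (hM.within _ _ h)
    · exact Or.inr ⟨i, t, ht.le, h⟩
    · exact Or.inr ⟨i, t + 1, ht, h⟩
  · obtain ⟨x0, hx0, -⟩ := hM.leaf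
    refine connOn_of_center x0 ?_
    have hUU : ∀ x ∈ U, RIn F' U' x0 x := fun x hx =>
      ((hM.conn x0 (hM.XU hx0) x hx).monoG le_sup_left).mono Set.subset_union_left
    rintro x (hx | ⟨i, t, ht, rfl⟩)
    · exact hUU x hx
    · refine (hUU _ (hM.XU (hY (L.start i)))).trans ?_
      exact RIn.of_seq (L.r i) (Nat.zero_le t) (fun k _ hk => Or.inr ⟨i, k, by omega, rfl⟩)
        (fun k _ hk => hstep i k (by omega))
  · intro v
    by_cases hv : ∃ i t, t ≤ L.len i ∧ L.r i t = v
    · obtain ⟨i, t, ht, rfl⟩ := hv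
      rcases Nat.eq_zero_or_pos t with rfl | h0
      · have := d0 i
        have := hM.deg2 _ (hY (L.start i))
        omega
      · have := dp i t h0 ht; omega
    · push Not at hv
      exact (le (degOff v hv)).trans (hM.deg3 v)
  · rintro x ⟨hx, hc⟩
    rcases hN x hx hc with h | h | ⟨i, h⟩
    · exact Or.inl (hM.XU h.1)
    · exact Or.inl (hM.XU (hY h.1))
    · exact Or.inr ⟨i, _, le_rfl, h⟩
  · rintro x ⟨hx, hc⟩
    rcases hN x hx hc with h | h | ⟨i, h⟩
    · refine (le (degOff x ?_)).trans (hM.deg2 x h.1)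
      intro i t ht hxt
      rcases Nat.eq_zero_or_pos t with rfl | h0
      · exact h.2 (hxt ▸ L.start i)
      · exact hnU i t h0 ht (hxt ▸ hM.XU h.1)
    · by_cases hv : ∃ i t, t ≤ L.len i ∧ L.r i t = x
      · obtain ⟨i, t, ht, rfl⟩ := hv
        rcases Nat.eq_zero_or_pos t with rfl | h0
        · have := d0 i
          omega
        · exact dp i t h0 ht
      · push Not at hv
        have := le (degOff x hv)
        omega
    · rcases Nat.eq_zero_or_pos (L.len i) with h0 | h0
      · rw [h0] at h
        have h1 := le (deg0 i)
        rw [h] at h1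
        refine h1.trans ?_
        rw [← h]
        refine le_trans (le ?_) (hM.deg2 _ (hY (L.start i)))
        rintro x (hx | hx)
        · exact hx
        · exact absurd hx.2 (by omega)
      · rw [← h]; exact dp i _ h0 le_rfl
  · obtain ⟨i, hi, hc⟩ := hl
    refine ⟨_, ⟨hLC' i _ le_rfl, hc⟩, dend i ?_⟩
    rcases Nat.eq_zero_or_pos (L.len i) with h0 | h0
    · rw [h0] at hi
      exact absurd hi (Set.disjoint_left.1 hM.disj (hM.XU (hY (L.start i))))
    · exact h0
  · rw [Set.disjoint_left]
    rintro x (hx | ⟨i, t, ht, rfl⟩) hx'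
    · exact Set.disjoint_left.1 hM.disj hx (hC'C hx')
    · exact hLC' i t ht hx'

end Mesh

section Mesh

variable {V : Type} [Finite V]

/-- Menger's theorem with separators given as subsets of `s`. -/
theorem menger' (G : SimpleGraph V) (s A B : Set V) (k : ℕ)
    (h : ∀ W : Set V, W ⊆ s → (∀ a ∈ A, ∀ b ∈ B, ¬ RIn G (s \ W) a b) → k ≤ W.ncard) :
    Nonempty (Lk G s A B k) := by
  refine menger G s A B k ?_
  intro Z hZ
  have h1 := h (s ∩ Z) Set.inter_subset_left (by
    rw [Set.sdiff_self_inter]; exact hZ)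
  have h2 : (s ∩ (Z : Set V)).ncard ≤ (Z : Set V).ncard :=
    Set.ncard_le_ncard Set.inter_subset_right (Set.toFinite _)
  rw [Set.ncard_coe_finset] at h2
  omega

/-- The linkage property of a mesh obtained from the minimality of `C`: fewer than `|Y|`
vertices of `C ∪ Y` cannot cut off `Y` from the big component. -/
def MeshLinked (G : SimpleGraph V) (S X C : Set V) : Prop :=
  ∀ Y Z : Set V, Y ⊆ X → Z ⊆ C ∪ Y → Z.ncard < Y.ncard → ∀ C', BigComp G S (X ∪ Z) C' →
    ∃ y ∈ Y, y ∉ Z ∧ ∃ c ∈ C', G.Adj c y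

theorem Mesh.comp {G F : SimpleGraph V} {S U X C : Set V} {h : ℕ} (hM : Mesh G S h F U X C) :
    BigComp G S X C := by
  refine ⟨hM.connC, hM.disj.symm.mono_right hM.XU, hM.big, ?_⟩
  intro u hu v hv huv
  by_contra hvC
  exact hv ((hM.bdry v).2 ⟨hvC, u, hu, huv⟩)

theorem Mesh.sub {G F : SimpleGraph V} {S U X C Z C' : Set V} {h : ℕ} (hM : Mesh G S h F U X C)
    (hC' : BigComp G S (X ∪ Z) C') : C' ⊆ C :=
  hM.comp.sub hC'.conn (hC'.disj.mono_right Set.subset_union_left) hC'.big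

/-- A big component of `G - (X ∪ Z)` smaller than `C` has a neighbour in `Z ∩ C`. -/
theorem Mesh.exists_nbr {G F : SimpleGraph V} {S U X C Z C' : Set V} {h : ℕ}
    (hM : Mesh G S h F U X C) (hC' : BigComp G S (X ∪ Z) C') (hne : C' ≠ C) :
    ∃ z ∈ Z, z ∈ C ∧ ∃ c ∈ C', G.Adj c z := by
  have hsub := hM.sub hC'
  obtain ⟨x, hxC, hxC'⟩ : ∃ x ∈ C, x ∉ C' := by
    by_contra hcon
    push Not at hcon
    exact hne (Set.Subset.antisymm hsub hcon)
  obtain ⟨c, hc⟩ := hC'.big.nonempty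
  obtain ⟨p, q, hp, hq, hpq, -, hr⟩ := (hM.connC c (hsub hc.2) x hxC).exit hc.2 hxC'
  have hqC := hr.right
  have hqZ : q ∈ X ∪ Z := by
    by_contra hcon
    exact hq (hC'.closed p hp q hcon hpq)
  rcases hqZ with hqX | hqZ
  · exact absurd hqC (Set.disjoint_left.1 hM.disj (hM.XU hqX))
  · exact ⟨q, hqZ, hqC, p, hp, hpq⟩

theorem mesh_init {G : SimpleGraph V} {S : Set V} (hS : WL G S) {h : ℕ} (h1 : 1 ≤ h)
    (hN : 8 * h + 1 ≤ S.ncard) : ∃ F U X C, Mesh G S h F U X C := by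
  obtain ⟨C0, hC0⟩ := exists_bigComp hS ∅ (by simp; omega)
  -- a vertex of the big component all of whose big subcomponents are adjacent to it
  obtain ⟨v, hv⟩ := hC0.big.nonempty
  obtain ⟨C, hC⟩ := exists_bigComp hS {v} (by rw [Set.ncard_singleton]; omega)
  have hvC : v ∉ C := fun h => Set.disjoint_left.1 hC.disj h rfl
  have hsub : C ⊆ C0 := hC0.sub hC.conn (by simp) hC.big
  obtain ⟨c, hc⟩ := hC.big.nonempty
  obtain ⟨p, q, hp, hq, hpq, -, -⟩ := (hC0.conn c (hsub hc.2) v hv.2).exit hc.2 hvC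
  have hqv : q = v := by
    by_contra hne
    exact hq (hC.closed p hp q hne hpq)
  subst hqv
  have hb : ∀ w, (⊥ : SimpleGraph V).neighborSet w = ∅ := by
    intro w; ext x; simp
  refine ⟨⊥, {q}, {q}, C, bot_le, ?_, connOn_singleton _ _, ?_, subset_rfl, ?_, ⟨q, rfl, ?_⟩,
    hC.disj.symm, ?_, by rw [Set.ncard_singleton]; exact h1, hC.conn, hC.big⟩
  · intro u v huv; exact absurd huv (by simp)
  · intro w; rw [hb]; simp
  · intro w _; rw [hb]; simp
  · rw [hb]; simp
  · intro x
    constructor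
    · intro hx
      rw [Set.mem_singleton_iff.1 hx]
      exact ⟨hvC, p, hp, hpq⟩
    · rintro ⟨hx, c, hc, hcx⟩
      by_contra hne
      exact hx (hC.closed c hc x hne hcx)

/-- A mesh with `C` of minimum size has `|X| = h` and is linked, since otherwise it could be
grown into `C` (by one edge, or along a linkage onto a minimum separator). -/
theorem exists_mesh {G : SimpleGraph V} {S : Set V} (hS : WL G S) {h : ℕ} (h1 : 1 ≤ h)
    (hN : 8 * h + 1 ≤ S.ncard) :
    ∃ F U X C, Mesh G S h F U X C ∧ X.ncard = h ∧ MeshLinked G S X C := by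
  classical
  have hex : ∃ n, ∃ F U X C, Mesh G S h F U X C ∧ C.ncard = n := by
    obtain ⟨F, U, X, C, hM⟩ := mesh_init hS h1 hN
    exact ⟨_, F, U, X, C, hM, rfl⟩
  obtain ⟨F, U, X, C, hM, hCn⟩ := Nat.find_spec hex
  have hmin : ∀ F' U' X' C', Mesh G S h F' U' X' C' → C' ⊆ C → C' = C := by
    intro F' U' X' C' hM' hsub
    by_contra hne
    have := Set.ncard_lt_ncard (LE.le.ssubset_of_ne hsub hne) (Set.toFinite _)
    exact Nat.find_min hex (m := C'.ncard) (by omega) ⟨F', U', X', C', hM', rfl⟩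
  clear hCn
  have le : ∀ {A B : Set V}, A ⊆ B → A.ncard ≤ B.ncard :=
    fun h => Set.ncard_le_ncard h (Set.toFinite _)
  have hXC : ∀ x ∈ X, x ∉ C := fun x hx => Set.disjoint_left.1 hM.disj (hM.XU hx)
  refine ⟨F, U, X, C, hM, ?_, ?_⟩
  · -- otherwise the mesh grows by one edge from a vertex of small degree into `C`
    by_contra hne
    have hlt : X.ncard + 1 ≤ h := by have := hM.card; omega
    obtain ⟨x, hx, hx1⟩ := hM.leaf
    obtain ⟨-, u, hu, hux⟩ := (hM.bdry x).1 hx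
    have hcu := Set.ncard_union_le X {u}
    rw [Set.ncard_singleton] at hcu
    obtain ⟨C', hC'⟩ := exists_bigComp hS (X ∪ {u}) (by omega)
    have hsub := hM.sub hC'
    have huC' : u ∉ C' := fun h => Set.disjoint_left.1 hC'.disj h (Or.inr rfl)
    have hne' : C' ≠ C := fun h => huC' (h ▸ hu)
    have hxu : x ≠ u := fun h => hXC x hx (h ▸ hu)
    obtain ⟨z, hz, hzC, hzc⟩ := hM.exists_nbr hC' hne'
    rw [Set.mem_singleton_iff.1 hz] at hzc
    have hN' : ∀ y, y ∉ C' → (∃ c ∈ C', G.Adj c y) → y ∈ X ∪ {u} := by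
      rintro y hy ⟨c, hc, hcy⟩
      by_contra hcon
      exact hy (hC'.closed c hc y hcon hcy)
    have hxC' : x ∉ C' := fun h => hXC x hx (hsub h)
    let L : Lk G (C ∪ {x}) {x} {u} 1 :=
      { len := fun _ => 1
        r := fun _ t => if t = 0 then x else u
        adj := by
          intro i t ht
          have : t = 0 := by omega
          subst this
          simpa using hux.symm
        mem := by
          intro i t ht
          by_cases h : t = 0
          · simp [h]
          · simp [h, hu]
        inj := by
          intro i j t t' ht ht' heq
          refine ⟨Subsingleton.elim _ _, ?_⟩
          by_cases h : t = 0 <;> by_cases h' : t' = 0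
          · omega
          · simp [h, h', hxu] at heq
          · simp [h, h', hxu.symm] at heq
          · omega
        start := by intro i; simp
        fin := by intro i; simp
        onlyA := by
          intro i t ht h
          by_contra h0
          simp [h0] at h
          exact hxu h.symm
        onlyB := by
          intro i t ht h
          by_contra h0
          have : t = 0 := by omega
          simp [this] at h
          exact hxu h }
    obtain ⟨F', U', hM'⟩ := hM.grow (C' := C') (Set.singleton_subset_iff.2 hx) L
      (by
        intro i t ht
        by_cases h : t = 0
        · simpa [L, h] using hxC'
        · simpa [L, h] using huC')
      hsub hC'.conn hC'.big
      (by
        intro y hy hyc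
        by_cases hyx : y = x
        · exact Or.inr (Or.inl ⟨hyx, hyx ▸ hx1⟩)
        rcases hN' y hy hyc with h | h
        · exact Or.inl ⟨h, hyx⟩
        · exact Or.inr (Or.inr ⟨0, by simpa [L] using (Set.mem_singleton_iff.1 h).symm⟩))
      ⟨0, by simpa [L] using hu, by simpa [L] using hzc⟩
      (by
        refine (le (B := X ∪ {u}) ?_).trans (by omega)
        rintro y ⟨hy, hyc⟩
        exact hN' y hy hyc)
    exact hne' (hmin _ _ _ _ hM' hsub)
  · -- otherwise the mesh grows along a linkage from `Y` to a smallest violating set `Z`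
    intro Y Z1 hYX hZ1 hZ1Y C1 hC1
    by_contra hcon1
    push Not at hcon1
    have hex2 : ∃ n, ∃ Z C', Z ⊆ C ∪ Y ∧ Z.ncard < Y.ncard ∧ BigComp G S (X ∪ Z) C' ∧
        (∀ y ∈ Y, y ∉ Z → ∀ c ∈ C', ¬ G.Adj c y) ∧ Z.ncard = n :=
      ⟨_, Z1, C1, hZ1, hZ1Y, hC1, hcon1, rfl⟩
    obtain ⟨Z, C', hZ, hZY, hC', hcon, hZn⟩ := Nat.find_spec hex2
    have hmin2 : ∀ W D, W ⊆ C ∪ Y → BigComp G S (X ∪ W) D →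
        (∀ y ∈ Y, y ∉ W → ∀ c ∈ D, ¬ G.Adj c y) → Z.ncard ≤ W.ncard := by
      intro W D hW hD hWD
      by_contra hlt
      exact Nat.find_min hex2 (m := W.ncard) (by omega) ⟨W, D, hW, by omega, hD, hWD, rfl⟩
    have hYh : Y.ncard ≤ h := (le hYX).trans hM.card
    have hsub := hM.sub hC'
    have hL : Nonempty (Lk G (C ∪ Y) Y Z Z.ncard) := by
      refine menger' _ _ _ _ _ ?_
      intro W hW hsep
      by_contra hlt
      have hcW := Set.ncard_union_le X W
      have := hM.card
      obtain ⟨D, hD⟩ := exists_bigComp hS (X ∪ W) (by omega)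
      refine hlt (hmin2 W D hW hD ?_)
      intro y hy hyW c hc hcy
      have hDC := hM.sub hD
      have hDW : ∀ d ∈ D, d ∉ W := fun d hd h => Set.disjoint_left.1 hD.disj hd (Or.inr h)
      by_cases hDZ : ∃ z ∈ Z, z ∈ D
      · obtain ⟨z, hz, hzD⟩ := hDZ
        have h1 : RIn G ((C ∪ Y) \ W) y c :=
          RIn.step ⟨Or.inr hy, hyW⟩ hcy.symm ⟨Or.inl (hDC hc), hDW c hc⟩
        have h2 : RIn G ((C ∪ Y) \ W) c z := (hD.conn c hc z hzD).mono
          (fun d hd => ⟨Or.inl (hDC hd), hDW d hd⟩)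
        exact hsep y hy z hz (h1.trans h2)
      · push Not at hDZ
        have hDC' : D ⊆ C' := by
          refine hC'.sub hD.conn ?_ hD.big
          rw [Set.disjoint_left]
          rintro d hd (h | h)
          · exact Set.disjoint_left.1 hD.disj hd (Or.inl h)
          · exact hDZ d h hd
        have hyZ : y ∈ Z := by
          by_contra hyZ
          exact hcon y hy hyZ c (hDC' hc) hcy
        exact hsep y hy y hyZ (RIn.refl ⟨Or.inr hy, hyW⟩)
    obtain ⟨L⟩ := hL
    have hends : ∀ z ∈ Z, ∃ i, L.r i (L.len i) = z := by
      have hinj : Function.Injective (fun i => L.r i (L.len i)) := by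
        intro i j hij
        exact (L.inj i j _ _ le_rfl le_rfl hij).1
      have h1 : Set.range (fun i => L.r i (L.len i)) = Z := by
        refine Set.eq_of_subset_of_ncard_le ?_ ?_ (Set.toFinite _)
        · rintro _ ⟨i, rfl⟩; exact L.fin i
        · rw [← Set.image_univ, Set.ncard_image_of_injective _ hinj, Set.ncard_univ]
          simp
      intro z hz
      rw [← h1] at hz
      exact hz
    have hN' : ∀ y, y ∉ C' → (∃ c ∈ C', G.Adj c y) → (y ∈ X ∧ y ∉ Y) ∨ y ∈ Z := by
      rintro y hy ⟨c, hc, hcy⟩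
      by_cases hyZ : y ∈ Z
      · exact Or.inr hyZ
      left
      have hyX : y ∈ X := by
        by_contra hyX
        exact hy (hC'.closed c hc y (by simp [hyX, hyZ]) hcy)
      exact ⟨hyX, fun hyY => hcon y hyY hyZ c hc hcy⟩
    have hcard : {x | x ∉ C' ∧ ∃ c ∈ C', G.Adj c x}.ncard < X.ncard := by
      have h1 : {x | x ∉ C' ∧ ∃ c ∈ C', G.Adj c x} ⊆ (X \ Y) ∪ Z := by
        rintro y ⟨hy, hyc⟩
        exact hN' y hy hyc
      have h2 := le h1
      have h3 := Set.ncard_union_le (X \ Y) Z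
      have h4 := Set.ncard_sdiff_add_ncard_of_subset hYX (Set.toFinite _)
      omega
    have hne : C' ≠ C := by
      intro h
      have : {x | x ∉ C' ∧ ∃ c ∈ C', G.Adj c x} = X := by
        ext x
        rw [hM.bdry x, h]; rfl
      rw [this] at hcard
      omega
    obtain ⟨z, hz, hzC, hzc⟩ := hM.exists_nbr hC' hne
    obtain ⟨i0, hi0⟩ := hends z hz
    obtain ⟨F', U', hM'⟩ := hM.grow (C' := C') hYX L
      (by
        intro i t
        induction t with
        | zero =>
          intro _ h
          exact hXC _ (hYX (L.start i)) (hsub h)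
        | succ t ih =>
          intro ht h
          have ht' := ih (by omega)
          have hadj := (L.adj i t (by omega)).symm
          rcases hN' _ ht' ⟨_, h, hadj⟩ with h1 | h1
          · rcases L.mem i t (by omega) with h2 | h2
            · exact hXC _ h1.1 h2
            · exact h1.2 h2
          · have := L.onlyB i t (by omega) h1; omega)
      hsub hC'.conn hC'.big
      (by
        intro y hy hyc
        rcases hN' y hy hyc with h | h
        · exact Or.inl h
        · exact Or.inr (Or.inr (hends y h)))
      ⟨i0, hi0 ▸ hzC, hi0 ▸ hzc⟩
      (by have := hM.card; omega)
    exact hne (hmin _ _ _ _ hM' hsub)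

/-- Any two subsets of `X` of size `k` are linked through `C`. -/
theorem Mesh.link {G F : SimpleGraph V} {S U X C : Set V} {h : ℕ} (hM : Mesh G S h F U X C)
    (hS : WL G S) (hN : 8 * h + 1 ≤ S.ncard) (hL : MeshLinked G S X C) {Y Z : Set V} {k : ℕ}
    (hY : Y ⊆ X) (hZ : Z ⊆ X) (hYk : Y.ncard = k) (hZk : Z.ncard = k) :
    Nonempty (Lk G (C ∪ (Y ∪ Z)) Y Z k) := by
  have le : ∀ {A B : Set V}, A ⊆ B → A.ncard ≤ B.ncard :=
    fun h => Set.ncard_le_ncard h (Set.toFinite _)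
  refine menger' _ _ _ _ _ ?_
  intro W hW hsep
  by_contra hlt
  have h1 := Set.ncard_union_le X W
  have h2 := hM.card
  have h3 := le hY
  obtain ⟨C', hC'⟩ := exists_bigComp hS (X ∪ W) (by omega)
  have hsub := hM.sub hC'
  have key : ∀ Y', Y' ⊆ X → Y'.ncard = k → ∃ y ∈ Y', y ∉ W ∧ ∃ c ∈ C', G.Adj c y := by
    intro Y' hY' hY'k
    have hXW : X ∪ (W ∩ (C ∪ Y')) = X ∪ W := by
      apply Set.Subset.antisymm (Set.union_subset_union_right _ Set.inter_subset_left)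
      rintro x (hx | hx)
      · exact Or.inl hx
      · rcases hW hx with h | h | h
        · exact Or.inr ⟨hx, Or.inl h⟩
        · exact Or.inl (hY h)
        · exact Or.inl (hZ h)
    obtain ⟨y, hy, hyW, hc⟩ := hL Y' (W ∩ (C ∪ Y')) hY' Set.inter_subset_right
      (by have := le (A := W ∩ (C ∪ Y')) (B := W) Set.inter_subset_left; omega) C'
      (by rw [hXW]; exact hC')
    exact ⟨y, hy, fun h => hyW ⟨h, Or.inr hy⟩, hc⟩
  obtain ⟨y, hy, hyW, c, hc, hcy⟩ := key Y hY hYk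
  obtain ⟨z, hz, hzW, d, hd, hdz⟩ := key Z hZ hZk
  have hC'W : ∀ x ∈ C', x ∈ (C ∪ (Y ∪ Z)) \ W := fun x hx =>
    ⟨Or.inl (hsub hx), fun h => Set.disjoint_left.1 hC'.disj hx (Or.inr h)⟩
  refine hsep y hy z hz ?_
  have e1 : RIn G ((C ∪ (Y ∪ Z)) \ W) y c :=
    RIn.step ⟨Or.inr (Or.inl hy), hyW⟩ hcy.symm (hC'W c hc)
  exact (e1.trans ((hC'.conn c hc d hd).mono hC'W)).tail hdz ⟨Or.inr (Or.inr hz), hzW⟩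

/-- Every subset of `X` is linked to `S`. -/
theorem Mesh.linkS {G F : SimpleGraph V} {S U X C : Set V} {h : ℕ} (hM : Mesh G S h F U X C)
    (hS : WL G S) (hN : 8 * h + 1 ≤ S.ncard) (hL : MeshLinked G S X C) {Y : Set V} {k : ℕ}
    (hY : Y ⊆ X) (hYk : Y.ncard = k) : Nonempty (Lk G Set.univ S Y k) := by
  have le : ∀ {A B : Set V}, A ⊆ B → A.ncard ≤ B.ncard :=
    fun h => Set.ncard_le_ncard h (Set.toFinite _)
  refine menger' _ _ _ _ _ ?_
  intro W hW hsep
  by_contra hlt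
  have h1 := Set.ncard_union_le X (W ∩ (C ∪ Y))
  have h2 := hM.card
  have h3 := le hY
  have h4 := le (A := W ∩ (C ∪ Y)) (B := W) Set.inter_subset_left
  obtain ⟨C', hC'⟩ := exists_bigComp hS (X ∪ (W ∩ (C ∪ Y))) (by omega)
  have hsub := hM.sub hC'
  obtain ⟨y, hy, hyW, c, hc, hcy⟩ := hL Y _ hY Set.inter_subset_right (by omega) C' hC'
  obtain ⟨z, hzS, hzC'⟩ := hC'.big.nonempty
  have hC'W : ∀ x ∈ C', x ∈ Set.univ \ W := fun x hx =>
    ⟨trivial, fun h => Set.disjoint_left.1 hC'.disj hx (Or.inr ⟨h, Or.inl (hsub hx)⟩)⟩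
  refine hsep z hzS y hy ?_
  exact ((hC'.conn z hzC' c hc).mono hC'W).tail hcy ⟨trivial, fun h => hyW ⟨h, Or.inr hy⟩⟩

end Mesh

/-! ### Splitting a subcubic connected graph -/

section Split

variable {V : Type} [Finite V]

theorem ncard_mono {A B : Set V} (h : A ⊆ B) : A.ncard ≤ B.ncard :=
  Set.ncard_le_ncard h (Set.toFinite _)

theorem ncard_biUnion_le {ι : Type} (N : Finset ι) (f : ι → Set V) (m : ℕ)
    (h : ∀ b ∈ N, (f b).ncard ≤ m) : (⋃ b ∈ N, f b).ncard ≤ N.card * m := by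
  classical
  induction N using Finset.induction_on with
  | empty => simp
  | insert a N ha ih =>
    rw [Finset.set_biUnion_insert, Finset.card_insert_of_notMem ha]
    have h1 := ih (fun b hb => h b (Finset.mem_insert_of_mem hb))
    have h2 := h a (Finset.mem_insert_self _ _)
    have h3 := Set.ncard_union_le (f a) (⋃ b ∈ N, f b)
    nlinarith

/-- Cutting off a connected part with between `k` and `3 * k` vertices of `X`: a minimal part `A`
with connected complement and at least `k` vertices of `X` works, as removing one vertex of
degree at most three splits it into few pieces. -/
theorem split_one {F : SimpleGraph V} {U X : Set V} {k : ℕ} (hk : 1 ≤ k)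
    (hd : ∀ v, (F.neighborSet v).ncard ≤ 3) (hU : ConnOn F U) (hX : k ≤ (U ∩ X).ncard) :
    ∃ A ⊆ U, ConnOn F A ∧ ConnOn F (U \ A) ∧ k ≤ (A ∩ X).ncard ∧ (A ∩ X).ncard ≤ 3 * k := by
  classical
  have hex : ∃ n, ∃ A ⊆ U, ConnOn F A ∧ ConnOn F (U \ A) ∧ k ≤ (A ∩ X).ncard ∧ A.ncard = n := by
    refine ⟨_, U, subset_rfl, hU, ?_, hX, rfl⟩
    rw [Set.sdiff_self]; intro u hu; exact absurd hu (by simp)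
  obtain ⟨A, hAU, hA, hUA, hAX, hAn⟩ := Nat.find_spec hex
  have hmin : ∀ D ⊆ U, ConnOn F D → ConnOn F (U \ D) → k ≤ (D ∩ X).ncard → A.ncard ≤ D.ncard := by
    intro D h1 h2 h3 h4
    by_contra hlt
    exact Nat.find_min hex (m := D.ncard) (by omega) ⟨D, h1, h2, h3, h4, rfl⟩
  clear hAn hex
  refine ⟨A, hAU, hA, hUA, hAX, ?_⟩
  by_contra hlt
  obtain ⟨a0, ha0⟩ : (A ∩ X).Nonempty := by
    rw [Set.nonempty_iff_ne_empty]; intro h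
    rw [h, Set.ncard_empty] at hAX; omega
  -- the vertex at which `A` is attached to the rest
  obtain ⟨a, haA, ha⟩ : ∃ a ∈ A, (U \ A = ∅) ∨ ∃ y ∈ U \ A, F.Adj a y := by
    rcases Set.eq_empty_or_nonempty (U \ A) with h | ⟨y, hy⟩
    · exact ⟨a0, ha0.1, Or.inl h⟩
    · obtain ⟨p, q, hp, hq, hpq, -, hr⟩ := (hU a0 (hAU ha0.1) y hy.1).exit ha0.1 hy.2
      exact ⟨p, hp, Or.inr ⟨q, ⟨hr.right, hq⟩, hpq⟩⟩
  set D : V → Set V := fun b => {x | RIn F (A \ {a}) b x} with hD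
  have hcover : ∀ x ∈ A, x = a ∨ ∃ b, F.Adj a b ∧ x ∈ D b := by
    intro x hx
    refine (hA a haA x hx).ind (P := fun x => x = a ∨ ∃ b, F.Adj a b ∧ x ∈ D b) (Or.inl rfl) ?_
    intro x y _ hx hxy hy
    by_cases hya : y = a
    · exact Or.inl hya
    right
    rcases hx with rfl | ⟨b, hb, hxb⟩
    · exact ⟨y, hxy, RIn.refl ⟨hy, hya⟩⟩
    · exact ⟨b, hb, RIn.tail hxb hxy ⟨hy, hya⟩⟩
  have hfin : (F.neighborSet a).Finite := Set.toFinite _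
  have hNcard : hfin.toFinset.card ≤ 3 := by
    rw [← Set.ncard_eq_toFinset_card _ hfin]; exact hd a
  obtain ⟨b, hb, hbk⟩ : ∃ b, F.Adj a b ∧ k ≤ (D b ∩ X).ncard := by
    by_contra hcon
    push Not at hcon
    have h1 : A ∩ X ⊆ {a} ∪ ⋃ b ∈ hfin.toFinset, D b ∩ X := by
      rintro x ⟨hxA, hxX⟩
      rcases hcover x hxA with rfl | ⟨b, hb, hxb⟩
      · exact Or.inl rfl
      · right
        simp only [Set.mem_iUnion]
        exact ⟨b, hfin.mem_toFinset.2 hb, hxb, hxX⟩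
    have h2 := ncard_biUnion_le hfin.toFinset (fun b => D b ∩ X) (k - 1) (by
      intro b hb
      have := hcon b (hfin.mem_toFinset.1 hb)
      omega)
    have h3 := (ncard_mono h1).trans (Set.ncard_union_le _ _)
    rw [Set.ncard_singleton] at h3
    have h4 : hfin.toFinset.card * (k - 1) ≤ 3 * (k - 1) := Nat.mul_le_mul_right _ hNcard
    omega
  have hDA : D b ⊆ A \ {a} := fun x hx => RIn.right hx
  have haD : a ∉ D b := fun h => (hDA h).2 rfl
  have hrest : ConnOn F (A \ D b) := by
    refine connOn_of_center a ?_
    rintro x ⟨hxA, hxD⟩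
    rcases hcover x hxA with rfl | ⟨b', hb', hxb'⟩
    · exact RIn.refl ⟨haA, haD⟩
    · have hsub : D b' ⊆ A \ D b := fun y hy =>
        ⟨(RIn.right hy).1, fun hy' => hxD (RIn.trans hy' (RIn.trans (RIn.symm hy) hxb'))⟩
      refine (RIn.step (s := A \ D b) (v := b') ⟨haA, haD⟩ hb' (hsub (RIn.refl (RIn.left hxb')))).trans ?_
      exact (RIn.in_comp hxb').mono hsub
  have hUD : U \ D b = (A \ D b) ∪ (U \ A) := by
    ext x
    constructor
    · rintro ⟨h1, h2⟩
      by_cases h : x ∈ A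
      · exact Or.inl ⟨h, h2⟩
      · exact Or.inr ⟨h1, h⟩
    · rintro (⟨h1, h2⟩ | ⟨h1, h2⟩)
      · exact ⟨hAU h1, h2⟩
      · exact ⟨h1, fun h => h2 (hDA h).1⟩
  have hconn : ConnOn F (U \ D b) := by
    rw [hUD]
    rcases ha with h | ⟨y, hy, hay⟩
    · rw [h, Set.union_empty]; exact hrest
    · exact hrest.union hUA ⟨a, ⟨haA, haD⟩, y, hy, Or.inr hay⟩
  have hlt2 := hmin (D b) (fun x hx => hAU (hDA hx).1) (connOn_comp _ _ _) hconn hbk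
  have : D b ⊂ A := by
    refine LE.le.ssubset_of_ne (fun x hx => (hDA hx).1) ?_
    intro h; exact haD (h ▸ haA)
  have := Set.ncard_lt_ncard this (Set.toFinite _)
  omega

/-- A connected subcubic graph with many vertices of `X` splits into `m` disjoint connected parts,
each with at least `k` vertices of `X`. -/
theorem split_many {F : SimpleGraph V} {X : Set V} {k : ℕ} (hk : 1 ≤ k)
    (hd : ∀ v, (F.neighborSet v).ncard ≤ 3) (m : ℕ) : ∀ U : Set V, ConnOn F U →
    3 * k * m ≤ (U ∩ X).ncard → ∃ A : Fin m → Set V, (∀ i, A i ⊆ U) ∧ (∀ i, ConnOn F (A i)) ∧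
      (∀ i, k ≤ (A i ∩ X).ncard) ∧ ∀ i j, i ≠ j → Disjoint (A i) (A j) := by
  induction m with
  | zero => intro U _ _; exact ⟨fun i => i.elim0, fun i => i.elim0, fun i => i.elim0,
      fun i => i.elim0, fun i => i.elim0⟩
  | succ m ih =>
    intro U hU hX
    obtain ⟨A0, hA0U, hA0, hrest, hk1, hk2⟩ := split_one (X := X) hk hd hU (by nlinarith)
    obtain ⟨A, h1, h2, h3, h4⟩ := ih (U \ A0) hrest (by
      have : U ∩ X ⊆ (A0 ∩ X) ∪ ((U \ A0) ∩ X) := by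
        rintro x ⟨hx, hx'⟩
        by_cases h : x ∈ A0
        · exact Or.inl ⟨h, hx'⟩
        · exact Or.inr ⟨⟨hx, h⟩, hx'⟩
      have := (ncard_mono this).trans (Set.ncard_union_le _ _)
      rw [Nat.mul_succ] at hX
      omega)
    have hdis : ∀ i, Disjoint A0 (A i) := fun i =>
      Set.disjoint_left.2 (fun x hx hx' => (h1 i hx').2 hx)
    refine ⟨Fin.cons A0 A, ?_, ?_, ?_, ?_⟩
    · intro i; refine Fin.cases ?_ ?_ i
      · exact hA0U
      · intro i; exact (h1 i).trans Set.sdiff_subset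
    · intro i; refine Fin.cases ?_ ?_ i
      · exact hA0
      · intro i; exact h2 i
    · intro i; refine Fin.cases ?_ ?_ i
      · exact hk1
      · intro i; exact h3 i
    · intro i j
      refine Fin.cases ?_ ?_ i
      · refine Fin.cases ?_ ?_ j
        · intro h; exact absurd rfl h
        · intro j _; exact hdis j
      · intro i
        refine Fin.cases ?_ ?_ j
        · intro _; exact (hdis i).symm
        · intro j hij; exact h4 i j (fun h => hij (by rw [h]))

end Split

/-! ### Linkages with fewest edges outside a given subgraph -/

section Cut

variable {V : Type} [Finite V]

/-- The graph formed by the edges of a linkage. -/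
def Lk.graph {G : SimpleGraph V} {s A B : Set V} {k : ℕ} (L : Lk G s A B k) : SimpleGraph V :=
  SimpleGraph.fromRel (fun x y => ∃ i t, t < L.len i ∧ L.r i t = x ∧ L.r i (t + 1) = y)

theorem Lk.graph_adj {G : SimpleGraph V} {s A B : Set V} {k : ℕ} (L : Lk G s A B k) {x y : V} :
    L.graph.Adj x y ↔ ∃ i t, t < L.len i ∧
      ((L.r i t = x ∧ L.r i (t + 1) = y) ∨ (L.r i t = y ∧ L.r i (t + 1) = x)) := by
  rw [Lk.graph, SimpleGraph.fromRel_adj]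
  constructor
  · rintro ⟨_, ⟨i, t, ht, h⟩ | ⟨i, t, ht, h⟩⟩
    · exact ⟨i, t, ht, Or.inl h⟩
    · exact ⟨i, t, ht, Or.inr h⟩
  · rintro ⟨i, t, ht, ⟨rfl, rfl⟩ | ⟨rfl, rfl⟩⟩
    · exact ⟨(L.adj i t ht).ne, Or.inl ⟨i, t, ht, rfl, rfl⟩⟩
    · exact ⟨(L.adj i t ht).ne.symm, Or.inr ⟨i, t, ht, rfl, rfl⟩⟩

theorem Lk.graph_le {G : SimpleGraph V} {s A B : Set V} {k : ℕ} (L : Lk G s A B k) :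
    L.graph ≤ G := by
  intro x y h
  obtain ⟨i, t, ht, ⟨rfl, rfl⟩ | ⟨rfl, rfl⟩⟩ := L.graph_adj.1 h
  · exact L.adj i t ht
  · exact (L.adj i t ht).symm

/-- The number of edges of a linkage outside of `W`. -/
noncomputable def Lk.cost {G : SimpleGraph V} {s A B : Set V} {k : ℕ} (L : Lk G s A B k)
    (W : SimpleGraph V) : ℕ := (L.graph.edgeSet \ W.edgeSet).ncard

/-- The linkage `L` has as few edges outside of `W` as possible. -/
def Lk.IsMin {G : SimpleGraph V} {s A B : Set V} {k : ℕ} (L : Lk G s A B k)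
    (W : SimpleGraph V) : Prop := ∀ L' : Lk G s A B k, L.cost W ≤ L'.cost W

theorem Lk.exists_isMin {G : SimpleGraph V} {s A B : Set V} {k : ℕ}
    (h : Nonempty (Lk G s A B k)) (W : SimpleGraph V) : ∃ L : Lk G s A B k, L.IsMin W := by
  classical
  have hex : ∃ n, ∃ L : Lk G s A B k, L.cost W = n := ⟨_, h.some, rfl⟩
  obtain ⟨L, hL⟩ := Nat.find_spec hex
  refine ⟨L, fun L' => ?_⟩
  rw [hL]
  exact Nat.find_min' hex ⟨L', rfl⟩

/-- Changing the host graph of a linkage. -/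
def Lk.mapG {G G' : SimpleGraph V} {s A B : Set V} {k : ℕ} (L : Lk G s A B k)
    (h : G ≤ G') : Lk G' s A B k :=
  { L with adj := fun i t ht => h (L.adj i t ht) }

/-- An edge outside `W` of a linkage with fewest such edges is crossed by a small separator: after the
deletion of the edge, a set with one vertex on each of the other paths separates `A` from `B`
in the union of `W` and the linkage. -/
theorem Lk.IsMin.cut {G : SimpleGraph V} {s A B : Set V} {k : ℕ} {L : Lk G s A B k}
    {W : SimpleGraph V} (hmin : L.IsMin W) (hW : W ≤ G) (i : Fin k) (τ : ℕ) (hτ : τ < L.len i)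
    (hnew : ¬ W.Adj (L.r i τ) (L.r i (τ + 1))) :
    ∃ Z : Set V, Z.ncard < k ∧
      (∀ a ∈ A, ∀ b ∈ B, ¬ RIn ((W ⊔ L.graph).deleteEdges {s(L.r i τ, L.r i (τ + 1))}) (s \ Z) a b) ∧
      (∀ t, t ≤ L.len i → L.r i t ∉ Z) ∧
      (∀ j t t', t ≤ L.len j → t' ≤ L.len j → L.r j t ∈ Z → L.r j t' ∈ Z → t = t') := by
  classical
  set H := (W ⊔ L.graph).deleteEdges {s(L.r i τ, L.r i (τ + 1))} with hH
  have hHG : H ≤ G := (SimpleGraph.deleteEdges_le _).trans (sup_le hW L.graph_le)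
  obtain ⟨Z, hZsep, hZk⟩ : ∃ Z : Finset V, (∀ a ∈ A, ∀ b ∈ B, ¬ RIn H (s \ Z) a b) ∧ Z.card < k := by
    by_contra hcon
    push Not at hcon
    obtain ⟨L'⟩ := menger H s A B k hcon
    have h1 := hmin (L'.mapG hHG)
    have h2 : (L'.mapG hHG).graph = L'.graph := rfl
    have h3 : L'.graph ≤ H := L'.graph_le
    unfold Lk.cost at h1
    rw [h2] at h1
    have hmem : s(L.r i τ, L.r i (τ + 1)) ∈ L.graph.edgeSet \ W.edgeSet := by
      refine ⟨?_, hnew⟩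
      rw [SimpleGraph.mem_edgeSet, L.graph_adj]
      exact ⟨i, τ, hτ, Or.inl ⟨rfl, rfl⟩⟩
    have h4 : L'.graph.edgeSet \ W.edgeSet ⊂ L.graph.edgeSet \ W.edgeSet := by
      refine Set.ssubset_iff_of_subset ?_ |>.2 ⟨_, hmem, ?_⟩
      · rintro ⟨x, y⟩ ⟨h5, h6⟩
        have h7 : H.Adj x y := h3 h5
        rw [hH, SimpleGraph.deleteEdges_adj] at h7
        rcases h7.1 with h8 | h8
        · exact absurd h8 h6
        · exact ⟨h8, h6⟩
      · rintro ⟨h5, _⟩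
        have h7 := h3 h5
        rw [hH, SimpleGraph.deleteEdges_adj] at h7
        exact h7.2 rfl
    have := Set.ncard_lt_ncard h4 (Set.toFinite _)
    omega
  have hstep : ∀ j, j ≠ i → ∀ t, t < L.len j → H.Adj (L.r j t) (L.r j (t + 1)) := by
    intro j hj t ht
    rw [hH, SimpleGraph.deleteEdges_adj]
    refine ⟨Or.inr (L.graph_adj.2 ⟨j, t, ht, Or.inl ⟨rfl, rfl⟩⟩), ?_⟩
    intro h
    have h' : (L.r j t = L.r i τ ∧ L.r j (t + 1) = L.r i (τ + 1)) ∨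
      (L.r j t = L.r i (τ + 1) ∧ L.r j (t + 1) = L.r i τ) := by simpa using h
    rcases h' with h' | h'
    · exact hj (L.inj _ _ _ _ ht.le hτ.le h'.1).1
    · exact hj (L.inj _ _ _ _ ht.le hτ h'.1).1
  have hhit : ∀ j, j ≠ i → ∃ t, t ≤ L.len j ∧ L.r j t ∈ Z := by
    intro j hj
    by_contra hcon
    push Not at hcon
    refine hZsep _ (L.start j) _ (L.fin j) (RIn.of_seq (L.r j) (Nat.zero_le _) ?_ ?_)
    · intro t _ ht; exact ⟨L.mem j t ht, hcon t ht⟩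
    · intro t _ ht; exact hstep j hj t ht
  choose! p hp hpZ using hhit
  have himg : (Finset.univ.erase i).image (fun j => L.r j (p j)) = Z := by
    refine Finset.eq_of_subset_of_card_le ?_ ?_
    · intro x hx
      obtain ⟨j, hj, rfl⟩ := Finset.mem_image.1 hx
      exact hpZ j (Finset.ne_of_mem_erase hj)
    · rw [Finset.card_image_of_injOn, Finset.card_erase_of_mem (Finset.mem_univ _)]
      · simp; omega
      · intro j hj j' hj' h
        exact (L.inj j j' _ _ (hp j (Finset.ne_of_mem_erase hj))
          (hp j' (Finset.ne_of_mem_erase hj')) h).1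
  have huniq : ∀ j t, t ≤ L.len j → L.r j t ∈ Z → j ≠ i ∧ t = p j := by
    intro j t ht hZ
    rw [← himg] at hZ
    obtain ⟨j', hj', h⟩ := Finset.mem_image.1 hZ
    have hj'i := Finset.ne_of_mem_erase hj'
    obtain ⟨rfl, h2⟩ := L.inj _ _ _ _ (hp j' hj'i) ht h
    exact ⟨hj'i, h2.symm⟩
  refine ⟨Z, by rwa [Set.ncard_coe_finset], hZsep, ?_, ?_⟩
  · intro t ht h
    exact (huniq i t ht h).1 rfl
  · intro j t t' ht ht' h h'
    rw [(huniq j t ht h).2, (huniq j t' ht' h').2]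

end Cut

/-! ### Crossing families of paths -/

section Crossing

variable {V : Type} [Finite V]

/-- `n` disjoint row paths starting in `A` and `d` disjoint connected columns, where each column
meets each row and the rows traverse the columns in order. -/
def CrossingIn (G : SimpleGraph V) (A : Set V) (n d : ℕ) : Prop :=
  ∃ (len : Fin n → ℕ) (r : Fin n → ℕ → V) (Q : Fin d → Set V),
    (∀ i t, t < len i → G.Adj (r i t) (r i (t + 1))) ∧
    (∀ i j t t', t ≤ len i → t' ≤ len j → r i t = r j t' → i = j ∧ t = t') ∧
    (∀ i, r i 0 ∈ A) ∧ (∀ c, ConnOn G (Q c)) ∧ (∀ c c', c ≠ c' → Disjoint (Q c) (Q c')) ∧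
    (∀ c i, ∃ t, t ≤ len i ∧ r i t ∈ Q c) ∧
    (∀ c c', c < c' → ∀ i t t', t ≤ len i → t' ≤ len i → r i t ∈ Q c → r i t' ∈ Q c' → t < t')

/-- If the connected sets `P c` are unions of components of `W`, and each meets the paths
`j ∈ I` of a linkage with fewest edges outside of `W`, then sufficiently many of them are
met in the same order by all those paths. -/
theorem crossing_of_min {G : SimpleGraph V} {s A B : Set V} {k : ℕ} {L : Lk G s A B k}
    {W : SimpleGraph V} (hmin : L.IsMin W) (hW : W ≤ G) {n d v : ℕ} (hv : v = d * (d * k + 1))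
    (I : Finset (Fin k)) (hn : n ≤ I.card) (hn1 : 1 ≤ n)
    (P : Fin v → Set V) (hPs : ∀ c, P c ⊆ s)
    (hP : ∀ c, ConnOn W (P c)) (hcl : ∀ c, ∀ x ∈ P c, ∀ y, W.Adj x y → y ∈ P c)
    (hdis : ∀ c c', c ≠ c' → Disjoint (P c) (P c'))
    (hhit : ∀ c, ∀ j ∈ I, ∃ t, t ≤ L.len j ∧ L.r j t ∈ P c) : CrossingIn G A n d := by
  classical
  obtain ⟨i0, hi0⟩ : I.Nonempty := Finset.card_pos.1 (by omega)
  -- first hits on the path `i0`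
  set τ : Fin v → ℕ := fun c => Nat.find (hhit c i0 hi0) with hτ
  have hτs : ∀ c, τ c ≤ L.len i0 ∧ L.r i0 (τ c) ∈ P c := fun c => Nat.find_spec (hhit c i0 hi0)
  have hτm : ∀ c t, t < τ c → t ≤ L.len i0 → L.r i0 t ∉ P c := fun c t ht ht' h =>
    Nat.find_min (hhit c i0 hi0) ht ⟨ht', h⟩
  have hτinj : Function.Injective τ := by
    intro c c' h
    by_contra hne
    exact Set.disjoint_left.1 (hdis c c' hne) (hτs c).2 (h ▸ (hτs c').2)
  set σ := Tuple.sort τ with hσ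
  have hmono : StrictMono (τ ∘ σ) :=
    (Tuple.monotone_sort τ).strictMono_of_injective (hτinj.comp σ.injective)
  set w := d * k + 1 with hw
  have hidx : ∀ (q : Fin d) (u : Fin w), q.1 * w + u.1 < v := by
    intro q u
    have h1 := q.2; have h2 := u.2
    rw [hv]
    calc q.1 * w + u.1 < q.1 * w + w := by omega
      _ = (q.1 + 1) * w := by ring
      _ ≤ d * w := Nat.mul_le_mul_right _ (by omega)
  let idx : Fin d → Fin w → Fin v := fun q u => σ ⟨q.1 * w + u.1, hidx q u⟩
  have hlt : ∀ q u q' u', q < q' → τ (idx q u) < τ (idx q' u') := by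
    intro q u q' u' hq
    apply hmono
    rw [Fin.mk_lt_mk]
    have h1 : q.1 + 1 ≤ q'.1 := hq
    calc q.1 * w + u.1 < q.1 * w + w := by omega
      _ = (q.1 + 1) * w := by ring
      _ ≤ q'.1 * w := Nat.mul_le_mul_right _ h1
      _ ≤ q'.1 * w + u'.1 := by omega
  have hw0 : 0 < w := by omega
  have hle : ∀ q u, τ (idx q ⟨0, hw0⟩) ≤ τ (idx q u) := by
    intro q u
    apply hmono.monotone
    rw [Fin.mk_le_mk]
    simp
  -- the separator at the border in front of group `q`
  have hcut : ∀ q : Fin d, 0 < q.1 → ∃ Z : Set V, Z.ncard < k ∧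
      (∀ a ∈ A, ∀ b ∈ B, ¬ RIn ((W ⊔ L.graph).deleteEdges
        {s(L.r i0 (τ (idx q ⟨0, hw0⟩) - 1), L.r i0 (τ (idx q ⟨0, hw0⟩) - 1 + 1))}) (s \ Z) a b) ∧
      (∀ t, t ≤ L.len i0 → L.r i0 t ∉ Z) ∧
      (∀ j t t', t ≤ L.len j → t' ≤ L.len j → L.r j t ∈ Z → L.r j t' ∈ Z → t = t') ∧
      0 < τ (idx q ⟨0, hw0⟩) ∧
      ¬ W.Adj (L.r i0 (τ (idx q ⟨0, hw0⟩) - 1)) (L.r i0 (τ (idx q ⟨0, hw0⟩) - 1 + 1)) := by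
    intro q hq
    have h0 : 0 < τ (idx q ⟨0, hw0⟩) := lt_of_le_of_lt (Nat.zero_le _)
      (hlt ⟨0, lt_trans hq q.2⟩ ⟨0, hw0⟩ q ⟨0, hw0⟩ (by rw [Fin.lt_def]; exact hq))
    have h1 := hτs (idx q ⟨0, hw0⟩)
    have hnew : ¬ W.Adj (L.r i0 (τ (idx q ⟨0, hw0⟩) - 1))
        (L.r i0 (τ (idx q ⟨0, hw0⟩) - 1 + 1)) := by
      intro hadj
      rw [Nat.sub_add_cancel h0] at hadj
      exact hτm _ _ (by omega) (by omega) (hcl _ _ h1.2 _ hadj.symm)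
    obtain ⟨Z, h2, h3, h4, h5⟩ := hmin.cut hW i0 (τ (idx q ⟨0, hw0⟩) - 1) (by omega) hnew
    exact ⟨Z, h2, h3, h4, h5, h0, hnew⟩
  choose! Z hZk hZsep hZ0 hZ1 hτ0 hnew using hcut
  -- in each group some set avoids all separators
  have hchoose : ∀ q : Fin d, ∃ u : Fin w, ∀ q' : Fin d, 0 < q'.1 → ∀ x ∈ P (idx q u), x ∉ Z q' := by
    intro q
    by_contra hcon
    push Not at hcon
    choose f hf x hx hxZ using hcon
    have hxinj : Function.Injective x := by
      intro u u' h
      by_contra hne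
      have : idx q u ≠ idx q u' := by
        intro h'
        have := σ.injective h'
        rw [Fin.mk.injEq] at this
        exact hne (Fin.ext (by omega))
      exact Set.disjoint_left.1 (hdis _ _ this) (hx u) (h ▸ hx u')
    have h1 : Set.range x ⊆ ⋃ q' ∈ (Finset.univ.filter (fun q' : Fin d => 0 < q'.1)), Z q' := by
      rintro _ ⟨u, rfl⟩
      simp only [Set.mem_iUnion]
      exact ⟨f u, by simpa using hf u, hxZ u⟩
    have h2 := ncard_mono h1
    have h3 := ncard_biUnion_le (Finset.univ.filter (fun q' : Fin d => 0 < q'.1)) Z k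
      (by intro b hb; exact (hZk b (by simpa using hb)).le)
    rw [← Set.image_univ, Set.ncard_image_of_injective _ hxinj, Set.ncard_univ,
      Nat.card_eq_fintype_card, Fintype.card_fin] at h2
    have h4 : (Finset.univ.filter (fun q' : Fin d => 0 < q'.1)).card ≤ d :=
      (Finset.card_le_univ _).trans (by simp)
    have h5 := Nat.mul_le_mul_right k h4
    omega
  choose u hu using hchoose
  -- the rows
  let e : Fin n → Fin k := fun i => (I.equivFin.symm (Fin.castLE hn i)).1
  have heI : ∀ i, e i ∈ I := fun i => (I.equivFin.symm (Fin.castLE hn i)).2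
  have heinj : Function.Injective e := by
    intro i j h
    exact Fin.castLE_injective hn (I.equivFin.symm.injective (Subtype.ext h))
  refine ⟨fun i => L.len (e i), fun i => L.r (e i), fun q => P (idx q (u q)),
    fun i t ht => L.adj _ _ ht, ?_, fun i => L.start _, fun c => (hP _).monoG hW, ?_,
    fun c i => hhit _ _ (heI i), ?_⟩
  · intro i j t t' ht ht' h
    obtain ⟨h1, h2⟩ := L.inj _ _ _ _ ht ht' h
    exact ⟨heinj h1, h2⟩
  · intro c c' hne
    apply hdis
    intro h
    have h1 := congrArg τ h
    rcases lt_or_gt_of_ne hne with h2 | h2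
    · exact absurd h1 (hlt c (u c) c' (u c') h2).ne
    · exact absurd h1 (hlt c' (u c') c (u c) h2).ne'
  · intro c c' hcc i t t' ht ht' hPt hPt'
    dsimp only at ht ht' hPt hPt'
    have hc0 : 0 < c'.1 := lt_of_le_of_lt (Nat.zero_le _) hcc
    set T := τ (idx c' ⟨0, hw0⟩) with hT
    have hT0 := hτ0 c' hc0
    have hTlen : T ≤ L.len i0 := (hτs _).1
    set H := (W ⊔ L.graph).deleteEdges {s(L.r i0 (T - 1), L.r i0 (T - 1 + 1))} with hH
    have hsep := hZsep c' hc0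
    have hWH : W ≤ H := by
      intro x y hxy
      rw [hH, SimpleGraph.deleteEdges_adj]
      refine ⟨Or.inl hxy, ?_⟩
      intro h
      have h' : (x = L.r i0 (T - 1) ∧ y = L.r i0 (T - 1 + 1)) ∨
        (x = L.r i0 (T - 1 + 1) ∧ y = L.r i0 (T - 1)) := by simpa using h
      rcases h' with ⟨rfl, rfl⟩ | ⟨rfl, rfl⟩
      · exact hnew c' hc0 hxy
      · exact hnew c' hc0 hxy.symm
    have hLH : ∀ j t, t < L.len j → ¬ (j = i0 ∧ t = T - 1) → H.Adj (L.r j t) (L.r j (t + 1)) := by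
      intro j t ht hne
      rw [hH, SimpleGraph.deleteEdges_adj]
      refine ⟨Or.inr (L.graph_adj.2 ⟨j, t, ht, Or.inl ⟨rfl, rfl⟩⟩), ?_⟩
      intro h
      have h' : (L.r j t = L.r i0 (T - 1) ∧ L.r j (t + 1) = L.r i0 (T - 1 + 1)) ∨
        (L.r j t = L.r i0 (T - 1 + 1) ∧ L.r j (t + 1) = L.r i0 (T - 1)) := by simpa using h
      rcases h' with h' | h'
      · exact hne (L.inj _ _ _ _ ht.le (by omega) h'.1)
      · obtain ⟨rfl, h1⟩ := L.inj _ _ _ _ ht.le (by omega) h'.1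
        have := (L.inj _ _ _ _ (by omega) (by omega) h'.2).2
        omega
    -- a segment of a path that avoids the separator and the deleted edge
    have seg : ∀ j a b, a ≤ b → b ≤ L.len j → (∀ t, a ≤ t → t ≤ b → L.r j t ∉ Z c') →
        (j = i0 → b < T ∨ T ≤ a) → RIn H (s \ Z c') (L.r j a) (L.r j b) := by
      intro j a b hab hb hZ hj
      refine RIn.of_seq (L.r j) hab (fun t h1 h2 => ⟨L.mem j t (by omega), hZ t h1 h2⟩) ?_
      intro t h1 h2
      refine hLH j t (by omega) ?_
      rintro ⟨hj0, h3⟩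
      rcases hj hj0 with h | h <;> omega
    have hsub : ∀ q, P (idx q (u q)) ⊆ s \ Z c' := fun q x hx => ⟨hPs _ hx, hu q c' hc0 x hx⟩
    have hconn : ∀ q x y, x ∈ P (idx q (u q)) → y ∈ P (idx q (u q)) → RIn H (s \ Z c') x y :=
      fun q x y hx hy => ((hP _ x hx y hy).mono (hsub q)).monoG hWH
    have hAside : ∀ x ∈ P (idx c (u c)), ∃ a ∈ A, RIn H (s \ Z c') a x := by
      intro x hx
      refine ⟨_, L.start i0, (seg i0 0 (τ (idx c (u c))) (Nat.zero_le _) (hτs _).1 ?_ ?_).trans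
        (hconn c _ x (hτs _).2 hx)⟩
      · intro t _ ht; exact hZ0 c' hc0 t (ht.trans (hτs _).1)
      · intro _; left; exact hlt _ _ _ _ hcc
    have hBside : ∀ x ∈ P (idx c' (u c')), ∃ b ∈ B, RIn H (s \ Z c') x b := by
      intro x hx
      refine ⟨_, L.fin i0, (hconn c' x _ hx (hτs _).2).trans
        (seg i0 (τ (idx c' (u c'))) _ (hτs _).1 le_rfl ?_ ?_)⟩
      · intro t _ ht; exact hZ0 c' hc0 t ht
      · intro _; right; exact hle _ _
    obtain ⟨a, ha, hat⟩ := hAside _ hPt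
    obtain ⟨b, hb, htb⟩ := hBside _ hPt'
    by_contra hcon
    by_cases hei : e i = i0
    · -- the deleted edge separates the two hits on the path `i0`
      have h1 : t < T := by
        by_contra h
        refine hsep a ha _ (L.fin (e i)) (hat.trans (seg (e i) t _ ht le_rfl ?_ ?_))
        · intro t _ ht; rw [hei] at ht ⊢; exact hZ0 c' hc0 t ht
        · intro _; right; omega
      refine hsep _ (L.start (e i)) b hb ((seg (e i) 0 t' (Nat.zero_le _) ht' ?_ ?_).trans htb)
      · intro t1 _ ht1; rw [hei] at ht' ⊢; exact hZ0 c' hc0 t1 (by omega)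
      · intro _; left; omega
    · -- the separator has at most one vertex on the path
      have hzt : ∃ z, t < z ∧ z ≤ L.len (e i) ∧ L.r (e i) z ∈ Z c' := by
        by_contra h
        push Not at h
        refine hsep a ha _ (L.fin (e i)) (hat.trans (seg (e i) t _ ht le_rfl ?_
          (fun h => absurd h hei)))
        intro t1 h1 h2
        rcases Nat.eq_or_lt_of_le h1 with rfl | h3
        · exact (hsub c hPt).2
        · exact h t1 h3 h2
      have hzt' : ∃ z, z < t' ∧ L.r (e i) z ∈ Z c' := by
        by_contra h
        push Not at h
        refine hsep _ (L.start (e i)) b hb ((seg (e i) 0 t' (Nat.zero_le _) ht' ?_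
          (fun h => absurd h hei)).trans htb)
        intro t1 h1 h2
        rcases Nat.eq_or_lt_of_le h2 with rfl | h3
        · exact (hsub c' hPt').2
        · exact h t1 h3
      obtain ⟨z, h1, h2, h3⟩ := hzt
      obtain ⟨z', h4, h5⟩ := hzt'
      have := hZ1 c' hc0 (e i) z z' h2 (by omega) h3 h5
      omega

end Crossing

/-! ### Disjoint paths or a crossing -/

section Demands

variable {V : Type}

/-- Selecting paths of a linkage. -/
def Lk.sub {G : SimpleGraph V} {s s' A B : Set V} {k k' : ℕ} (L : Lk G s A B k)
    (e : Fin k' → Fin k) (he : Function.Injective e)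
    (hs : ∀ i t, t ≤ L.len (e i) → L.r (e i) t ∈ s') : Lk G s' A B k' where
  len i := L.len (e i)
  r i := L.r (e i)
  adj i t ht := L.adj _ _ ht
  mem i t ht := hs i t ht
  inj i j t t' ht ht' h := by
    obtain ⟨h1, h2⟩ := L.inj _ _ _ _ ht ht' h
    exact ⟨he h1, h2⟩
  start i := L.start _
  fin i := L.fin _
  onlyA i := L.onlyA _
  onlyB i := L.onlyB _

theorem Lk.shorten {G : SimpleGraph V} {s A B : Set V} {k k' : ℕ}
    (h : Nonempty (Lk G s A B k)) (hk : k' ≤ k) : Nonempty (Lk G s A B k') :=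
  ⟨h.some.sub (Fin.castLE hk) (Fin.castLE_injective hk) (fun _ t ht => h.some.mem _ t ht)⟩

theorem exists_fin_emb {α : Type} (I : Finset α) {n : ℕ} (hn : n ≤ I.card) :
    ∃ e : Fin n → α, Function.Injective e ∧ ∀ i, e i ∈ I := by
  refine ⟨fun i => (I.equivFin.symm (Fin.castLE hn i)).1, ?_,
    fun i => (I.equivFin.symm (Fin.castLE hn i)).2⟩
  intro i j h
  exact Fin.castLE_injective hn (I.equivFin.symm.injective (Subtype.ext h))

/-- The interior vertices of a path of a linkage. -/
def Lk.inner {G : SimpleGraph V} {s A B : Set V} {k : ℕ} (L : Lk G s A B k) (p : Fin k) : Set V :=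
  {x | ∃ t, 1 ≤ t ∧ t < L.len p ∧ L.r p t = x}

/-- Either a family of demands can be joined by disjoint paths, or two of their linkages
cross each other. All linkages live in a common set `C`, except for the ends of the paths.
In the induction step, if no path of the first linkage can be kept apart from the others, then
many of its paths are hit by the same `n` paths of another linkage, chosen with fewest edges
outside of the first one, and `crossing_of_min` applies. -/
theorem demands (n d : ℕ) (hn : 1 ≤ n) (M : ℕ) : ∃ k : ℕ, ∀ (V : Type) [Finite V]
    (G : SimpleGraph V) (C : Set V) (s A B : Fin M → Set V),
    (∀ l, C ⊆ s l) → (∀ l, s l ⊆ C ∪ (A l ∪ B l)) →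
    (∀ l, Nonempty (Lk G (s l) (A l) (B l) k)) →
    (∃ P : Fin M → Set V, (∀ l, P l ⊆ s l) ∧ (∀ l l', l ≠ l' → Disjoint (P l) (P l')) ∧
      ∀ l, ∃ a ∈ A l, ∃ b ∈ B l, RIn G (P l) a b) ∨
    ∃ l, CrossingIn G (A l) n d := by
  classical
  induction M with
  | zero =>
    refine ⟨0, ?_⟩
    intro V _ G C s A B _ _ _
    exact Or.inl ⟨fun l => l.elim0, fun l => l.elim0, fun l => l.elim0, fun l => l.elim0⟩
  | succ M ih =>
  obtain ⟨k2, hk2⟩ := ih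
  set k1 := k2 + 2 + n with hk1
  set v := d * (d * k1 + 1) with hv
  set k0 := M * 2 ^ k1 * v + 1 with hk0
  refine ⟨max k0 k1, ?_⟩
  intro V _ G C s A B hCs hsC hL
  obtain ⟨L0⟩ := Lk.shorten (hL 0) (le_max_left k0 k1)
  -- the interiors of the paths of `L0` are the components of `W`
  set W : SimpleGraph V := SimpleGraph.fromRel (fun x y => ∃ p t, 1 ≤ t ∧ t + 1 < L0.len p ∧
    L0.r p t = x ∧ L0.r p (t + 1) = y) with hW
  have hWG : W ≤ G := by
    intro x y hxy
    rw [hW, SimpleGraph.fromRel_adj] at hxy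
    rcases hxy.2 with ⟨p, t, _, h2, rfl, rfl⟩ | ⟨p, t, _, h2, rfl, rfl⟩
    · exact L0.adj p t (by omega)
    · exact (L0.adj p t (by omega)).symm
  have hinner : ∀ p, ConnOn W (L0.inner p) := by
    intro p
    refine connOn_seq (L0.r p) 1 (L0.len p) ?_
    intro t h1 h2
    rw [hW, SimpleGraph.fromRel_adj]
    exact ⟨(L0.adj p t (by omega)).ne, Or.inl ⟨p, t, h1, h2, rfl, rfl⟩⟩
  have hclosed : ∀ p, ∀ x ∈ L0.inner p, ∀ y, W.Adj x y → y ∈ L0.inner p := by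
    rintro p x ⟨t, h1, h2, rfl⟩ y hxy
    rw [hW, SimpleGraph.fromRel_adj] at hxy
    rcases hxy.2 with ⟨q, t', h3, h4, h5, h6⟩ | ⟨q, t', h3, h4, h5, h6⟩
    · obtain ⟨rfl, rfl⟩ := L0.inj _ _ _ _ (by omega) (by omega) h5
      exact ⟨_, by omega, h4, h6⟩
    · obtain ⟨rfl, rfl⟩ := L0.inj _ _ _ _ (by omega) (by omega) h6
      exact ⟨_, h3, by omega, h5⟩
  have hindis : ∀ p q, p ≠ q → Disjoint (L0.inner p) (L0.inner q) := by
    intro p q hpq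
    rw [Set.disjoint_left]
    rintro x ⟨t, h1, h2, rfl⟩ ⟨t', h3, h4, h5⟩
    exact hpq (L0.inj _ _ _ _ (by omega) (by omega) h5).1.symm
  have hinC : ∀ p, L0.inner p ⊆ C := by
    rintro p x ⟨t, h1, h2, rfl⟩
    rcases hsC 0 (L0.mem p t h2.le) with h | h | h
    · exact h
    · have := L0.onlyA p t h2.le h; omega
    · have := L0.onlyB p t h2.le h; omega
  have hLs : ∀ l : Fin M, ∃ L : Lk G (s l.succ) (A l.succ) (B l.succ) k1, L.IsMin W :=
    fun l => Lk.exists_isMin (Lk.shorten (hL l.succ) (le_max_right k0 k1)) W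
  choose L hLmin using hLs
  let av : Fin k0 → Fin M → Finset (Fin k1) := fun p l =>
    Finset.univ.filter (fun j => ∀ t, t ≤ (L l).len j → (L l).r j t ∉ L0.inner p)
  by_cases hcase : ∃ p, ∀ l, k2 + 2 ≤ (av p l).card
  · -- route the first demand along `p` and the others disjointly from it
    obtain ⟨p, hp⟩ := hcase
    set R : Set V := {x | ∃ t, t ≤ L0.len p ∧ L0.r p t = x} with hR
    have hends : ∀ x ∈ R, x ∈ L0.inner p ∨ x = L0.r p 0 ∨ x = L0.r p (L0.len p) := by
      rintro x ⟨t, ht, rfl⟩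
      rcases Nat.eq_zero_or_pos t with rfl | h0
      · exact Or.inr (Or.inl rfl)
      · rcases Nat.eq_or_lt_of_le ht with rfl | h1
        · exact Or.inr (Or.inr rfl)
        · exact Or.inl ⟨t, h0, h1, rfl⟩
    have hLk : ∀ l : Fin M, Nonempty (Lk G (s l.succ \ R) (A l.succ) (B l.succ) k2) := by
      intro l
      -- at most two paths contain an end of the path `p`
      let bad : V → Finset (Fin k1) := fun x =>
        Finset.univ.filter (fun j => ∃ t, t ≤ (L l).len j ∧ (L l).r j t = x)
      have hbad : ∀ x, (bad x).card ≤ 1 := by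
        intro x
        rw [Finset.card_le_one]
        intro i hi j hj
        obtain ⟨t, ht, h1⟩ := (Finset.mem_filter.1 hi).2
        obtain ⟨t', ht', h2⟩ := (Finset.mem_filter.1 hj).2
        exact ((L l).inj _ _ _ _ ht ht' (h1.trans h2.symm)).1
      let I := (av p l \ bad (L0.r p 0)) \ bad (L0.r p (L0.len p))
      have hI : k2 ≤ I.card := by
        have h1 := hp l
        have h2 := hbad (L0.r p 0)
        have h3 := hbad (L0.r p (L0.len p))
        have h4 := Finset.le_card_sdiff (bad (L0.r p 0)) (av p l)
        have h5 := Finset.le_card_sdiff (bad (L0.r p (L0.len p))) (av p l \ bad (L0.r p 0))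
        change k2 ≤ ((av p l \ bad (L0.r p 0)) \ bad (L0.r p (L0.len p))).card
        omega
      obtain ⟨e, he, heI⟩ := exists_fin_emb I hI
      refine ⟨(L l).sub e he ?_⟩
      intro i t ht
      refine ⟨(L l).mem _ _ ht, ?_⟩
      intro hxR
      have h1 := heI i
      simp only [I, Finset.mem_sdiff] at h1
      rcases hends _ hxR with h | h | h
      · exact (Finset.mem_filter.1 h1.1.1).2 t ht h
      · exact h1.1.2 (Finset.mem_filter.2 ⟨Finset.mem_univ _, t, ht, h⟩)
      · exact h1.2 (Finset.mem_filter.2 ⟨Finset.mem_univ _, t, ht, h⟩)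
    rcases hk2 V G (C \ R) (fun l => s l.succ \ R) (fun l => A l.succ) (fun l => B l.succ)
      (fun l x hx => ⟨hCs _ hx.1, hx.2⟩)
      (fun l x hx => by
        rcases hsC _ hx.1 with h | h
        · exact Or.inl ⟨h, hx.2⟩
        · exact Or.inr h) hLk with ⟨P, h1, h2, h3⟩ | ⟨l, hl⟩
    · left
      have hRd : ∀ l, Disjoint R (P l) := fun l =>
        Set.disjoint_left.2 (fun x hx hx' => (h1 l hx').2 hx)
      refine ⟨Fin.cons R P, ?_, ?_, ?_⟩
      · intro l; refine Fin.cases ?_ ?_ l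
        · rintro x ⟨t, ht, rfl⟩; exact L0.mem p t ht
        · intro l x hx; exact (h1 l hx).1
      · intro l l'
        refine Fin.cases ?_ ?_ l
        · refine Fin.cases ?_ ?_ l'
          · intro h; exact absurd rfl h
          · intro l' _; exact hRd l'
        · intro l
          refine Fin.cases ?_ ?_ l'
          · intro _; exact (hRd l).symm
          · intro l' h; exact h2 l l' (fun h' => h (by rw [h']))
      · intro l; refine Fin.cases ?_ ?_ l
        · refine ⟨_, L0.start p, _, L0.fin p, ?_⟩
          exact RIn.of_seq (L0.r p) (Nat.zero_le _) (fun t _ ht => ⟨t, ht, rfl⟩)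
            (fun t _ ht => L0.adj p t ht)
        · intro l; exact h3 l
    · exact Or.inr ⟨l.succ, hl⟩
  · -- many paths of `L0` hit the same rows of the same linkage
    push Not at hcase
    choose f hf using hcase
    let lab : Fin k0 → Fin M × Finset (Fin k1) := fun p => (f p, (av p (f p))ᶜ)
    obtain ⟨⟨l, I⟩, -, hlI⟩ := Finset.exists_lt_card_fiber_of_mul_lt_card_of_maps_to
      (s := (Finset.univ : Finset (Fin k0))) (t := (Finset.univ : Finset (Fin M × Finset (Fin k1))))
      (f := lab) (n := v) (fun _ _ => Finset.mem_univ _) (by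
        simp only [Finset.card_univ, Fintype.card_prod, Fintype.card_fin, Fintype.card_finset]
        omega)
    obtain ⟨e, he, heI⟩ := exists_fin_emb _ hlI.le
    have hlab : ∀ c, f (e c) = l ∧ (av (e c) l)ᶜ = I := by
      intro c
      have := (Finset.mem_filter.1 (heI c)).2
      simp only [lab, Prod.mk.injEq] at this
      refine ⟨this.1, ?_⟩
      rw [← this.2, this.1]
    have hIcard : v ≠ 0 → n ≤ I.card := by
      intro hv0
      have c : Fin v := ⟨0, by omega⟩
      have h1 := hf (e c)
      rw [(hlab c).1] at h1
      rw [← (hlab c).2, Finset.card_compl, Fintype.card_fin]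
      omega
    right
    refine ⟨l.succ, ?_⟩
    by_cases hv0 : v = 0
    · -- no columns are required
      have hd0 : d = 0 := by
        rcases Nat.mul_eq_zero.1 hv0 with h | h
        · exact h
        · omega
      subst hd0
      have hnk : n ≤ k1 := by omega
      refine ⟨fun i => (L l).len (Fin.castLE hnk i), fun i => (L l).r (Fin.castLE hnk i),
        fun c => c.elim0, fun i t ht => (L l).adj _ _ ht, ?_, fun i => (L l).start _,
        fun c => c.elim0, fun c => c.elim0, fun c => c.elim0, fun c => c.elim0⟩
      intro i j t t' ht ht' h
      obtain ⟨h1, h2⟩ := (L l).inj _ _ _ _ ht ht' h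
      exact ⟨Fin.castLE_injective hnk h1, h2⟩
    refine crossing_of_min (hLmin l) hWG hv I (hIcard hv0) hn (fun c => L0.inner (e c))
      (fun c => (hinC _).trans (hCs _)) (fun c => hinner _) (fun c => hclosed _)
      (fun c c' h => hindis _ _ (fun h' => h (he h'))) ?_
    intro c j hj
    rw [← (hlab c).2, Finset.mem_compl] at hj
    by_contra hcon
    push Not at hcon
    exact hj (Finset.mem_filter.2 ⟨Finset.mem_univ _, hcon⟩)

end Demands

/-! ### From a crossing family to a grid -/

/-- A connected graph on sufficiently many vertices contains `r` distinct vertices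
`a 0, …, a (r - 1)` such that consecutive ones are joined by a walk avoiding all the others:
the neighbours of a vertex of large degree, or the vertices of a long path. -/
theorem exists_tuple (r : ℕ) : ∃ N : ℕ, 1 ≤ N ∧ ∀ (H : SimpleGraph (Fin N)),
    (∀ x y, RIn H Set.univ x y) →
    ∃ a : ℕ → Fin N, (∀ j l, j < r → l < r → a j = a l → j = l) ∧
      ∀ j, j + 1 < r → RIn H {x | ∀ l, l < r → l ≠ j → l ≠ j + 1 → x ≠ a l} (a j) (a (j + 1)) := by
  classical
  refine ⟨(r + 1) ^ r + 1, by omega, fun H hc => ?_⟩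
  by_cases hd : ∃ v, r ≤ (H.neighborSet v).ncard
  · obtain ⟨v, hv⟩ := hd
    obtain ⟨e, he, hm⟩ : ∃ e : Fin r → Fin ((r + 1) ^ r + 1), Function.Injective e ∧
        ∀ i, e i ∈ H.neighborSet v := by
      obtain ⟨B, hB, hBc⟩ := exists_sub_ncard hv
      have : Nat.card B = r := by rw [Nat.card_coe_set_eq, hBc]
      exact ⟨fun i => ((Finite.equivFinOfCardEq this).symm i).1,
        fun i j hij => (Finite.equivFinOfCardEq this).symm.injective (Subtype.ext hij),
        fun i => hB ((Finite.equivFinOfCardEq this).symm i).2⟩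
    refine ⟨fun j => if h : j < r then e ⟨j, h⟩ else v, ?_, ?_⟩
    · intro j l hj hl h
      simp only [hj, hl, dif_pos] at h
      simpa using he h
    · intro j hj
      have hadj : ∀ l, l < r → H.Adj v (if h : l < r then e ⟨l, h⟩ else v) := by
        intro l hl
        simp only [hl, dif_pos]
        exact hm _
      have hinj : ∀ j l, j < r → l < r → (if h : j < r then e ⟨j, h⟩ else v) =
          (if h : l < r then e ⟨l, h⟩ else v) → j = l := by
        intro j l hj hl h
        simp only [hj, hl, dif_pos] at h
        simpa using he h
      refine ((RIn.refl ?_).tail (hadj j (by omega)).symm ?_).tail (hadj (j + 1) hj) ?_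
      · intro l hl h1 h2 h
        exact h1 (hinj _ _ (by omega) hl h).symm
      · intro l hl _ _ h
        exact (hadj l hl).ne h
      · intro l hl h1 h2 h
        exact h2 (hinj _ _ (by omega) hl h).symm
  · push Not at hd
    let u : Fin ((r + 1) ^ r + 1) := 0
    -- `ball k` is the set of vertices at distance at most `k` from `u`
    obtain ⟨ball, hb0, hbs⟩ : ∃ ball : ℕ → Set (Fin ((r + 1) ^ r + 1)), ball 0 = {u} ∧
        ∀ k, ball (k + 1) = ball k ∪ ⋃ v ∈ ball k, H.neighborSet v :=
      ⟨fun k => Nat.rec {u} (fun _ B => B ∪ ⋃ v ∈ B, H.neighborSet v) k, rfl, fun _ => rfl⟩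
    have hball : ∀ k, (ball k).ncard ≤ (r + 1) ^ k := by
      intro k
      induction k with
      | zero => simp [hb0]
      | succ k ih =>
        have h1 : (⋃ v ∈ ball k, H.neighborSet v).ncard ≤ (ball k).ncard * r := by
          have hfin : (ball k).Finite := Set.toFinite _
          have := ncard_biUnion_le hfin.toFinset (fun v => H.neighborSet v) r
            (fun v _ => (hd v).le)
          rw [← Set.ncard_eq_toFinset_card] at this
          simpa only [Set.Finite.mem_toFinset] using this
        calc (ball (k + 1)).ncard ≤ (ball k).ncard + (ball k).ncard * r :=
              by rw [hbs]; exact (Set.ncard_union_le _ _).trans (by omega)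
          _ = (ball k).ncard * (r + 1) := by ring
          _ ≤ (r + 1) ^ (k + 1) := by rw [pow_succ]; gcongr
    have hmono : ∀ k l, k ≤ l → ball k ⊆ ball l := by
      intro k l hkl
      induction l, hkl using Nat.le_induction with
      | base => exact subset_rfl
      | succ l _ ih => exact hbs l ▸ ih.trans Set.subset_union_left
    obtain ⟨v, hv⟩ : ∃ v, v ∉ ball r := by
      by_contra hcon
      push Not at hcon
      have h1 : ball r = Set.univ := Set.eq_univ_of_forall hcon
      have h2 := hball r
      rw [h1, Set.ncard_univ] at h2
      simp at h2
    obtain ⟨n, p, h0, hn, ha, -, hinj, -, -⟩ := exists_min_seq (G := H) (s := Set.univ)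
      (A := {u}) (B := {v}) ⟨u, rfl, v, rfl, hc u v⟩
    have hp : ∀ k, k ≤ n → p k ∈ ball k := by
      intro k
      induction k with
      | zero => intro _; rw [hb0]; exact h0
      | succ k ih =>
        intro hk
        rw [hbs]
        refine Or.inr ?_
        exact Set.mem_biUnion (ih (by omega)) (ha k (by omega))
    have hnr : r < n := by
      by_contra hcon
      rw [Set.mem_singleton_iff] at hn
      exact hv (hmono n r (by omega) (hn ▸ hp n le_rfl))
    refine ⟨p, fun j l hj hl h => hinj j l (by omega) (by omega) h, ?_⟩
    intro j hj
    refine RIn.step ?_ (ha j (by omega)) ?_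
    · intro l hl h1 h2 h
      exact h1 (hinj _ _ (by omega) (by omega) h).symm
    · intro l hl h1 h2 h
      exact h2 (hinj _ _ (by omega) (by omega) h).symm

section Grid

variable {V : Type}

/-- The vertex set of the `i`-th row. -/
def rowSet {N : ℕ} (len : Fin N → ℕ) (r : Fin N → ℕ → V) (i : Fin N) : Set V :=
  {x | ∃ t, t ≤ len i ∧ r i t = x}

/-- The column `Q` together with all row segments between two vertices of `Q`. -/
def colRegion {N : ℕ} (len : Fin N → ℕ) (r : Fin N → ℕ → V) (Q : Set V) : Set V :=
  {x | ∃ i t0 t t1, t0 ≤ t ∧ t ≤ t1 ∧ t1 ≤ len i ∧ r i t0 ∈ Q ∧ r i t1 ∈ Q ∧ r i t = x} ∪ Q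

/-- In a column meeting every row, one finds rows `a 0, …, a (n - 1)` such that consecutive ones
are linked in the region of the column, avoiding the other chosen rows. -/
theorem column_tuple {G : SimpleGraph V} {N n : ℕ}
    (hN : ∀ (H : SimpleGraph (Fin N)), (∀ x y, RIn H Set.univ x y) →
      ∃ a : ℕ → Fin N, (∀ j l, j < n → l < n → a j = a l → j = l) ∧
        ∀ j, j + 1 < n →
          RIn H {x | ∀ l, l < n → l ≠ j → l ≠ j + 1 → x ≠ a l} (a j) (a (j + 1)))
    {len : Fin N → ℕ} {r : Fin N → ℕ → V}
    (hadj : ∀ i t, t < len i → G.Adj (r i t) (r i (t + 1)))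
    (hinj : ∀ i j t t', t ≤ len i → t' ≤ len j → r i t = r j t' → i = j ∧ t = t')
    {Q : Set V} (hQ : ConnOn G Q) (hit : ∀ i, ∃ t, t ≤ len i ∧ r i t ∈ Q) :
    ∃ a : ℕ → Fin N, (∀ j l, j < n → l < n → a j = a l → j = l) ∧
      ∀ j, j + 1 < n → ∃ u ∈ rowSet len r (a j), ∃ v ∈ rowSet len r (a (j + 1)),
        RIn G {x | x ∈ colRegion len r Q ∧
          ∀ l, l < n → l ≠ j → l ≠ j + 1 → x ∉ rowSet len r (a l)} u v := by
  classical
  have hrow : ∀ i j x, x ∈ rowSet len r i → x ∈ rowSet len r j → i = j := by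
    rintro i j x ⟨t, ht, rfl⟩ ⟨t', ht', h⟩
    exact (hinj _ _ _ _ ht ht' h.symm).1
  -- rows joined directly inside the column
  let D : Fin N → Fin N → Prop := fun x y => ∃ p ∈ rowSet len r x, ∃ q ∈ rowSet len r y,
    RIn G {z | z ∈ Q ∧ ∀ l, l ≠ x → l ≠ y → z ∉ rowSet len r l} p q
  have hDs : ∀ x y, D x y → D y x := by
    rintro x y ⟨p, hp, q, hq, h⟩
    refine ⟨q, hq, p, hp, h.symm.mono ?_⟩
    rintro z ⟨h1, h2⟩
    exact ⟨h1, fun l h3 h4 => h2 l h4 h3⟩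
  let H : SimpleGraph (Fin N) := SimpleGraph.fromRel D
  have hH : ∀ x y, H.Adj x y → D x y := by
    intro x y h
    rw [SimpleGraph.fromRel_adj] at h
    rcases h.2 with h | h
    · exact h
    · exact hDs _ _ h
  have hHc : ∀ x y, RIn H Set.univ x y := by
    intro i i'
    obtain ⟨t, ht, hu⟩ := hit i
    obtain ⟨t', ht', hv⟩ := hit i'
    have key := (hQ _ hu _ hv).ind (P := fun x => ∃ l, RIn H Set.univ i l ∧
      ∃ u ∈ rowSet len r l, RIn G {z | z ∈ Q ∧ ∀ l', l' ≠ l → z ∉ rowSet len r l'} u x)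
      ⟨i, RIn.refl trivial, _, ⟨t, ht, rfl⟩, RIn.refl ⟨hu, fun l hl hh =>
        hl (hrow _ _ _ hh ⟨t, ht, rfl⟩)⟩⟩ ?_
    · obtain ⟨l, h1, u, hu', h2⟩ := key
      have : i' = l := by
        by_contra hne
        exact h2.right.2 i' hne ⟨t', ht', rfl⟩
      rw [this]; exact h1
    · rintro x y hx ⟨l, h1, u, hu', h2⟩ hxy hy
      by_cases hyr : ∀ l', l' ≠ l → y ∉ rowSet len r l'
      · exact ⟨l, h1, u, hu', h2.tail hxy ⟨hy, hyr⟩⟩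
      · push Not at hyr
        obtain ⟨l', hl', hyl⟩ := hyr
        refine ⟨l', h1.tail ?_ trivial, y, hyl, RIn.refl ⟨hy, fun l'' h3 h4 =>
          h3 (hrow _ _ _ h4 hyl)⟩⟩
        rw [SimpleGraph.fromRel_adj]
        refine ⟨hl'.symm, Or.inl ⟨u, hu', y, hyl, (h2.mono ?_).tail hxy ?_⟩⟩
        · rintro z ⟨h3, h4⟩
          exact ⟨h3, fun l'' h5 _ => h4 l'' h5⟩
        · exact ⟨hy, fun l'' _ h5 h6 => h5 (hrow _ _ _ h6 hyl)⟩
  obtain ⟨a, ha, hw⟩ := hN H hHc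
  refine ⟨a, ha, fun j hj => ?_⟩
  set S : Set V := {x | x ∈ colRegion len r Q ∧
    ∀ l, l < n → l ≠ j → l ≠ j + 1 → x ∉ rowSet len r (a l)} with hS
  have hseg : ∀ i, (∀ l, l < n → l ≠ j → l ≠ j + 1 → i ≠ a l) → ∀ t t', t ≤ t' → t' ≤ len i →
      r i t ∈ Q → r i t' ∈ Q → RIn G S (r i t) (r i t') := by
    intro i hi t t' htt ht' h1 h2
    refine RIn.of_seq (r i) htt ?_ (fun k _ h4 => hadj i k (by omega))
    intro k h3 h4
    refine ⟨Or.inl ⟨i, t, k, t', h3, h4, ht', h1, h2, rfl⟩, fun l h5 h6 h7 h8 => ?_⟩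
    exact hi l h5 h6 h7 (hrow _ _ _ ⟨k, by omega, rfl⟩ h8)
  have hseg' : ∀ i, (∀ l, l < n → l ≠ j → l ≠ j + 1 → i ≠ a l) → ∀ p q,
      p ∈ rowSet len r i → q ∈ rowSet len r i → p ∈ Q → q ∈ Q → RIn G S p q := by
    rintro i hi _ _ ⟨t, ht, rfl⟩ ⟨t', ht', rfl⟩ h1 h2
    rcases le_total t t' with h | h
    · exact hseg i hi t t' h ht' h1 h2
    · exact (hseg i hi t' t h ht h2 h1).symm
  obtain ⟨t, ht, hu⟩ := hit (a j)
  obtain ⟨t', ht', hv⟩ := hit (a (j + 1))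
  refine ⟨_, ⟨t, ht, rfl⟩, _, ⟨t', ht', rfl⟩, ?_⟩
  have key := (hw j hj).ind (P := fun x => ∀ w ∈ rowSet len r x, w ∈ Q → RIn G S (r (a j) t) w)
    (fun w h1 h2 => hseg' _ (hw j hj).left _ _ ⟨t, ht, rfl⟩ h1 hu h2) ?_
  · exact key _ ⟨t', ht', rfl⟩ hv
  · intro x y hx ih hxy hy w hw1 hw2
    obtain ⟨p, hp, q, hq, hpq⟩ := hH x y hxy
    refine ((ih p hp hpq.left.1).trans (hpq.mono ?_)).trans
      (hseg' y hy _ _ hq hw1 hpq.right.1 hw2)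
    rintro z ⟨h1, h2⟩
    refine ⟨Or.inr h1, fun l h3 h4 h5 => h2 _ ?_ ?_⟩
    · exact fun h => hx.right l h3 h4 h5 h.symm
    · exact fun h => hy l h3 h4 h5 h.symm

/-- A model of the `n × n` grid: pairwise disjoint connected sets `E b i` (column `b`, row `i`),
adjacent whenever the corresponding vertices of the grid are. Every row contains a vertex of `T`. -/
structure GridM (G : SimpleGraph V) (n : ℕ) (T : Set V) (E : ℕ → ℕ → Set V) : Prop where
  conn : ∀ b i, b < n → i < n → ConnOn G (E b i)
  ne : ∀ b i, b < n → i < n → (E b i).Nonempty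
  disj : ∀ b i b' i', b < n → i < n → b' < n → i' < n → (b ≠ b' ∨ i ≠ i') →
    Disjoint (E b i) (E b' i')
  horiz : ∀ b i, b + 1 < n → i < n → ∃ x ∈ E b i, ∃ y ∈ E (b + 1) i, G.Adj x y
  vert : ∀ b i, b < n → i + 1 < n → ∃ x ∈ E b i, ∃ y ∈ E b (i + 1), G.Adj x y
  root : ∀ i, i < n → ∃ b, b < n ∧ ∃ t ∈ E b i, t ∈ T

/-- A large crossing family contains a grid model: by pigeonhole many columns connect the same
`n` rows in the same order, and `n + 1` consecutive such columns make up one column of the grid. -/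
theorem crossing_grid (n : ℕ) : ∃ N d : ℕ, 1 ≤ N ∧ ∀ (V : Type) (G : SimpleGraph V) (A : Set V),
    CrossingIn G A N d → ∃ E, GridM G n A E := by
  classical
  obtain ⟨N, hN1, hN⟩ := exists_tuple n
  refine ⟨N, N ^ n * (n * (n + 1)) + 1, hN1, ?_⟩
  intro V G A ⟨len, r, Q, hadj, hinj, hstart, hQ, hQd, hhit, hord⟩
  have hrow : ∀ i j x, x ∈ rowSet len r i → x ∈ rowSet len r j → i = j := by
    rintro i j x ⟨t, ht, rfl⟩ ⟨t', ht', h⟩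
    exact (hinj _ _ _ _ ht ht' h.symm).1
  have hcol := fun c => column_tuple hN hadj hinj (hQ c) (hhit c)
  choose a0 ha0 hl0 using hcol
  -- many columns with the same tuple of rows
  obtain ⟨a1, ha1⟩ := Fintype.exists_lt_card_fiber_of_mul_lt_card
    (fun c => fun j : Fin n => a0 c j) (n := n * (n + 1)) (by simp)
  set F := Finset.univ.filter
    (fun c : Fin (N ^ n * (n * (n + 1)) + 1) => (fun j : Fin n => a0 c j) = a1) with hF
  obtain ⟨cs, hcs⟩ : F.Nonempty := Finset.card_pos.1 (by omega)
  set a := a0 cs with ha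
  have hFa : ∀ c ∈ F, ∀ j, j < n → a0 c j = a j := by
    intro c hc j hj
    have h1 := (Finset.mem_filter.1 hc).2
    have h2 := (Finset.mem_filter.1 hcs).2
    exact congrFun (h1.trans h2.symm) ⟨j, hj⟩
  have hainj : ∀ j l, j < n → l < n → a j = a l → j = l := ha0 cs
  let col : ℕ → ℕ → Fin (N ^ n * (n * (n + 1)) + 1) := fun b j =>
    if h : b * (n + 1) + j < F.card then F.orderEmbOfFin rfl ⟨b * (n + 1) + j, h⟩ else cs
  have hidx : ∀ b j, b < n → j ≤ n → b * (n + 1) + j < F.card := by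
    intro b j hb hj
    have : b * (n + 1) + (n + 1) ≤ n * (n + 1) := by
      rw [← Nat.succ_mul]; exact Nat.mul_le_mul_right _ hb
    omega
  have hcolF : ∀ b j, col b j ∈ F := by
    intro b j
    by_cases h : b * (n + 1) + j < F.card
    · simp only [col, h, dif_pos]
      exact Finset.orderEmbOfFin_mem _ _ _
    · simp only [col, h, dif_neg, not_false_eq_true]; exact hcs
  have hcolt : ∀ b j b' j', b < n → j ≤ n → b' < n → j' ≤ n → (b < b' ∨ (b = b' ∧ j < j')) →
      col b j < col b' j' := by
    intro b j b' j' hb hj hb' hj' h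
    have h1 := hidx b j hb hj
    have h2 := hidx b' j' hb' hj'
    simp only [col, h1, h2, dif_pos]
    rw [OrderEmbedding.lt_iff_lt, Fin.mk_lt_mk]
    rcases h with h | ⟨rfl, h⟩
    · have : b * (n + 1) + (n + 1) ≤ b' * (n + 1) := by
        rw [← Nat.succ_mul]; exact Nat.mul_le_mul_right _ h
      omega
    · omega
  -- position of a row vertex lying in the region of a column
  have hreg : ∀ c i t, t ≤ len i → r i t ∈ colRegion len r (Q c) →
      ∃ t0 t1, t0 ≤ t ∧ t ≤ t1 ∧ t1 ≤ len i ∧ r i t0 ∈ Q c ∧ r i t1 ∈ Q c := by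
    rintro c i t ht (⟨i', t0, t', t1, h1, h2, h3, h4, h5, h6⟩ | h)
    · obtain ⟨rfl, rfl⟩ := hinj _ _ _ _ (h2.trans h3) ht h6
      exact ⟨t0, t1, h1, h2, h3, h4, h5⟩
    · exact ⟨t, t, le_rfl, le_rfl, ht, h, h⟩
  have hafter : ∀ c c', c < c' → ∀ i t t', t ≤ len i → t' ≤ len i →
      r i t ∈ colRegion len r (Q c) → r i t' ∈ colRegion len r (Q c') → t < t' := by
    intro c c' hcc i t t' ht ht' h1 h2
    obtain ⟨t0, t1, h3, h4, h5, h6, h7⟩ := hreg c i t ht h1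
    obtain ⟨t0', t1', h3', h4', h5', h6', h7'⟩ := hreg c' i t' ht' h2
    have := hord c c' hcc i t1 t0' h5 (by omega) h7 h6'
    omega
  have hregd' : ∀ c c', c < c' → ∀ x, x ∈ colRegion len r (Q c) →
      x ∈ colRegion len r (Q c') → False := by
    intro c c' hcc x h1 h2
    have key : ∀ i t, t ≤ len i → r i t = x → False := by
      rintro i t ht rfl
      exact lt_irrefl t (hafter c c' hcc i t t ht ht h1 h2)
    rcases h1 with ⟨i', t0, t', t1, h1, h2, h3, h4, h5, h6⟩ | h1
    · exact key i' t' (h2.trans h3) h6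
    · rcases h2 with ⟨i', t0, t', t1, h1, h2, h3, h4, h5, h6⟩ | h2
      · exact key i' t' (h2.trans h3) h6
      · exact Set.disjoint_left.1 (hQd c c' hcc.ne) h1 h2
  have hregd : ∀ c c', c ≠ c' → ∀ x, x ∈ colRegion len r (Q c) →
      x ∈ colRegion len r (Q c') → False := by
    intro c c' hcc x h1 h2
    rcases lt_or_gt_of_ne hcc with h | h
    · exact hregd' c c' h x h1 h2
    · exact hregd' c' c h x h2 h1
  -- the link between rows `j` and `j + 1` in block `b`
  have hlink : ∀ b j, ∃ (m : ℕ) (p : ℕ → V), j + 1 < n → b < n →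
      p 0 ∈ rowSet len r (a j) ∧ p m ∈ rowSet len r (a (j + 1)) ∧
      (∀ k, k < m → G.Adj (p k) (p (k + 1))) ∧
      (∀ k, k ≤ m → p k ∈ colRegion len r (Q (col b (j + 1))) ∧
        ∀ l, l < n → l ≠ j → l ≠ j + 1 → p k ∉ rowSet len r (a l)) ∧
      (∀ k, k ≤ m → p k ∈ rowSet len r (a j) → k = 0) ∧
      (∀ k, k ≤ m → p k ∈ rowSet len r (a (j + 1)) → k = m) := by
    intro b j
    by_cases hj : j + 1 < n
    · have hc := hcolF b (j + 1)
      obtain ⟨u, hu, v, hv, huv⟩ := hl0 (col b (j + 1)) j hj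
      rw [hFa _ hc j (by omega)] at hu
      rw [hFa _ hc (j + 1) hj] at hv
      obtain ⟨m, p, h0, hm, h1, h2, -, h3, h4⟩ := exists_min_seq ⟨u, hu, v, hv, huv⟩
      refine ⟨m, p, fun _ _ => ⟨h0, hm, h1, fun k hk => ⟨(h2 k hk).1, fun l hl h5 h6 => ?_⟩,
        h3, h4⟩⟩
      have := (h2 k hk).2 l hl h5 h6
      rwa [hFa _ hc l hl] at this
    · exact ⟨0, fun _ => r (a 0) 0, fun h => absurd h hj⟩
  choose m p hp using hlink
  -- block `b` of row `j` starts at a vertex of the column `col b 0`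
  choose τ hτ using fun b j => hhit (col b 0) (a j)
  let ct : ℕ → ℕ → ℕ := fun b j =>
    if b = 0 then 0 else if b < n then τ b j else len (a j) + 1
  have hct0 : ∀ j, ct 0 j = 0 := fun j => if_pos rfl
  have hctm : ∀ b j, b ≠ 0 → b < n → ct b j = τ b j := fun b j h1 h2 => by
    simp only [ct]; rw [if_neg h1, if_pos h2]
  have hcte : ∀ b j, b ≠ 0 → ¬ b < n → ct b j = len (a j) + 1 := fun b j h1 h2 => by
    simp only [ct]; rw [if_neg h1, if_neg h2]
  have hctb : ∀ b j, b < n → ct b j ≤ τ b j := fun b j h => by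
    by_cases hb : b = 0
    · subst hb; rw [hct0]; omega
    · exact (hctm b j hb h).le
  have hsub : ∀ c, Q c ⊆ colRegion len r (Q c) := fun c => Set.subset_union_right
  have hctle : ∀ b j, ct b j ≤ len (a j) + 1 := by
    intro b j
    have := (hτ b j).1
    simp only [ct]; split_ifs <;> omega
  have hctlt : ∀ b j, b < n → ct b j < ct (b + 1) j := by
    intro b j hb
    have h1 := (hτ b j)
    have h2 := (hτ (b + 1) j)
    by_cases hb1 : b + 1 < n
    · have h3 := hord _ _ (hcolt b 0 (b + 1) 0 hb (by omega) hb1 (by omega) (by omega)) (a j)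
        _ _ h1.1 h2.1 h1.2 h2.2
      rw [hctm (b + 1) j (by omega) hb1]
      exact (hctb b j hb).trans_lt h3
    · rw [hcte (b + 1) j (by omega) hb1]
      have := hctb b j hb
      omega
  have hctmono : ∀ j b b', b ≤ b' → b' ≤ n → ct b j ≤ ct b' j := by
    intro j b b' hbb hb'
    induction b', hbb using Nat.le_induction with
    | base => exact le_rfl
    | succ b' h ih => exact (ih (by omega)).trans (hctlt b' j (by omega)).le
  have hin : ∀ b j l, b < n → j < n → 1 ≤ l → l ≤ n → ∀ t, t ≤ len (a j) →
      r (a j) t ∈ colRegion len r (Q (col b l)) → ct b j ≤ t ∧ t < ct (b + 1) j := by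
    intro b j l hb hj hl1 hl t ht hx
    have h1 := (hτ b j)
    have h2 := (hτ (b + 1) j)
    have h3 := hafter _ _ (hcolt b 0 b l hb (by omega) hb hl (by omega)) (a j) _ _ h1.1 ht
      (hsub _ h1.2) hx
    constructor
    · exact (hctb b j hb).trans h3.le
    · by_cases hb1 : b + 1 < n
      · have h4 := hafter _ _ (hcolt b l (b + 1) 0 hb hl hb1 (by omega) (by omega)) (a j) _ _ ht
          h2.1 hx (hsub _ h2.2)
        rw [hctm (b + 1) j (by omega) hb1]
        exact h4
      · rw [hcte (b + 1) j (by omega) hb1]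
        omega
  let seg : ℕ → ℕ → Set V := fun b j => {x | ∃ k, ct b j ≤ k ∧ k < ct (b + 1) j ∧ r (a j) k = x}
  let lnk : ℕ → ℕ → Set V := fun b j => {x | ∃ k, 0 ≤ k ∧ k < m b j ∧ p b j k = x}
  let E : ℕ → ℕ → Set V := fun b j => seg b j ∪ {x | j + 1 < n ∧ x ∈ lnk b j}
  have hsegrow : ∀ b j x, x ∈ seg b j → x ∈ rowSet len r (a j) := by
    rintro b j x ⟨k, h1, h2, rfl⟩
    have := hctle (b + 1) j
    exact ⟨k, by omega, rfl⟩
  have hp0 : ∀ b j, j + 1 < n → b < n → p b j 0 ∈ seg b j := by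
    intro b j hj hb
    obtain ⟨h0, hm, h1, h2, h3, h4⟩ := hp b j hj hb
    obtain ⟨t, ht, hrt⟩ := h0
    have := (h2 0 (by omega)).1
    rw [← hrt] at this ⊢
    obtain ⟨h5, h6⟩ := hin b j (j + 1) hb (by omega) (by omega) (by omega) t ht this
    exact ⟨t, h5, h6, rfl⟩
  have hpm : ∀ b j, j + 1 < n → b < n → p b j (m b j) ∈ seg b (j + 1) := by
    intro b j hj hb
    obtain ⟨h0, hm, h1, h2, h3, h4⟩ := hp b j hj hb
    obtain ⟨t, ht, hrt⟩ := hm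
    have := (h2 _ le_rfl).1
    rw [← hrt] at this ⊢
    obtain ⟨h5, h6⟩ := hin b (j + 1) (j + 1) hb (by omega) (by omega) (by omega) t ht this
    exact ⟨t, h5, h6, rfl⟩
  have hmpos : ∀ b j, j + 1 < n → b < n → 0 < m b j := by
    intro b j hj hb
    by_contra hcon
    have h1 := hsegrow _ _ _ (hp0 b j hj hb)
    have h2 := hsegrow _ _ _ (hpm b j hj hb)
    rw [show m b j = 0 by omega] at h2
    have := hainj _ _ (by omega) (by omega) (hrow _ _ _ h1 h2)
    omega
  have hE : ∀ b j x, b < n → j < n → x ∈ E b j → x ∈ seg b j ∨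
      (x ∈ colRegion len r (Q (col b (j + 1))) ∧ j + 1 < n ∧
        ∀ l, l < n → x ∉ rowSet len r (a l)) := by
    rintro b j x hb hj (h | ⟨hj1, k, -, hk, rfl⟩)
    · exact Or.inl h
    · obtain ⟨h0, hm, h1, h2, h3, h4⟩ := hp b j hj1 hb
      by_cases hk0 : k = 0
      · subst hk0; exact Or.inl (hp0 b j hj1 hb)
      · refine Or.inr ⟨(h2 k hk.le).1, hj1, fun l hl hx => ?_⟩
        by_cases hlj : l = j
        · subst hlj; exact hk0 (h3 k hk.le hx)
        · by_cases hlj' : l = j + 1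
          · subst hlj'; exact hk.ne (h4 k hk.le hx)
          · exact (h2 k hk.le).2 l hl hlj hlj' hx
  have hsegne : ∀ b j, b < n → r (a j) (ct b j) ∈ seg b j := by
    intro b j hb
    exact ⟨_, le_rfl, hctlt b j hb, rfl⟩
  refine ⟨E, ⟨?_, ?_, ?_, ?_, ?_, ?_⟩⟩
  · intro b j hb hj
    have hs : ConnOn G (seg b j) := connOn_seq _ _ _ (fun k _ h2 => hadj _ _ (by
      have := hctle (b + 1) j
      omega))
    by_cases hj1 : j + 1 < n
    · have hl : ConnOn G (lnk b j) := connOn_seq _ _ _ (fun k _ h2 =>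
        (hp b j hj1 hb).2.2.1 k (by omega))
      have : E b j = seg b j ∪ lnk b j := by ext x; simp [E, hj1]
      rw [this]
      exact hs.union hl ⟨_, hp0 b j hj1 hb, _, ⟨0, le_rfl, hmpos b j hj1 hb, rfl⟩, Or.inl rfl⟩
    · have : E b j = seg b j := by ext x; simp [E, hj1]
      rw [this]; exact hs
  · intro b j hb hj
    exact ⟨_, Or.inl (hsegne b j hb)⟩
  · intro b j b' j' hb hj hb' hj' hne
    rw [Set.disjoint_left]
    intro x hx hx'
    rcases hE b j x hb hj hx with h1 | ⟨h1, h2, h3⟩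
    · rcases hE b' j' x hb' hj' hx' with h1' | ⟨h1', h2', h3'⟩
      · have hjj := hainj _ _ hj hj' (hrow _ _ _ (hsegrow _ _ _ h1) (hsegrow _ _ _ h1'))
        subst hjj
        obtain ⟨k, h2, h3, h4⟩ := h1
        obtain ⟨k', h2', h3', h4'⟩ := h1'
        have h5 := hctle (b + 1) j
        have h6 := hctle (b' + 1) j
        have hkk := (hinj _ _ k k' (by omega) (by omega) (h4.trans h4'.symm)).2
        rcases hne with hne | hne
        · rcases lt_or_gt_of_ne hne with h | h
          · have := hctmono j (b + 1) b' h hb'.le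
            omega
          · have := hctmono j (b' + 1) b h hb.le
            omega
        · exact hne rfl
      · exact h3' j hj (hsegrow _ _ _ h1)
    · rcases hE b' j' x hb' hj' hx' with h1' | ⟨h1', h2', h3'⟩
      · exact h3 j' hj' (hsegrow _ _ _ h1')
      · refine hregd _ _ ?_ x h1 h1'
        rcases lt_trichotomy b b' with h | h | h
        · exact (hcolt b (j + 1) b' (j' + 1) hb h2.le hb' h2'.le (Or.inl h)).ne
        · subst h
          rcases lt_or_gt_of_ne (show j ≠ j' by simpa using hne) with h | h
          · exact (hcolt b (j + 1) b (j' + 1) hb h2.le hb' h2'.le (by omega)).ne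
          · exact (hcolt b (j' + 1) b (j + 1) hb h2'.le hb' h2.le (by omega)).ne'
        · exact (hcolt b' (j' + 1) b (j + 1) hb' h2'.le hb h2.le (Or.inl h)).ne'
  · intro b j hb hj
    have h1 := hctlt b j (by omega)
    have h2 := hctle (b + 1) j
    have h3 := hctlt (b + 1) j hb
    have h4 := hctle (b + 1 + 1) j
    refine ⟨r (a j) (ct (b + 1) j - 1), Or.inl ⟨_, by omega, by omega, rfl⟩, _,
      Or.inl (hsegne (b + 1) j hb), ?_⟩
    have := hadj (a j) (ct (b + 1) j - 1) (by omega)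
    rwa [show ct (b + 1) j - 1 + 1 = ct (b + 1) j by omega] at this
  · intro b j hb hj
    have h1 := hmpos b j hj hb
    refine ⟨p b j (m b j - 1), Or.inr ⟨hj, _, by omega, by omega, rfl⟩, p b j (m b j),
      Or.inl (hpm b j hj hb), ?_⟩
    have := (hp b j hj hb).2.2.1 (m b j - 1) (by omega)
    rwa [show m b j - 1 + 1 = m b j by omega] at this
  · intro j hj
    refine ⟨0, by omega, r (a j) 0, Or.inl ⟨0, ?_, ?_, rfl⟩, hstart _⟩
    · simp [ct]
    · have := hctlt 0 j (by omega)
      omega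

end Grid

/-! ### Grids from well-linked sets -/

section GridExists

/-- A well-linked set of sufficiently many vertices yields a grid model each of whose rows
contains a vertex of a set `X`, any subset of which can be linked to `S`. Either two linkages
between parts of a mesh cross, or the parts form a complete minor, which contains the grid. -/
theorem exists_gridM (n : ℕ) (hn : 1 ≤ n) : ∃ h : ℕ, 1 ≤ h ∧ ∀ (V : Type) [Finite V]
    (G : SimpleGraph V) (S : Set V), WL G S → 8 * h + 1 ≤ S.ncard →
    ∃ X E, GridM G n X E ∧ ∀ Y k, Y ⊆ X → Y.ncard = k → Nonempty (Lk G Set.univ S Y k) := by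
  classical
  obtain ⟨N, d, hN, hgrid⟩ := crossing_grid n
  obtain ⟨k, hk⟩ := demands N d hN (n * n * (n * n))
  have hnn : 1 ≤ n * n := Nat.mul_pos hn hn
  have hh : 1 ≤ 3 * (k + 1) * (n * n) := Nat.mul_pos (by omega) hnn
  refine ⟨3 * (k + 1) * (n * n), hh, ?_⟩
  intro V _ G S hS hSc
  obtain ⟨F, U, X, C, hM, hX, hML⟩ := exists_mesh hS (h := 3 * (k + 1) * (n * n)) hh hSc
  have hlinkS : ∀ Y k, Y ⊆ X → Y.ncard = k → Nonempty (Lk G Set.univ S Y k) :=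
    fun Y k hY hYk => hM.linkS hS hSc hML hY hYk
  suffices h : ∃ E, GridM G n X E by
    obtain ⟨E, hE⟩ := h
    exact ⟨X, E, hE, hlinkS⟩
  obtain ⟨A, hAU, hAc, hAX, hAd⟩ := split_many (X := X) (k := k + 1) (by omega) hM.deg3 (n * n) U
    hM.conn (by rw [Set.inter_eq_right.2 hM.XU, hX])
  choose B hBA hBk using fun i => exists_sub_ncard ((Nat.le_succ k).trans (hAX i))
  have hBX : ∀ i, B i ⊆ X := fun i => (hBA i).trans Set.inter_subset_right
  have hBA' : ∀ i, B i ⊆ A i := fun i => (hBA i).trans Set.inter_subset_left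
  let e := (finProdFinEquiv (m := n * n) (n := n * n)).symm
  rcases hk V G C (fun l => C ∪ (B (e l).1 ∪ B (e l).2)) (fun l => B (e l).1)
    (fun l => B (e l).2) (fun l => Set.subset_union_left) (fun l => subset_rfl)
    (fun l => hM.link hS hSc hML (hBX _) (hBX _) (hBk _) (hBk _)) with h | ⟨l, h⟩
  swap
  · obtain ⟨E, hE⟩ := hgrid V G _ h
    refine ⟨E, { hE with root := fun i hi => ?_ }⟩
    obtain ⟨b, hb, t, ht, htB⟩ := hE.root i hi
    exact ⟨b, hb, t, ht, hBX _ htB⟩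
  -- all demands can be met disjointly: a model of the complete graph on `n * n` vertices
  obtain ⟨P, hPs, hPd, hPr⟩ := h
  have hpath := fun i j => exists_min_seq (G := G) (s := P (e.symm (i, j))) (A := A i) (B := A j)
    (by
      obtain ⟨a, ha, b, hb, hab⟩ := hPr (e.symm (i, j))
      simp only [Equiv.apply_symm_apply] at ha hb
      exact ⟨a, hBA' _ ha, b, hBA' _ hb, hab⟩)
  choose len r h0 hlast hadj hmem hinj honlyA honlyB using hpath
  have hmem' : ∀ i j t, t ≤ len i j → r i j t ∈ C ∪ (B i ∪ B j) := by
    intro i j t ht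
    have := hPs _ (hmem i j t ht)
    simpa only [Equiv.apply_symm_apply] using this
  have hne : ∀ i, (A i ∩ X).Nonempty := by
    intro i
    have h1 := hAX i
    by_contra hcon
    rw [Set.not_nonempty_iff_eq_empty] at hcon
    rw [hcon, Set.ncard_empty] at h1
    omega
  have hpos : ∀ i j, i ≠ j → 0 < len i j := by
    intro i j hij
    by_contra hcon
    have h1 := hlast i j
    rw [show len i j = 0 by omega] at h1
    exact Set.disjoint_left.1 (hAd i j hij) (h0 i j) h1
  let μ : Fin (n * n) → Set V := fun i =>
    A i ∪ {x | ∃ j, j ≠ i ∧ ∃ t, t < len i j ∧ r i j t = x}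
  have hμc : ∀ i, ConnOn G (μ i) := by
    intro i
    obtain ⟨c, hc, -⟩ := hne i
    refine connOn_of_center c ?_
    have hA : ∀ x ∈ A i, RIn G (μ i) c x := fun x hx =>
      (((hAc i) c hc x hx).monoG hM.le).mono Set.subset_union_left
    rintro x (hx | ⟨j, hj, t, ht, rfl⟩)
    · exact hA x hx
    · refine (hA _ (h0 i j)).trans (RIn.of_seq (r i j) (Nat.zero_le t) ?_ ?_)
      · exact fun k _ h2 => Or.inr ⟨j, hj, k, by omega, rfl⟩
      · exact fun k _ h2 => hadj i j k (by omega)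
  have hμd1 : ∀ i i', i ≠ i' → ∀ x ∈ A i, ∀ j, j ≠ i' → ∀ t, t < len i' j → r i' j t = x →
      False := by
    rintro i i' hii x hx j hj t ht rfl
    rcases hmem' i' j t ht.le with h | h | h
    · exact Set.disjoint_left.1 hM.disj (hAU i hx) h
    · exact Set.disjoint_left.1 (hAd i i' hii) hx (hBA' _ h)
    · exact ht.ne (honlyB i' j t ht.le (hBA' _ h))
  have hμd : ∀ i i', i ≠ i' → Disjoint (μ i) (μ i') := by
    intro i i' hii
    rw [Set.disjoint_left]
    rintro x (hx | ⟨j, hj, t, ht, hx⟩) (hx' | ⟨j', hj', t', ht', hx'⟩)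
    · exact Set.disjoint_left.1 (hAd i i' hii) hx hx'
    · exact hμd1 i i' hii x hx j' hj' t' ht' hx'
    · exact hμd1 i' i hii.symm x hx' j hj t ht hx
    · refine Set.disjoint_left.1 (hPd (e.symm (i, j)) (e.symm (i', j')) ?_)
        (hx ▸ hmem i j t ht.le) (hx' ▸ hmem i' j' t' ht'.le)
      intro h
      exact hii (Prod.ext_iff.1 (e.symm.injective h)).1
  have hμa : ∀ i j, i ≠ j → ∃ x ∈ μ i, ∃ y ∈ μ j, G.Adj x y := by
    intro i j hij
    have hp := hpos i j hij
    refine ⟨r i j (len i j - 1), Or.inr ⟨j, hij.symm, _, by omega, rfl⟩, r i j (len i j),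
      Or.inl (hlast i j), ?_⟩
    have := hadj i j (len i j - 1) (by omega)
    rwa [show len i j - 1 + 1 = len i j by omega] at this
  let ix : ℕ → ℕ → Fin (n * n) := fun b i =>
    if h : b < n ∧ i < n then finProdFinEquiv (⟨b, h.1⟩, ⟨i, h.2⟩) else ⟨0, hnn⟩
  have hix : ∀ b i b' i', b < n → i < n → b' < n → i' < n → (b ≠ b' ∨ i ≠ i') →
      ix b i ≠ ix b' i' := by
    intro b i b' i' hb hi hb' hi' h heq
    simp only [ix, hb, hi, hb', hi', and_self, dif_pos] at heq
    have := finProdFinEquiv.injective heq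
    simp only [Prod.mk.injEq, Fin.mk.injEq] at this
    omega
  refine ⟨fun b i => μ (ix b i), ⟨fun b i _ _ => hμc _, ?_, ?_, ?_, ?_, ?_⟩⟩
  · intro b i _ _
    obtain ⟨x, hx, -⟩ := hne (ix b i)
    exact ⟨x, Or.inl hx⟩
  · intro b i b' i' hb hi hb' hi' h
    exact hμd _ _ (hix b i b' i' hb hi hb' hi' h)
  · intro b i hb hi
    exact hμa _ _ (hix _ _ _ _ (by omega) hi hb hi (Or.inl (by omega)))
  · intro b i hb hi
    exact hμa _ _ (hix _ _ _ _ hb (by omega) hb hi (Or.inr (by omega)))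
  · intro i hi
    obtain ⟨x, hx, hxX⟩ := hne (ix 0 i)
    exact ⟨0, by omega, x, Or.inl hx, hxX⟩

end GridExists

/-! ### Rooting the grid at the well-linked set -/

section Rooting

variable {V : Type}

theorem connOn_chain {G : SimpleGraph V} (A : ℕ → Set V) (i j : ℕ)
    (hc : ∀ k, i ≤ k → k < j → ConnOn G (A k))
    (ha : ∀ k, i ≤ k → k + 1 < j → ∃ x ∈ A k, ∃ y ∈ A (k + 1), G.Adj x y) :
    ConnOn G {x | ∃ k, i ≤ k ∧ k < j ∧ x ∈ A k} := by
  induction j with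
  | zero => rintro x ⟨k, _, hk, _⟩; omega
  | succ j ih =>
    by_cases hij : i < j
    · have h1 := ih (fun k h1 h2 => hc k h1 (by omega)) (fun k h1 h2 => ha k h1 (by omega))
      obtain ⟨x, hx, y, hy, hxy⟩ := ha (j - 1) (by omega) (by omega)
      rw [show j - 1 + 1 = j by omega] at hy
      have h2 := h1.union (hc j hij.le (by omega))
        ⟨x, ⟨j - 1, by omega, by omega, hx⟩, y, hy, Or.inr hxy⟩
      convert h2 using 1
      ext z
      constructor
      · rintro ⟨k, h3, h4, h5⟩
        rcases (show k < j ∨ k = j by omega) with h | rfl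
        · exact Or.inl ⟨k, h3, h, h5⟩
        · exact Or.inr h5
      · rintro (⟨k, h3, h4, h5⟩ | h5)
        · exact ⟨k, h3, by omega, h5⟩
        · exact ⟨j, hij.le, by omega, h5⟩
    · by_cases hij' : i = j
      · subst hij'
        convert hc i le_rfl (by omega) using 1
        ext z
        constructor
        · rintro ⟨k, h3, h4, h5⟩
          rwa [show k = i by omega] at h5
        · exact fun h => ⟨i, le_rfl, by omega, h⟩
      · rintro x ⟨k, _, hk, _⟩; omega

/-- Row `i` of a grid model. -/
def gridRow (n : ℕ) (E : ℕ → ℕ → Set V) (i : ℕ) : Set V := {x | ∃ b, 0 ≤ b ∧ b < n ∧ x ∈ E b i}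

/-- Column `b` of a grid model. -/
def gridCol (n : ℕ) (E : ℕ → ℕ → Set V) (b : ℕ) : Set V := {x | ∃ i, 0 ≤ i ∧ i < n ∧ x ∈ E b i}

theorem GridM.row_disj {G : SimpleGraph V} {n : ℕ} {T : Set V} {E : ℕ → ℕ → Set V}
    (h : GridM G n T E) {i i' : ℕ} (hi : i < n) (hi' : i' < n) (hne : i ≠ i') :
    Disjoint (gridRow n E i) (gridRow n E i') := by
  rw [Set.disjoint_left]
  rintro x ⟨b, _, hb, hx⟩ ⟨b', _, hb', hx'⟩
  exact Set.disjoint_left.1 (h.disj b i b' i' hb hi hb' hi' (Or.inr hne)) hx hx'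

theorem GridM.col_disj {G : SimpleGraph V} {n : ℕ} {T : Set V} {E : ℕ → ℕ → Set V}
    (h : GridM G n T E) {b b' : ℕ} (hb : b < n) (hb' : b' < n) (hne : b ≠ b') :
    Disjoint (gridCol n E b) (gridCol n E b') := by
  rw [Set.disjoint_left]
  rintro x ⟨i, _, hi, hx⟩ ⟨i', _, hi', hx'⟩
  exact Set.disjoint_left.1 (h.disj b i b' i' hb hi hb' hi' (Or.inl hne)) hx hx'

/-- Inside a grid model there is a subgraph `W` with only one edge between adjacent branch sets.
Hence a set of consecutive rows `i0, …, i1` can be entered in `W` from the outside only by the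
edges `vx b (i0 - 1) – vy b (i0 - 1)` and `vx b i1 – vy b i1`. -/
theorem GridM.exists_frame {G : SimpleGraph V} {n : ℕ} {T : Set V} {E : ℕ → ℕ → Set V}
    (h : GridM G n T E) (hn : 0 < n) : ∃ (W : SimpleGraph V) (vx vy : ℕ → ℕ → V), W ≤ G ∧
      (∀ i, i < n → ConnOn W (gridRow n E i)) ∧ (∀ b, b < n → ConnOn W (gridCol n E b)) ∧
      (∀ b i, b < n → i + 1 < n → vx b i ∈ E b i ∧ vy b i ∈ E b (i + 1)) ∧
      ∀ x y b i i0 i1, W.Adj x y → b < n → i < n → y ∈ E b i → i0 ≤ i → i ≤ i1 → i1 < n →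
        (∀ i', i0 ≤ i' → i' ≤ i1 → x ∉ gridRow n E i') →
        (1 ≤ i0 ∧ i = i0 ∧ x = vx b (i0 - 1) ∧ y = vy b (i0 - 1)) ∨
        (i1 + 1 < n ∧ i = i1 ∧ y = vx b i1 ∧ x = vy b i1) := by
  classical
  obtain ⟨x0, -⟩ := h.ne 0 0 hn hn
  have hv : ∀ b i, ∃ x y : V, b < n → i + 1 < n → x ∈ E b i ∧ y ∈ E b (i + 1) ∧ G.Adj x y := by
    intro b i
    by_cases hb : b < n ∧ i + 1 < n
    · obtain ⟨x, hx, y, hy, hxy⟩ := h.vert b i hb.1 hb.2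
      exact ⟨x, y, fun _ _ => ⟨hx, hy, hxy⟩⟩
    · exact ⟨x0, x0, fun h1 h2 => absurd ⟨h1, h2⟩ hb⟩
  have hh : ∀ b i, ∃ x y : V, b + 1 < n → i < n → x ∈ E b i ∧ y ∈ E (b + 1) i ∧ G.Adj x y := by
    intro b i
    by_cases hb : b + 1 < n ∧ i < n
    · obtain ⟨x, hx, y, hy, hxy⟩ := h.horiz b i hb.1 hb.2
      exact ⟨x, y, fun _ _ => ⟨hx, hy, hxy⟩⟩
    · exact ⟨x0, x0, fun h1 h2 => absurd ⟨h1, h2⟩ hb⟩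
  choose vx vy hvxy using hv
  choose hx hy hhxy using hh
  let D : V → V → Prop := fun x y => (G.Adj x y ∧ ∃ b i, b < n ∧ i < n ∧ x ∈ E b i ∧ y ∈ E b i) ∨
    (∃ b i, b + 1 < n ∧ i < n ∧ x = hx b i ∧ y = hy b i) ∨
    (∃ b i, b < n ∧ i + 1 < n ∧ x = vx b i ∧ y = vy b i)
  have hDG : ∀ x y, D x y → G.Adj x y := by
    rintro x y (⟨h1, -⟩ | ⟨b, i, hb, hi, rfl, rfl⟩ | ⟨b, i, hb, hi, rfl, rfl⟩)
    · exact h1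
    · exact (hhxy b i hb hi).2.2
    · exact (hvxy b i hb hi).2.2
  let W : SimpleGraph V := SimpleGraph.fromRel D
  have hWD : ∀ x y, D x y → W.Adj x y := fun x y hxy => by
    rw [SimpleGraph.fromRel_adj]
    exact ⟨(hDG x y hxy).ne, Or.inl hxy⟩
  have hcell : ∀ b i, b < n → i < n → ConnOn W (E b i) := by
    intro b i hb hi u hu v hv
    refine (h.conn b i hb hi u hu v hv).ind (P := fun x => RIn W (E b i) u x) (RIn.refl hu) ?_
    intro x y hxr hx hxy hyE
    exact hx.tail (hWD _ _ (Or.inl ⟨hxy, b, i, hb, hi, hxr.right, hyE⟩)) hyE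
  have huniq : ∀ x b i b' i', b < n → i < n → b' < n → i' < n → x ∈ E b i → x ∈ E b' i' →
      b = b' ∧ i = i' := by
    intro x b i b' i' hb hi hb' hi' h1 h2
    by_contra hcon
    exact Set.disjoint_left.1 (h.disj b i b' i' hb hi hb' hi' (by omega)) h1 h2
  refine ⟨W, vx, vy, ?_, ?_, ?_, fun b i hb hi => ⟨(hvxy b i hb hi).1, (hvxy b i hb hi).2.1⟩, ?_⟩
  · intro x y hxy
    rw [SimpleGraph.fromRel_adj] at hxy
    rcases hxy.2 with h1 | h1
    · exact hDG _ _ h1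
    · exact (hDG _ _ h1).symm
  · intro i hi
    refine connOn_chain (fun b => E b i) 0 n (fun k _ hk => hcell k i hk hi) ?_
    intro k _ hk
    obtain ⟨h1, h2, -⟩ := hhxy k i hk hi
    exact ⟨_, h1, _, h2, hWD _ _ (Or.inr (Or.inl ⟨k, i, hk, hi, rfl, rfl⟩))⟩
  · intro b hb
    refine connOn_chain (fun i => E b i) 0 n (fun k _ hk => hcell b k hb hk) ?_
    intro k _ hk
    obtain ⟨h1, h2, -⟩ := hvxy b k hb hk
    exact ⟨_, h1, _, h2, hWD _ _ (Or.inr (Or.inr ⟨b, k, hb, hk, rfl, rfl⟩))⟩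
  · intro x y b i i0 i1 hxy hb hi hyE hi0 hi1 hi1n hx'
    rw [SimpleGraph.fromRel_adj] at hxy
    have hrowx : ∀ b', b' < n → x ∉ E b' i := fun b' hb' hxE => hx' i hi0 hi1 ⟨b', by omega, hb', hxE⟩
    rcases hxy.2 with hD | hD
    · rcases hD with ⟨-, b', i', hb', hi', h1, h2⟩ | ⟨b', i', hb', hi', rfl, rfl⟩ |
        ⟨b', i', hb', hi', rfl, rfl⟩
      · obtain ⟨rfl, rfl⟩ := huniq _ _ _ _ _ hb hi hb' hi' hyE h2
        exact absurd h1 (hrowx _ hb)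
      · obtain ⟨h1, h2, -⟩ := hhxy b' i' hb' hi'
        obtain ⟨rfl, rfl⟩ := huniq _ _ _ _ _ hb hi hb' hi' hyE h2
        exact absurd h1 (hrowx _ (by omega))
      · obtain ⟨h1, h2, -⟩ := hvxy b' i' hb' hi'
        obtain ⟨rfl, rfl⟩ := huniq _ _ _ _ _ hb hi hb' hi' hyE h2
        left
        have : ¬ i0 ≤ i' := fun hle => hx' i' hle (by omega) ⟨b, by omega, hb, h1⟩
        have h3 : i0 = i' + 1 := by omega
        subst h3
        exact ⟨by omega, rfl, rfl, rfl⟩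
    · rcases hD with ⟨-, b', i', hb', hi', h1, h2⟩ | ⟨b', i', hb', hi', rfl, rfl⟩ |
        ⟨b', i', hb', hi', rfl, rfl⟩
      · obtain ⟨rfl, rfl⟩ := huniq _ _ _ _ _ hb hi hb' hi' hyE h1
        exact absurd h2 (hrowx _ hb)
      · obtain ⟨h1, h2, -⟩ := hhxy b' i' hb' hi'
        obtain ⟨rfl, rfl⟩ := huniq _ _ _ _ _ hb hi (by omega) hi' hyE h1
        exact absurd h2 (hrowx _ (by omega))
      · obtain ⟨h1, h2, -⟩ := hvxy b' i' hb' hi'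
        obtain ⟨rfl, rfl⟩ := huniq _ _ _ _ _ hb hi hb' (by omega) hyE h1
        right
        have : ¬ i + 1 ≤ i1 := fun hle => hx' (i + 1) (by omega) hle ⟨b, by omega, hb, h2⟩
        have h3 : i1 = i := by omega
        subst h3
        exact ⟨hi', rfl, rfl, rfl⟩

/-- A set meets at most as many members of a disjoint family as it has elements. -/
theorem hit_count [Finite V] {ι : Type} (I : Finset ι) (R : ι → Set V)
    (hR : ∀ i ∈ I, ∀ j ∈ I, i ≠ j → Disjoint (R i) (R j)) (Z : Set V) [DecidablePred fun i =>
      (Z ∩ R i).Nonempty] : (I.filter fun i => (Z ∩ R i).Nonempty).card ≤ Z.ncard := by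
  classical
  rw [Set.ncard_eq_toFinset_card Z]
  refine Finset.card_le_card_of_forall_subsingleton (fun i z => z ∈ R i) ?_ ?_
  · intro i hi
    obtain ⟨z, hz, hzR⟩ := (Finset.mem_filter.1 hi).2
    exact ⟨z, by simpa using hz, hzR⟩
  · intro z _ i hi j hj
    by_contra hij
    exact Set.disjoint_left.1 (hR i (Finset.mem_filter.1 hi.1).1 j (Finset.mem_filter.1 hj.1).1 hij)
      hi.2 hj.2

/-- A grid model `D` with `g` rows and `n` columns, together with disjoint connected sets `R l`,
each containing a vertex of `S` and attached to the bottom row of the grid in the column `c l`. -/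
structure RootedM (G : SimpleGraph V) (S : Set V) (g n : ℕ) (D : ℕ → ℕ → Set V) (c : ℕ → ℕ)
    (R : ℕ → Set V) : Prop where
  conn : ∀ b q, b < n → q < g → ConnOn G (D b q)
  ne : ∀ b q, b < n → q < g → (D b q).Nonempty
  disj : ∀ b q b' q', b < n → q < g → b' < n → q' < g → (b ≠ b' ∨ q ≠ q') →
    Disjoint (D b q) (D b' q')
  horiz : ∀ b q, b + 1 < n → q < g → ∃ x ∈ D b q, ∃ y ∈ D (b + 1) q, G.Adj x y
  vert : ∀ b q, b < n → q + 1 < g → ∃ x ∈ D b q, ∃ y ∈ D b (q + 1), G.Adj x y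
  cmono : ∀ l, l < g → c l < c (l + 1)
  cle : c g ≤ n
  Rconn : ∀ l, l < g → ConnOn G (R l)
  Rroot : ∀ l, l < g → ∃ s ∈ R l, s ∈ S
  Rdisj : ∀ l l', l < g → l' < g → l ≠ l' → Disjoint (R l) (R l')
  RD : ∀ l b q, l < g → b < n → q < g → Disjoint (R l) (D b q)
  touch : ∀ l, l < g → ∃ x ∈ R l, ∃ y ∈ D (c l) 0, G.Adj x y

/-- Attached sets in distinct columns can be ordered by their columns. -/
theorem rootedM_of_sets {G : SimpleGraph V} {S : Set V} {g n : ℕ} {D : ℕ → ℕ → Set V}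
    (conn : ∀ b q, b < n → q < g → ConnOn G (D b q))
    (ne : ∀ b q, b < n → q < g → (D b q).Nonempty)
    (disj : ∀ b q b' q', b < n → q < g → b' < n → q' < g → (b ≠ b' ∨ q ≠ q') →
      Disjoint (D b q) (D b' q'))
    (horiz : ∀ b q, b + 1 < n → q < g → ∃ x ∈ D b q, ∃ y ∈ D (b + 1) q, G.Adj x y)
    (vert : ∀ b q, b < n → q + 1 < g → ∃ x ∈ D b q, ∃ y ∈ D b (q + 1), G.Adj x y)
    {ι : Type} (I : Finset ι) (hI : g ≤ I.card) (R : ι → Set V) (κ : ι → ℕ)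
    (hκ : ∀ i ∈ I, ∀ j ∈ I, κ i = κ j → i = j) (hκn : ∀ i ∈ I, κ i < n)
    (hR : ∀ i ∈ I, ConnOn G (R i)) (hRS : ∀ i ∈ I, ∃ s ∈ R i, s ∈ S)
    (hRd : ∀ i ∈ I, ∀ j ∈ I, i ≠ j → Disjoint (R i) (R j))
    (hRD : ∀ i ∈ I, ∀ b q, b < n → q < g → Disjoint (R i) (D b q))
    (htouch : ∀ i ∈ I, ∃ x ∈ R i, ∃ y ∈ D (κ i) 0, G.Adj x y) :
    ∃ c R', RootedM G S g n D c R' := by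
  classical
  obtain ⟨J, hJI, hJ⟩ := Finset.exists_subset_card_eq hI
  have hcard : (J.image κ).card = g := by
    rw [Finset.card_image_of_injOn, hJ]
    intro i hi j hj h
    exact hκ i (hJI hi) j (hJI hj) h
  set e := (J.image κ).orderEmbOfFin hcard with he
  have hex : ∀ l : Fin g, ∃ i ∈ J, κ i = e l := fun l => by
    exact Finset.mem_image.1 ((J.image κ).orderEmbOfFin_mem hcard l)
  choose f hfJ hf using hex
  have hfI : ∀ l, f l ∈ I := fun l => hJI (hfJ l)
  refine ⟨fun l => if h : l < g then e ⟨l, h⟩ else n,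
    fun l => if h : l < g then R (f ⟨l, h⟩) else ∅, ⟨conn, ne, disj, horiz, vert, ?_, ?_, ?_, ?_,
      ?_, ?_, ?_⟩⟩
  · intro l hl
    by_cases hl1 : l + 1 < g
    · simp only [hl, hl1, dif_pos]
      exact e.strictMono (by simp)
    · simp only [hl, hl1, dif_pos, dif_neg, not_false_eq_true]
      rw [← hf]
      exact hκn _ (hfI _)
  · simp
  · intro l hl
    simp only [hl, dif_pos]
    exact hR _ (hfI _)
  · intro l hl
    simp only [hl, dif_pos]
    exact hRS _ (hfI _)
  · intro l l' hl hl' hne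
    simp only [hl, hl', dif_pos]
    refine hRd _ (hfI _) _ (hfI _) ?_
    intro h
    have h1 := hf ⟨l, hl⟩
    rw [h, hf] at h1
    have := e.injective h1
    simp at this
    exact hne this.symm
  · intro l b q hl hb hq
    simp only [hl, dif_pos]
    exact hRD _ (hfI _) b q hb hq
  · intro l hl
    simp only [hl, dif_pos]
    rw [← hf]
    exact htouch _ (hfI _)

end Rooting

section Rooting

variable {V : Type} [Finite V]

/-- A path of a linkage `L` with fewest edges outside of `W` uses only edges of `W` at the vertices
of all but few of the rows, and does not start there. -/
theorem exists_bad_rows {G W : SimpleGraph V} {S T : Set V} {K n : ℕ} {Rw : ℕ → Set V}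
    (hW : W ≤ G) (hRc : ∀ i, i < n → ConnOn W (Rw i))
    (hRd : ∀ i i', i < n → i' < n → i ≠ i' → Disjoint (Rw i) (Rw i'))
    (hRT : ∀ i, i < n → ∃ t ∈ Rw i, t ∈ T)
    {L : Lk G Set.univ S T K} (hmin : L.IsMin W) (j : Fin K) :
    ∃ B : Finset ℕ, B.card ≤ K ∧ ∀ i, i < n → i ∉ B → ∀ t, t ≤ L.len j → L.r j t ∈ Rw i →
      1 ≤ t ∧ W.Adj (L.r j (t - 1)) (L.r j t) ∧
        (t < L.len j → W.Adj (L.r j t) (L.r j (t + 1))) := by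
  classical
  have hK : 1 ≤ K := by have := j.2; omega
  by_cases hex : ∃ τ, τ < L.len j ∧ ¬ W.Adj (L.r j τ) (L.r j (τ + 1))
  · -- the last edge of the path outside of `W`
    obtain ⟨τ, ⟨hτ, hnew⟩, hlast⟩ : ∃ τ, (τ < L.len j ∧ ¬ W.Adj (L.r j τ) (L.r j (τ + 1))) ∧
        ∀ t, t < L.len j → τ < t → W.Adj (L.r j t) (L.r j (t + 1)) := by
      let P := fun τ => τ < L.len j ∧ ¬ W.Adj (L.r j τ) (L.r j (τ + 1))
      obtain ⟨τ0, h0⟩ := hex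
      have h1 := Nat.findGreatest_spec (P := P) (n := L.len j) h0.1.le h0
      refine ⟨Nat.findGreatest P (L.len j), h1, fun t ht hlt => ?_⟩
      by_contra hcon
      exact Nat.findGreatest_is_greatest hlt ht.le ⟨ht, hcon⟩
    obtain ⟨Z, hZK, hZsep, hZj, -⟩ := hmin.cut hW j τ hτ hnew
    refine ⟨(Finset.range n).filter fun i => (insert (L.r j (τ + 1)) Z ∩ Rw i).Nonempty,
      (hit_count _ _ ?_ _).trans ((Set.ncard_insert_le _ _).trans (by omega)), ?_⟩
    · intro i hi i' hi' hne
      exact hRd i i' (Finset.mem_range.1 hi) (Finset.mem_range.1 hi') hne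
    · intro i hi hiB t ht htR
      have hnohit : ∀ x ∈ Rw i, x ∉ insert (L.r j (τ + 1)) Z := by
        intro x hx hxZ
        exact hiB (Finset.mem_filter.2 ⟨Finset.mem_range.2 hi, x, hxZ, hx⟩)
      have htτ : τ + 1 < t := by
        by_contra hle
        have hne : t ≠ τ + 1 := by
          rintro rfl
          exact hnohit _ htR (Or.inl rfl)
        obtain ⟨w, hw, hwT⟩ := hRT i hi
        refine hZsep _ (L.start j) w hwT ?_
        refine (RIn.of_seq (L.r j) (Nat.zero_le t) ?_ ?_).trans
          (((hRc i hi _ htR _ hw).monoG ?_).mono ?_)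
        · exact fun k _ hk => ⟨trivial, hZj k (by omega)⟩
        · intro k _ hk
          rw [SimpleGraph.deleteEdges_adj]
          refine ⟨Or.inr (L.graph_adj.2 ⟨j, k, by omega, Or.inl ⟨rfl, rfl⟩⟩), ?_⟩
          intro h
          rw [Set.mem_singleton_iff, Sym2.eq_iff] at h
          rcases h with ⟨h1, -⟩ | ⟨h1, h2⟩
          · have := (L.inj _ _ _ _ (by omega) (by omega) h1).2; omega
          · have := (L.inj _ _ _ _ (by omega) (by omega) h1).2; omega
        · intro x y hxy
          rw [SimpleGraph.deleteEdges_adj]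
          refine ⟨Or.inl hxy, ?_⟩
          intro h
          rw [Set.mem_singleton_iff, ← SimpleGraph.mem_edgeSet] at *
          exact hnew (h ▸ hxy)
        · exact fun x hx => ⟨trivial, fun hxZ => hnohit x hx (Or.inr hxZ)⟩
      refine ⟨by omega, ?_, fun h => hlast t h (by omega)⟩
      have := hlast (t - 1) (by omega) (by omega)
      rwa [show t - 1 + 1 = t by omega] at this
  · push Not at hex
    refine ⟨(Finset.range n).filter fun i => (({L.r j 0} : Set V) ∩ Rw i).Nonempty,
      (hit_count _ _ ?_ _).trans (by rw [Set.ncard_singleton]; exact hK), ?_⟩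
    · intro i hi i' hi' hne
      exact hRd i i' (Finset.mem_range.1 hi) (Finset.mem_range.1 hi') hne
    · intro i hi hiB t ht htR
      have ht0 : t ≠ 0 := by
        rintro rfl
        exact hiB (Finset.mem_filter.2 ⟨Finset.mem_range.2 hi, _, rfl, htR⟩)
      refine ⟨by omega, ?_, fun h => hex t h⟩
      have := hex (t - 1) (by omega)
      rwa [show t - 1 + 1 = t by omega] at this

/-- Among `(M + 1) * g` consecutive numbers there is a block of `g` avoiding `M` bad ones. -/
theorem exists_good_block (B : Finset ℕ) (M g : ℕ) (hB : B.card ≤ M) :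
    ∃ i0, i0 + g ≤ (M + 1) * g ∧ ∀ i, i0 ≤ i → i < i0 + g → i ∉ B := by
  classical
  by_contra hcon
  push Not at hcon
  have h1 : ∀ q : Fin (M + 1), ∃ i, q * g ≤ i ∧ i < q * g + g ∧ i ∈ B := fun q => by
    have h2 : (q : ℕ) * g + g ≤ (M + 1) * g := by
      rw [← Nat.succ_mul]; exact Nat.mul_le_mul_right _ q.2
    obtain ⟨i, hi1, hi2, hi3⟩ := hcon (q * g) h2
    exact ⟨i, hi1, hi2, hi3⟩
  choose f hf1 hf2 hf3 using h1
  have hinj : Function.Injective f := by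
    intro q q' h
    have key : ∀ q : Fin (M + 1), f q / g = q := fun q =>
      Nat.div_eq_of_lt_le (hf1 q) (by have := hf2 q; rw [Nat.succ_mul]; exact this)
    exact Fin.ext (by rw [← key q, ← key q', h])
  have h3 := Finset.card_le_card_of_injOn (s := Finset.univ) (t := B) f (fun q _ => hf3 q)
    (fun q _ q' _ h => hinj h)
  simp at h3
  omega

end Rooting

section Rooting

variable {V : Type} [Finite V]

/-- Rerouting a linkage from `S` to the rows of a large grid model such that it enters a subgrid
with `g` rows through `g` distinct columns on one side. -/
theorem exists_rooted {G : SimpleGraph V} {S X : Set V} {E : ℕ → ℕ → Set V} {g n : ℕ}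
    (hg : 1 ≤ g) (hn : n = (4 * g * (4 * g) + 1) * g) (h : GridM G n X E)
    (hlink : ∀ Y k, Y ⊆ X → Y.ncard = k → Nonempty (Lk G Set.univ S Y k)) :
    ∃ D c R, RootedM G S g n D c R := by
  classical
  have hn4 : 4 * g ≤ n := by
    rw [hn]
    exact (Nat.mul_le_mul_right g (by nlinarith : 4 ≤ 4 * g * (4 * g) + 1))
  obtain ⟨W, vx, vy, hWG, hrow, hcol, hvxy, hent⟩ := h.exists_frame (by omega)
  have hroot : ∀ i, ∃ t : V, i < n → t ∈ gridRow n E i ∧ t ∈ X := by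
    intro i
    by_cases hi : i < n
    · obtain ⟨b, hb, t, ht, htX⟩ := h.root i hi
      exact ⟨t, fun _ => ⟨⟨b, by omega, hb, ht⟩, htX⟩⟩
    · obtain ⟨b, hb, t, ht, htX⟩ := h.root 0 (by omega)
      exact ⟨t, fun h => absurd h hi⟩
  choose t ht using hroot
  have hrd : ∀ i i', i < n → i' < n → i ≠ i' → Disjoint (gridRow n E i) (gridRow n E i') :=
    fun i i' hi hi' hne => h.row_disj hi hi' hne
  set T : Set V := ((Finset.image t (Finset.range n) : Finset V) : Set V) with hT
  have htT : ∀ i, i < n → t i ∈ T := fun i hi =>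
    Finset.mem_coe.2 (Finset.mem_image_of_mem _ (Finset.mem_range.2 hi))
  have hTn : T.ncard = n := by
    rw [hT, Set.ncard_coe_finset, Finset.card_image_of_injOn, Finset.card_range]
    intro i hi i' hi' heq
    have hi := Finset.mem_range.1 hi
    have hi' := Finset.mem_range.1 hi'
    by_contra hne
    exact Set.disjoint_left.1 (hrd i i' hi hi' hne) (ht i hi).1 (heq ▸ (ht i' hi').1)
  have hTX : T ⊆ X := by
    intro x hx
    obtain ⟨i, hi, rfl⟩ := Finset.mem_image.1 (Finset.mem_coe.1 hx)
    exact (ht i (Finset.mem_range.1 hi)).2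
  obtain ⟨L, hmin⟩ := Lk.exists_isMin (Lk.shorten (hlink T n hTX hTn) hn4) W
  choose B hBK hB using fun j => exists_bad_rows hWG hrow hrd
    (fun i hi => ⟨t i, (ht i hi).1, htT i hi⟩) hmin j
  -- a block of consecutive good rows
  obtain ⟨i0, hi0, hgood⟩ := exists_good_block (Finset.univ.biUnion B) (4 * g * (4 * g)) g (by
    refine Finset.card_biUnion_le.trans ((Finset.sum_le_sum (fun j _ => hBK j)).trans ?_)
    simp)
  rw [← hn] at hi0
  have hgood' : ∀ i, i0 ≤ i → i < i0 + g → ∀ j t, t ≤ L.len j → L.r j t ∈ gridRow n E i →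
      1 ≤ t ∧ W.Adj (L.r j (t - 1)) (L.r j t) ∧
        (t < L.len j → W.Adj (L.r j t) (L.r j (t + 1))) := by
    intro i h1 h2 j
    refine hB j i (by omega) ?_
    intro hi
    exact hgood i h1 h2 (Finset.mem_biUnion.2 ⟨j, Finset.mem_univ _, hi⟩)
  set D : Set V := {x | ∃ i, i0 ≤ i ∧ i < i0 + g ∧ x ∈ gridRow n E i} with hD
  set S0 : Set V := Set.range (fun j => L.r j 0) with hS0
  -- linking the starting vertices to the block of good rows
  obtain ⟨L2⟩ : Nonempty (Lk (W ⊔ L.graph) Set.univ S0 D (2 * g)) := by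
    refine menger' _ _ _ _ _ ?_
    intro Z _ hsep
    by_contra hlt
    have hend : ∀ j, ∃ i, i < n ∧ L.r j (L.len j) = t i := by
      intro j
      obtain ⟨i, hi, hii⟩ := Finset.mem_image.1 (Finset.mem_coe.1 (L.fin j))
      exact ⟨i, Finset.mem_range.1 hi, hii.symm⟩
    choose ρ hρn hρ using hend
    have hρinj : ∀ j j', ρ j = ρ j' → j = j' := by
      intro j j' hjj
      exact (L.inj j j' _ _ le_rfl le_rfl (by rw [hρ, hρ, hjj])).1
    have h1 := hit_count (Finset.univ : Finset (Fin (4 * g)))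
      (fun j => {x | ∃ k, k ≤ L.len j ∧ L.r j k = x}) (by
        intro j _ j' _ hne
        rw [Set.disjoint_left]
        rintro x ⟨k, hk, rfl⟩ ⟨k', hk', hkk⟩
        exact hne (L.inj _ _ _ _ hk hk' hkk.symm).1) Z
    have h2 := hit_count (Finset.univ : Finset (Fin (4 * g))) (fun j => gridRow n E (ρ j)) (by
        intro j _ j' _ hne
        exact hrd _ _ (hρn j) (hρn j') (fun h => hne (hρinj _ _ h))) Z
    have h3 := hit_count (Finset.range n) (fun b => gridCol n E b) (by
        intro j hj j' hj' hne
        exact h.col_disj (Finset.mem_range.1 hj) (Finset.mem_range.1 hj') hne) Z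
    obtain ⟨b, hb, hbZ⟩ : ∃ b, b < n ∧ ¬ (Z ∩ gridCol n E b).Nonempty := by
      by_contra hcon
      push Not at hcon
      rw [Finset.filter_true_of_mem (fun b hb => by
        simpa using hcon b (Finset.mem_range.1 hb)), Finset.card_range] at h3
      omega
    obtain ⟨j, hj⟩ : ∃ j, ¬ ((Z ∩ {x | ∃ k, k ≤ L.len j ∧ L.r j k = x}).Nonempty ∨
        (Z ∩ gridRow n E (ρ j)).Nonempty) := by
      by_contra hcon
      push Not at hcon
      have h4 := Finset.card_union_le
        (Finset.univ.filter fun j => (Z ∩ {x | ∃ k, k ≤ L.len j ∧ L.r j k = x}).Nonempty)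
        (Finset.univ.filter fun j => (Z ∩ gridRow n E (ρ j)).Nonempty)
      rw [← Finset.filter_or, Finset.filter_true_of_mem (fun j _ => by
        simpa only [Set.not_nonempty_iff_eq_empty, ← Set.nonempty_iff_ne_empty] using hcon j),
        Finset.card_univ, Fintype.card_fin] at h4
      omega
    rw [not_or] at hj
    have hcell : ∀ i, i < n → ∃ x, x ∈ gridRow n E i ∧ x ∈ gridCol n E b := by
      intro i hi
      obtain ⟨x, hx⟩ := h.ne b i hb hi
      exact ⟨x, ⟨b, by omega, hb, hx⟩, ⟨i, by omega, hi, hx⟩⟩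
    obtain ⟨x, hx1, hx2⟩ := hcell (ρ j) (hρn j)
    obtain ⟨y, hy1, hy2⟩ := hcell i0 (by omega)
    refine hsep (L.r j 0) ⟨j, rfl⟩ y ⟨i0, le_rfl, by omega, hy1⟩ ?_
    have hWle : W ≤ W ⊔ L.graph := le_sup_left
    have e1 : RIn (W ⊔ L.graph) (Set.univ \ Z) (L.r j 0) (L.r j (L.len j)) := by
      refine RIn.of_seq (L.r j) (Nat.zero_le _) ?_ ?_
      · intro k _ hk
        exact ⟨trivial, fun hkZ => hj.1 ⟨_, hkZ, k, hk, rfl⟩⟩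
      · intro k _ hk
        exact Or.inr (L.graph_adj.2 ⟨j, k, hk, Or.inl ⟨rfl, rfl⟩⟩)
    have e2 : RIn (W ⊔ L.graph) (Set.univ \ Z) (L.r j (L.len j)) x := by
      refine ((hrow (ρ j) (hρn j) _ ?_ _ hx1).monoG hWle).mono ?_
      · rw [hρ]; exact (ht _ (hρn j)).1
      · exact fun z hz => ⟨trivial, fun hzZ => hj.2 ⟨z, hzZ, hz⟩⟩
    have e3 : RIn (W ⊔ L.graph) (Set.univ \ Z) x y := by
      refine ((hcol b hb _ hx2 _ hy2).monoG hWle).mono ?_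
      exact fun z hz => ⟨trivial, fun hzZ => hbZ ⟨z, hzZ, hz⟩⟩
    exact (e1.trans e2).trans e3
  have hLG : W ⊔ L.graph ≤ G := sup_le hWG L.graph_le
  have hDW : ∀ x y, (W ⊔ L.graph).Adj x y → y ∈ D → W.Adj x y := by
    rintro x y (hxy | hxy) ⟨i, hi1, hi2, hy⟩
    · exact hxy
    · obtain ⟨j, k, hk, ⟨rfl, rfl⟩ | ⟨rfl, rfl⟩⟩ := L.graph_adj.1 hxy
      · have := (hgood' i hi1 hi2 j (k + 1) hk hy).2.1
        simpa using this
      · exact ((hgood' i hi1 hi2 j k hk.le hy).2.2 hk).symm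
  have hS0D : ∀ x, x ∈ S0 → x ∉ D := by
    rintro x ⟨j, rfl⟩ ⟨i, hi1, hi2, hx⟩
    have := (hgood' i hi1 hi2 j 0 (Nat.zero_le _) hx).1
    omega
  have hlen : ∀ p, 1 ≤ L2.len p := by
    intro p
    by_contra hcon
    have h1 := L2.fin p
    rw [show L2.len p = 0 by omega] at h1
    exact hS0D _ (L2.start p) h1
  -- every path enters the block through the first or the last row
  have hside : ∀ p, ∃ b, b < n ∧
      ((1 ≤ i0 ∧ L2.r p (L2.len p) = vy b (i0 - 1)) ∨
        (i0 + g < n ∧ L2.r p (L2.len p) = vx b (i0 + g - 1))) := by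
    intro p
    obtain ⟨i, hi1, hi2, b, -, hb, hy⟩ := L2.fin p
    have hadj := L2.adj p (L2.len p - 1) (by have := hlen p; omega)
    rw [show L2.len p - 1 + 1 = L2.len p by have := hlen p; omega] at hadj
    have hx : L2.r p (L2.len p - 1) ∉ D := by
      intro hx
      have := L2.onlyB p _ (by omega) hx
      have := hlen p
      omega
    rcases hent _ _ b i i0 (i0 + g - 1) (hDW _ _ hadj (L2.fin p)) hb (by omega) hy hi1 (by omega)
      (by omega) (fun i' h1 h2 h3 => hx ⟨i', h1, by omega, h3⟩) with ⟨h1, h2, h3, h4⟩ |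
        ⟨h1, h2, h3, h4⟩
    · exact ⟨b, hb, Or.inl ⟨h1, h4⟩⟩
    · exact ⟨b, hb, Or.inr ⟨by omega, h3⟩⟩
  choose κ hκn hκ using hside
  let R : Fin (2 * g) → Set V := fun p => {x | ∃ k, 0 ≤ k ∧ k < L2.len p ∧ L2.r p k = x}
  have hRc : ∀ p, ConnOn G (R p) := fun p => connOn_seq _ _ _ (fun k _ hk =>
    hLG (L2.adj p k (by omega)))
  have hRS : ∀ p, ∃ s ∈ R p, s ∈ S := fun p => by
    obtain ⟨j, hj⟩ := L2.start p
    exact ⟨_, ⟨0, le_rfl, hlen p, rfl⟩, hj ▸ L.start j⟩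
  have hRd : ∀ p p', p ≠ p' → Disjoint (R p) (R p') := by
    intro p p' hne
    rw [Set.disjoint_left]
    rintro x ⟨k, _, hk, rfl⟩ ⟨k', _, hk', hkk⟩
    exact hne (L2.inj _ _ _ _ hk.le hk'.le hkk.symm).1
  have hRD : ∀ p b i, b < n → i0 ≤ i → i < i0 + g → Disjoint (R p) (E b i) := by
    intro p b i hb hi1 hi2
    rw [Set.disjoint_left]
    rintro x ⟨k, _, hk, rfl⟩ hx
    exact hk.ne (L2.onlyB p k hk.le ⟨i, hi1, hi2, b, by omega, hb, hx⟩)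
  have htouch : ∀ p, ∃ x ∈ R p, G.Adj x (L2.r p (L2.len p)) := by
    intro p
    have := hlen p
    refine ⟨_, ⟨L2.len p - 1, by omega, by omega, rfl⟩, ?_⟩
    have := hLG (L2.adj p (L2.len p - 1) (by omega))
    rwa [show L2.len p - 1 + 1 = L2.len p by omega] at this
  let I1 := Finset.univ.filter fun p => 1 ≤ i0 ∧ L2.r p (L2.len p) = vy (κ p) (i0 - 1)
  let I2 := Finset.univ.filter fun p => i0 + g < n ∧ L2.r p (L2.len p) = vx (κ p) (i0 + g - 1)
  have hI : 2 * g ≤ I1.card + I2.card := by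
    have h1 := Finset.card_union_le I1 I2
    have h2 : I1 ∪ I2 = Finset.univ := by
      ext p
      simpa [I1, I2] using hκ p
    rw [h2, Finset.card_univ, Fintype.card_fin] at h1
    exact h1
  rcases (show g ≤ I1.card ∨ g ≤ I2.card by omega) with hI1 | hI2
  · have hm : ∀ p ∈ I1, 1 ≤ i0 ∧ L2.r p (L2.len p) = vy (κ p) (i0 - 1) :=
      fun p hp => (Finset.mem_filter.1 hp).2
    refine ⟨fun b q => E b (i0 + q), rootedM_of_sets
      (fun b q hb hq => h.conn b _ hb (by omega)) (fun b q hb hq => h.ne b _ hb (by omega))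
      (fun b q b' q' hb hq hb' hq' hne => h.disj _ _ _ _ hb (by omega) hb' (by omega) (by omega))
      (fun b q hb hq => h.horiz b _ hb (by omega))
      (fun b q hb hq => h.vert b (i0 + q) hb (by omega))
      I1 hI1 R κ ?_ (fun p _ => hκn p) (fun p _ => hRc p) (fun p _ => hRS p)
      (fun p _ p' _ hne => hRd p p' hne)
      (fun p _ b q hb hq => hRD p b _ hb (by omega) (by omega)) ?_⟩
    · intro p hp p' hp' hpp
      exact (L2.inj p p' _ _ le_rfl le_rfl (by rw [(hm p hp).2, (hm p' hp').2, hpp])).1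
    · intro p hp
      obtain ⟨x, hx, hxy⟩ := htouch p
      refine ⟨x, hx, _, ?_, hxy⟩
      rw [(hm p hp).2]
      have h1 := (hm p hp).1
      have := (hvxy (κ p) (i0 - 1) (hκn p) (by omega)).2
      rwa [show i0 - 1 + 1 = i0 + 0 by omega] at this
  · have hm : ∀ p ∈ I2, i0 + g < n ∧ L2.r p (L2.len p) = vx (κ p) (i0 + g - 1) :=
      fun p hp => (Finset.mem_filter.1 hp).2
    refine ⟨fun b q => E b (i0 + g - 1 - q), rootedM_of_sets
      (fun b q hb hq => h.conn b _ hb (by omega)) (fun b q hb hq => h.ne b _ hb (by omega))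
      (fun b q b' q' hb hq hb' hq' hne => h.disj _ _ _ _ hb (by omega) hb' (by omega) (by omega))
      (fun b q hb hq => h.horiz b _ hb (by omega)) ?_
      I2 hI2 R κ ?_ (fun p _ => hκn p) (fun p _ => hRc p) (fun p _ => hRS p)
      (fun p _ p' _ hne => hRd p p' hne)
      (fun p _ b q hb hq => hRD p b _ hb (by omega) (by omega)) ?_⟩
    · intro b q hb hq
      obtain ⟨x, hx, y, hy, hxy⟩ := h.vert b (i0 + g - 1 - (q + 1)) hb (by omega)
      rw [show i0 + g - 1 - (q + 1) + 1 = i0 + g - 1 - q by omega] at hy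
      exact ⟨y, hy, x, hx, hxy.symm⟩
    · intro p hp p' hp' hpp
      exact (L2.inj p p' _ _ le_rfl le_rfl (by rw [(hm p hp).2, (hm p' hp').2, hpp])).1
    · intro p hp
      obtain ⟨x, hx, hxy⟩ := htouch p
      refine ⟨x, hx, _, ?_, hxy⟩
      rw [(hm p hp).2]
      have h1 := (hm p hp).1
      exact (hvxy (κ p) (i0 + g - 1) (hκn p) (by omega)).1

end Rooting

/-! ### The half-grid model -/

section GrateModel

variable {V : Type}

/-- Branch sets `Y i j` (for `i + j < g`) of the half-grid of the `g`-grate in `G`, where every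
branch set on the diagonal `i + j + 1 = g` contains a vertex of `S`. -/
structure GrateM (G : SimpleGraph V) (S : Set V) (g : ℕ) (Y : ℕ → ℕ → Set V) : Prop where
  conn : ∀ i j, i + j < g → ConnOn G (Y i j)
  ne : ∀ i j, i + j < g → (Y i j).Nonempty
  disj : ∀ i j i' j', i + j < g → i' + j' < g → (i ≠ i' ∨ j ≠ j') → Disjoint (Y i j) (Y i' j')
  stepJ : ∀ i j, i + j + 1 < g → ∃ x ∈ Y i j, ∃ y ∈ Y i (j + 1), G.Adj x y
  stepI : ∀ i j, i + j + 1 < g → ∃ x ∈ Y i j, ∃ y ∈ Y (i + 1) j, G.Adj x y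
  root : ∀ i j, i + j + 1 = g → ∃ s ∈ Y i j, s ∈ S

/-- Contracting the columns `c i, …, c (i + 1) - 1` to one column gives a `g × g` grid; the
half-grid is its part weakly above the diagonal `q = i` (with `j = g - 1 - q`), and the entries
below the diagonal of column `i` join the diagonal entry to the attached set `R i`. -/
theorem RootedM.exists_grateM {G : SimpleGraph V} {S : Set V} {g n : ℕ} {D : ℕ → ℕ → Set V}
    {c : ℕ → ℕ} {R : ℕ → Set V} (h : RootedM G S g n D c R) : ∃ Y, GrateM G S g Y := by
  have hmono : ∀ l m, l ≤ m → m ≤ g → c l ≤ c m := by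
    intro l m hlm
    induction m, hlm using Nat.le_induction with
    | base => intro _; exact le_rfl
    | succ m hlm ih =>
      intro hm
      exact (ih (by omega)).trans (h.cmono m (by omega)).le
  have hlt : ∀ i b, i < g → b < c (i + 1) → b < n := fun i b hi hb =>
    lt_of_lt_of_le hb ((hmono (i + 1) g (by omega) le_rfl).trans h.cle)
  have hcc : ∀ i, i < g → c i < n := fun i hi => hlt i _ hi (h.cmono i hi)
  have hcolne : ∀ i b i' b', i < g → i' < g → c i ≤ b → b < c (i + 1) → c i' ≤ b' →
      b' < c (i' + 1) → i ≠ i' → b ≠ b' := by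
    intro i b i' b' hi hi' h1 h2 h3 h4 hne he
    subst he
    rcases lt_or_gt_of_ne hne with hh | hh
    · have := hmono (i + 1) i' (by omega) (by omega); omega
    · have := hmono (i' + 1) i (by omega) (by omega); omega
  set F : ℕ → ℕ → Set V := fun i q => {x | ∃ b, c i ≤ b ∧ b < c (i + 1) ∧ x ∈ D b q} with hF
  have hFconn : ∀ i q, i < g → q < g → ConnOn G (F i q) := by
    intro i q hi hq
    refine connOn_chain (fun b => D b q) _ _ (fun b _ hb => h.conn b q (hlt i b hi hb) hq) ?_
    intro b _ hb
    exact h.horiz b q (hlt i _ hi hb) hq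
  have hFsub : ∀ i q, i < g → D (c i) q ⊆ F i q := fun i q hi x hx =>
    ⟨c i, le_rfl, h.cmono i hi, hx⟩
  have hFR : ∀ l i q, l < g → i < g → q < g → Disjoint (R l) (F i q) := by
    intro l i q hl hi hq
    rw [Set.disjoint_left]
    rintro x hx ⟨b, _, hb, hx'⟩
    exact Set.disjoint_left.1 (h.RD l b q hl (hlt i b hi hb) hq) hx hx'
  have hFF : ∀ i q i' q', i < g → q < g → i' < g → q' < g → (i ≠ i' ∨ q ≠ q') →
      Disjoint (F i q) (F i' q') := by
    intro i q i' q' hi hq hi' hq' hne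
    rw [Set.disjoint_left]
    rintro x ⟨b, hb1, hb2, hx⟩ ⟨b', hb1', hb2', hx'⟩
    refine Set.disjoint_left.1 (h.disj b q b' q' (hlt i b hi hb2) hq (hlt i' b' hi' hb2') hq' ?_)
      hx hx'
    rcases hne with hne | hne
    · exact Or.inl (hcolne i b i' b' hi hi' hb1 hb2 hb1' hb2' hne)
    · exact Or.inr hne
  set Y : ℕ → ℕ → Set V := fun i j =>
    if i + j + 1 = g then R i ∪ {x | ∃ q, 0 ≤ q ∧ q < i + 1 ∧ x ∈ F i q} else F i (g - 1 - j) with hY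
  have hFY : ∀ i j, i + j < g → F i (g - 1 - j) ⊆ Y i j := by
    intro i j hij x hx
    simp only [hY]
    split_ifs with hd
    · exact Or.inr ⟨g - 1 - j, by omega, by omega, hx⟩
    · exact hx
  have hYmem : ∀ i j x, i + j < g → x ∈ Y i j → (i + j + 1 = g ∧ x ∈ R i) ∨
      ∃ q, x ∈ F i q ∧ ((i + j + 1 = g ∧ q ≤ i) ∨ (i + j + 1 < g ∧ q + j + 1 = g)) := by
    intro i j x hij hx
    simp only [hY] at hx
    split_ifs at hx with hd
    · rcases hx with hx | ⟨q, _, hq, hx⟩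
      · exact Or.inl ⟨hd, hx⟩
      · exact Or.inr ⟨q, hx, Or.inl ⟨hd, by omega⟩⟩
    · exact Or.inr ⟨_, hx, Or.inr ⟨by omega, by omega⟩⟩
  refine ⟨Y, ⟨?_, ?_, ?_, ?_, ?_, ?_⟩⟩
  · intro i j hij
    simp only [hY]
    split_ifs with hd
    · refine (h.Rconn i (by omega)).union (connOn_chain (F i) 0 (i + 1)
        (fun q _ hq => hFconn i q (by omega) (by omega)) ?_) ?_
      · intro q _ hq
        obtain ⟨x, hx, y, hy, hxy⟩ := h.vert (c i) q (hcc i (by omega)) (by omega)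
        exact ⟨x, hFsub i q (by omega) hx, y, hFsub i _ (by omega) hy, hxy⟩
      · obtain ⟨x, hx, y, hy, hxy⟩ := h.touch i (by omega)
        exact ⟨x, hx, y, ⟨0, le_rfl, by omega, hFsub i 0 (by omega) hy⟩, Or.inr hxy⟩
    · exact hFconn i _ (by omega) (by omega)
  · intro i j hij
    obtain ⟨x, hx⟩ := h.ne (c i) (g - 1 - j) (hcc i (by omega)) (by omega)
    exact ⟨x, hFY i j hij (hFsub i _ (by omega) hx)⟩
  · intro i j i' j' hij hij' hne
    rw [Set.disjoint_left]
    intro x hx hx'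
    rcases hYmem i j x hij hx with ⟨hd, hx⟩ | ⟨q, hx, hq⟩ <;>
      rcases hYmem i' j' x hij' hx' with ⟨hd', hx'⟩ | ⟨q', hx', hq'⟩
    · exact Set.disjoint_left.1 (h.Rdisj i i' (by omega) (by omega) (by omega)) hx hx'
    · exact Set.disjoint_left.1 (hFR i i' q' (by omega) (by omega) (by omega)) hx hx'
    · exact Set.disjoint_left.1 (hFR i' i q (by omega) (by omega) (by omega)) hx' hx
    · exact Set.disjoint_left.1 (hFF i q i' q' (by omega) (by omega) (by omega) (by omega)
        (by omega)) hx hx'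
  · intro i j hij
    obtain ⟨x, hx, y, hy, hxy⟩ := h.vert (c i) (g - 1 - (j + 1)) (hcc i (by omega)) (by omega)
    rw [show g - 1 - (j + 1) + 1 = g - 1 - j by omega] at hy
    exact ⟨y, hFY i j (by omega) (hFsub i _ (by omega) hy), x,
      hFY i (j + 1) (by omega) (hFsub i _ (by omega) hx), hxy.symm⟩
  · intro i j hij
    have h1 := h.cmono i (by omega)
    have h2 := h.cmono (i + 1) (by omega)
    have h3 := hcc (i + 1) (by omega)
    obtain ⟨x, hx, y, hy, hxy⟩ := h.horiz (c (i + 1) - 1) (g - 1 - j) (by omega) (by omega)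
    rw [show c (i + 1) - 1 + 1 = c (i + 1) by omega] at hy
    exact ⟨x, hFY i j (by omega) ⟨_, by omega, by omega, hx⟩, y,
      hFY (i + 1) j (by omega) (hFsub _ _ (by omega) hy), hxy⟩
  · intro i j hij
    obtain ⟨s, hs, hsS⟩ := h.Rroot i (by omega)
    refine ⟨s, ?_, hsS⟩
    simp only [hY, if_pos hij]
    exact Or.inl hs

end GrateModel

/-! ### Query minors from models -/

section Minor

/-- A model of `Q'` in `Q`, given by a partial map `φ` from the vertices of `Q` to those of `Q'`:
the branch set of `a` is the fibre of `some a`, and vertices mapped to `none` are unused. -/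
structure MinorModel (Q' Q : Query) (φ : Q.V → Option Q'.V) : Prop where
  ne : ∀ a, ∃ x, φ x = some a
  conn : ∀ a, ConnOn Q.graph {x | φ x = some a}
  adj : ∀ a b, Q'.graph.Adj a b → ∃ x y, φ x = some a ∧ φ y = some b ∧ Q.graph.Adj x y
  free : ∀ a, a ∈ Q'.free ↔ ∃ x, φ x = some a ∧ x ∈ Q.free

/-- Any set of edges can be deleted. -/
theorem reach_subgraph (n : ℕ) : ∀ (Q : Query) (H : SimpleGraph Q.V), H ≤ Q.graph →
    (Q.graph.edgeSet \ H.edgeSet).ncard = n →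
    ReflTransGen QueryStep Q ⟨Q.V, Q.fin, H, Q.free⟩ := by
  induction n using Nat.strong_induction_on with
  | _ n ih =>
    intro Q H hH hn
    by_cases he : H = Q.graph
    · subst he; exact .refl
    · have hex : ∃ u v, Q.graph.Adj u v ∧ ¬ H.Adj u v := by
        by_contra hcon
        push Not at hcon
        exact he (le_antisymm hH (fun u v huv => hcon u v huv))
      obtain ⟨u, v, huv, hHuv⟩ := hex
      have hle : H ≤ Q.graph.deleteEdges {s(u, v)} := by
        intro x y hxy
        rw [SimpleGraph.deleteEdges_adj]
        refine ⟨hH hxy, ?_⟩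
        intro hm
        have hm' : s(x, y) = s(u, v) := hm
        exact hHuv (by rw [← SimpleGraph.mem_edgeSet, ← hm']; exact hxy)
      have hlt : ((Q.graph.deleteEdges {s(u, v)}).edgeSet \ H.edgeSet).ncard < n := by
        rw [← hn]
        refine Set.ncard_lt_ncard ?_ (Set.toFinite _)
        refine ⟨?_, fun hsub => ?_⟩
        · rw [SimpleGraph.edgeSet_deleteEdges]
          exact fun e he => ⟨he.1.1, he.2⟩
        · have := hsub (show s(u, v) ∈ Q.graph.edgeSet \ H.edgeSet from ⟨huv, hHuv⟩)
          rw [SimpleGraph.edgeSet_deleteEdges] at this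
          exact this.1.2 rfl
      exact ReflTransGen.head (QueryStep.edgeDel Q u v huv)
        (ih _ hlt (Q.deleteEdge u v) H hle rfl)

/-- A vertex outside all branch sets can be deleted (after its incident edges). -/
theorem MinorModel.delete {Q' Q : Query} {φ : Q.V → Option Q'.V} (h : MinorModel Q' Q φ)
    {v : Q.V} (hv : φ v = none) : ∃ (Q1 : Query) (ψ : Q1.V → Option Q'.V),
      ReflTransGen QueryStep Q Q1 ∧ Nat.card Q1.V < Nat.card Q.V ∧ MinorModel Q' Q1 ψ := by
  let H : SimpleGraph Q.V :=
    { Adj := fun x y => Q.graph.Adj x y ∧ x ≠ v ∧ y ≠ v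
      symm := ⟨fun x y hxy => ⟨hxy.1.symm, hxy.2.2, hxy.2.1⟩⟩
      loopless := ⟨fun x hx => Q.graph.loopless.irrefl x hx.1⟩ }
  let Q0 : Query := ⟨Q.V, Q.fin, H, Q.free⟩
  have hne : ∀ x a, φ x = some a → x ≠ v := by
    rintro x a hx rfl; rw [hv] at hx; cases hx
  refine ⟨Q0.deleteVertex v, fun x => φ x.1, ?_, ?_, ?_⟩
  · exact (reach_subgraph _ Q H (fun x y hxy => hxy.1) rfl).tail
      (QueryStep.vertexDel Q0 v (fun w hw => hw.2.1 rfl))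
  · exact Finite.card_subtype_lt (p := fun x => x ≠ v) (x := v) (by simp)
  · refine ⟨?_, ?_, ?_, ?_⟩
    · intro a
      obtain ⟨x, hx⟩ := h.ne a
      exact ⟨⟨x, hne x a hx⟩, hx⟩
    · rintro a ⟨x, hxv⟩ hx ⟨y, hyv⟩ hy
      refine (h.conn a x hx y hy).ind (P := fun y => ∀ hyv : y ≠ v,
        RIn (Q0.deleteVertex v).graph {x | φ x.1 = some a} ⟨x, hxv⟩ ⟨y, hyv⟩)
        (fun _ => RIn.refl hx) ?_ hyv
      intro w z hw hP hwz hz hzv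
      have hwv : w ≠ v := hne w a hw.right
      exact (hP hwv).tail (show H.Adj w z from ⟨hwz, hwv, hzv⟩) hz
    · intro a b hab
      obtain ⟨x, y, hx, hy, hxy⟩ := h.adj a b hab
      exact ⟨⟨x, hne x a hx⟩, ⟨y, hne y b hy⟩, hx, hy, hxy, hne x a hx, hne y b hy⟩
    · intro a
      rw [h.free a]
      constructor
      · rintro ⟨x, hx, hf⟩
        exact ⟨⟨x, hne x a hx⟩, hx, hf⟩
      · rintro ⟨x, hx, hf⟩
        exact ⟨x.1, hx, hf⟩

/-- An edge inside a branch set can be contracted. -/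
theorem MinorModel.contract {Q' Q : Query} {φ : Q.V → Option Q'.V} (h : MinorModel Q' Q φ)
    {u v : Q.V} (huv : Q.graph.Adj u v) (hφ : φ u = φ v) :
    ∃ (Q1 : Query) (ψ : Q1.V → Option Q'.V),
      ReflTransGen QueryStep Q Q1 ∧ Nat.card Q1.V < Nat.card Q.V ∧ MinorModel Q' Q1 ψ := by
  classical
  obtain ⟨f, hfv, hfn⟩ : ∃ f : Q.V → (Q.contract u v).V,
      (f v).1 = u ∧ ∀ x, x ≠ v → (f x).1 = x := by
    let f0 : Q.V → {x : Q.V | x ≠ v} := fun x => if hx : x = v then ⟨u, huv.ne⟩ else ⟨x, hx⟩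
    have h1 : (f0 v).1 = u := by simp [f0]
    have h2 : ∀ x, x ≠ v → (f0 x).1 = x := fun x hx => by simp [f0, hx]
    exact ⟨f0, h1, h2⟩
  have hf1 : ∀ x, φ (f x).1 = φ x := by
    intro x
    by_cases hx : x = v
    · rw [hx, hfv, hφ]
    · rw [hfn x hx]
  have hf2 : ∀ x : (Q.contract u v).V, f x.1 = x := fun x => Subtype.ext (hfn x.1 x.2)
  have hf3 : ∀ x y, Q.graph.Adj x y → f x ≠ f y → (Q.contract u v).graph.Adj (f x) (f y) := by
    intro x y hxy hne
    refine (SimpleGraph.fromRel_adj _ _ _).2 ⟨hne, ?_⟩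
    by_cases hx : x = v
    · subst hx
      left; right
      exact ⟨hfv, by rw [hfn y hxy.ne']; exact hxy⟩
    · by_cases hy : y = v
      · subst hy
        right; right
        exact ⟨hfv, by rw [hfn x hxy.ne]; exact hxy.symm⟩
      · left; left
        rw [hfn x hx, hfn y hy]
        exact hxy
  refine ⟨Q.contract u v, fun x => φ x.1, .single (QueryStep.contract Q u v huv), ?_, ?_⟩
  · exact Finite.card_subtype_lt (p := fun x => x ≠ v) (x := v) (by simp)
  · refine ⟨?_, ?_, ?_, ?_⟩
    · intro a
      obtain ⟨x, hx⟩ := h.ne a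
      exact ⟨f x, by rw [hf1, hx]⟩
    · intro a x hx y hy
      rw [← hf2 x, ← hf2 y]
      refine (h.conn a x.1 hx y.1 hy).ind (P := fun y =>
        RIn (Q.contract u v).graph {x | φ x.1 = some a} (f x.1) (f y)) (RIn.refl ?_) ?_
      · exact (hf1 _).trans hx
      · intro w z hw hP hwz hz
        by_cases he : f w = f z
        · rw [← he]; exact hP
        · exact hP.tail (hf3 w z hwz he) ((hf1 _).trans hz)
    · intro a b hab
      obtain ⟨x, y, hx, hy, hxy⟩ := h.adj a b hab
      refine ⟨f x, f y, by rw [hf1, hx], by rw [hf1, hy], hf3 x y hxy ?_⟩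
      intro he
      have : φ x = φ y := by rw [← hf1 x, he, hf1]
      rw [hx, hy] at this
      exact hab.ne (Option.some.inj this)
    · intro a
      rw [h.free a]
      constructor
      · rintro ⟨x, hx, hxf⟩
        refine ⟨f x, by rw [hf1, hx], ?_⟩
        by_cases hxv : x = v
        · right
          subst hxv
          exact ⟨hfv, hxf⟩
        · left
          rw [hfn x hxv]
          exact hxf
      · rintro ⟨x, hx, hxf | ⟨hxu, hvf⟩⟩
        · exact ⟨x.1, hx, hxf⟩
        · exact ⟨v, by rw [← hφ, ← hxu]; exact hx, hvf⟩

/-- A model yields a query minor: delete unused vertices, contract edges inside branch sets, and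
finally delete the surplus edges. -/
theorem MinorModel.isMinorOf {Q' : Query} (n : ℕ) : ∀ (Q : Query) (φ : Q.V → Option Q'.V),
    Nat.card Q.V = n → MinorModel Q' Q φ → Q'.IsMinorOf Q := by
  induction n using Nat.strong_induction_on with
  | _ n ih =>
    intro Q φ hn h
    by_cases h1 : ∃ v, φ v = none
    · obtain ⟨v, hv⟩ := h1
      obtain ⟨Q1, ψ, hr, hc, hm⟩ := h.delete hv
      exact ReflTransGen.trans hr (ih _ (hn ▸ hc) Q1 ψ rfl hm)
    by_cases h2 : ∃ u v, u ≠ v ∧ φ u = φ v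
    · obtain ⟨u, v, huv, he⟩ := h2
      obtain ⟨a, ha⟩ : ∃ a, φ u = some a := by
        rcases hu : φ u with _ | a
        · exact absurd ⟨u, hu⟩ h1
        · exact ⟨a, rfl⟩
      obtain ⟨x, y, hx, hy, hxy, -, hy'⟩ :=
        (h.conn a u ha v (he.symm.trans ha)).exit (C := {u}) rfl (fun hh => huv hh.symm)
      rw [Set.mem_singleton_iff] at hx
      subst hx
      obtain ⟨Q1, ψ, hr, hc, hm⟩ := h.contract hxy (by rw [ha]; exact hy'.right.symm)
      exact ReflTransGen.trans hr (ih _ (hn ▸ hc) Q1 ψ rfl hm)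
    -- `φ` is now a bijection, and only surplus edges remain to be deleted.
    push Not at h1 h2
    have hs : ∀ x, ∃ a, φ x = some a := fun x => Option.ne_none_iff_exists'.1 (h1 x)
    choose p hp using hs
    have hbij : Function.Bijective p := by
      constructor
      · intro x y hxy
        by_contra hne
        exact h2 x y hne (by rw [hp, hp, hxy])
      · intro a
        obtain ⟨x, hx⟩ := h.ne a
        exact ⟨x, Option.some.inj ((hp x).symm.trans hx)⟩
    let e := Equiv.ofBijective p hbij
    have hpe : ∀ x a, φ x = some a → p x = a := fun x a hx =>
      Option.some.inj ((hp x).symm.trans hx)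
    have hle : Q'.graph.comap p ≤ Q.graph := by
      intro x y hxy
      obtain ⟨x', y', hx', hy', hxy'⟩ := h.adj _ _ hxy
      rw [hbij.1 (hpe x' _ hx'), hbij.1 (hpe y' _ hy')] at hxy'
      exact hxy'
    refine (reach_subgraph _ Q _ hle rfl).tail (QueryStep.iso _ _ ⟨⟨e, ?_⟩, ?_⟩)
    · intro x y
      exact Iff.rfl
    · ext a
      rw [h.free a]
      constructor
      · rintro ⟨x, hx, rfl⟩
        exact ⟨x, hp x, hx⟩
      · rintro ⟨x, hx, hf⟩
        exact ⟨x, hf, hpe x a hx⟩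

end Minor

/-! ### Assembling the grate -/

section Final

/-- Query minors from disjoint branch sets. -/
theorem Query.isMinorOf_of_branch {Q' Q : Query} (μ : Q'.V → Set Q.V)
    (ne : ∀ a, (μ a).Nonempty) (conn : ∀ a, ConnOn Q.graph (μ a))
    (disj : ∀ a b, a ≠ b → Disjoint (μ a) (μ b))
    (adj : ∀ a b, Q'.graph.Adj a b → ∃ x ∈ μ a, ∃ y ∈ μ b, Q.graph.Adj x y)
    (free : ∀ a, a ∈ Q'.free ↔ ∃ x ∈ μ a, x ∈ Q.free) : Q'.IsMinorOf Q := by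
  classical
  let φ : Q.V → Option Q'.V := fun x => if h : ∃ a, x ∈ μ a then some h.choose else none
  have hφ : ∀ x a, φ x = some a ↔ x ∈ μ a := by
    intro x a
    by_cases h : ∃ a, x ∈ μ a
    · simp only [φ, dif_pos h, Option.some.injEq]
      constructor
      · rintro rfl; exact h.choose_spec
      · intro ha
        by_contra hne
        exact Set.disjoint_left.1 (disj _ _ hne) h.choose_spec ha
    · simp only [φ, dif_neg h]
      exact ⟨fun hh => (by cases hh), fun hh => absurd ⟨a, hh⟩ h⟩
  refine MinorModel.isMinorOf _ Q φ rfl ⟨?_, ?_, ?_, ?_⟩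
  · intro a
    obtain ⟨x, hx⟩ := ne a
    exact ⟨x, (hφ x a).2 hx⟩
  · intro a
    have : {x | φ x = some a} = μ a := Set.ext fun x => hφ x a
    rw [this]; exact conn a
  · intro a b hab
    obtain ⟨x, hx, y, hy, hxy⟩ := adj a b hab
    exact ⟨x, y, (hφ x a).2 hx, (hφ y b).2 hy, hxy⟩
  · intro a
    rw [free a]
    simp only [hφ]

theorem RIn.of_walk {V : Type} {G : SimpleGraph V} {s : Set V} {u v : V} (w : G.Walk u v)
    (h : ∀ x ∈ w.support, x ∈ s) : RIn G s u v := by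
  induction w with
  | nil => exact RIn.refl (h _ (by simp))
  | cons huv p ih =>
    have h2 := ih (fun x hx => h x (by simp [hx]))
    exact (RIn.step (h _ (by simp)) huv h2.left).trans h2

/-- A separator of `A` and `B` meets every one of the disjoint `A`–`B` paths. -/
theorem NodeWellLinked.wl {V : Type} [Finite V] {G : SimpleGraph V} {S : Set V}
    (h : NodeWellLinked G S) : WL G S := by
  classical
  intro A B Z hA hB hAB hcard hsep
  have hfA := A.toFinite
  have hfB := B.toFinite
  obtain ⟨P, hP, hdisj, -⟩ := h hfA.toFinset hfB.toFinset (by simpa using hA) (by simpa using hB)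
    (by rw [← Finset.disjoint_coe]; simpa using hAB)
    (by rw [← Set.ncard_eq_toFinset_card A hfA, ← Set.ncard_eq_toFinset_card B hfB, hcard])
  have hz : ∀ a, ∃ z, z ∈ (P a).2.2.support ∧ z ∈ Z := by
    intro a
    by_contra hcon
    push Not at hcon
    exact hsep (P a).1 (by simpa using (hP a).1) (P a).2.1 (by simpa using (hP a).2.1)
      (RIn.of_walk (P a).2.2 hcon)
  choose z hz1 hz2 using hz
  have hinj : Function.Injective z := by
    intro a b hab
    by_contra hne
    exact hdisj a b hne (z a) (hz1 a) (hab ▸ hz1 b)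
  rw [Set.ncard_eq_toFinset_card A hfA, ← Fintype.card_coe, ← Nat.card_eq_fintype_card,
    ← Nat.card_coe_set_eq Z]
  exact Nat.card_le_card_of_injective (fun a => (⟨z a, hz2 a⟩ : Z))
    (fun a b hab => hinj (congrArg Subtype.val hab))

theorem ConnOn.image_val {V : Type} {G : SimpleGraph V} {T : Set V} {s : Set T}
    (h : ConnOn (G.induce T) s) : ConnOn G (Subtype.val '' s) := by
  rintro _ ⟨x, hx, rfl⟩ _ ⟨y, hy, rfl⟩
  refine (h x hx y hy).ind (P := fun y => RIn G (Subtype.val '' s) x.1 y.1)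
    (RIn.refl ⟨x, hx, rfl⟩) ?_
  intro w z _ hP hwz hz
  exact hP.tail hwz ⟨z, hz, rfl⟩

/-- A half-grid model in the quantified part, rooted at matched vertices, extends to a model of
the grate by the matching edges at the roots. -/
theorem GrateM.isMinorOf {Q : Query} {g : ℕ} (M : Finset (Q.V × Q.V))
    (hM : ∀ p ∈ M, p.1 ∈ Q.free ∧ p.2 ∉ Q.free ∧ Q.graph.Adj p.1 p.2)
    (hM' : ∀ p ∈ M, ∀ q ∈ M, p ≠ q → p.1 ≠ q.1 ∧ p.2 ≠ q.2) {Y : ℕ → ℕ → Set ↥(Q.freeᶜ)}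
    (h : GrateM (Q.graph.induce Q.freeᶜ) {y : ↥(Q.freeᶜ) | ∃ x, (x, (y : Q.V)) ∈ M} g Y) :
    (grateQuery g).IsMinorOf Q := by
  classical
  have hroot : ∀ i : Fin g, ∃ (x : Q.V) (s : ↥(Q.freeᶜ)),
      s ∈ Y i (g - 1 - i) ∧ (x, (s : Q.V)) ∈ M := by
    intro i
    obtain ⟨s, hs, x, hx⟩ := h.root i (g - 1 - i) (by omega)
    exact ⟨x, s, hs, hx⟩
  choose X s hs hX using hroot
  have hp : ∀ p : {p : Fin g × Fin g // (p.1 : ℕ) + (p.2 : ℕ) ≤ g - 1},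
      (p.1.1 : ℕ) + (p.1.2 : ℕ) < g := by
    rintro ⟨⟨i, j⟩, hij⟩
    have h1 := i.2
    simp only at hij ⊢
    omega
  let μ : GrateV g → Set Q.V := fun a => match a with
    | Sum.inl i => {X i}
    | Sum.inr p => Subtype.val '' (Y p.1.1 p.1.2)
  have hXne : ∀ i i', i ≠ i' → X i ≠ X i' := by
    intro i i' hne
    have hss : s i ≠ s i' := by
      intro he
      refine Set.disjoint_left.1 (h.disj i (g - 1 - i) i' (g - 1 - i') (by omega) (by omega)
        (Or.inl (fun hh => hne (Fin.ext hh)))) (hs i) (he ▸ hs i')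
    refine (hM' _ (hX i) _ (hX i') ?_).1
    intro he
    exact hss (Subtype.ext (congrArg Prod.snd he))
  have hXY : ∀ i p, Disjoint (μ (Sum.inl i)) (μ (Sum.inr p)) := by
    intro i p
    rw [Set.disjoint_left]
    rintro x (rfl : x = X i) ⟨y, -, hy⟩
    exact y.2 (hy ▸ (hM _ (hX i)).1)
  have hadj : ∀ a b, grateRel g a b → ∃ x ∈ μ a, ∃ y ∈ μ b, Q.graph.Adj x y := by
    rintro (i | p) (i' | q) hab
    · exact hab.elim
    · obtain ⟨rfl, h2⟩ := hab
      refine ⟨X q.1.1, rfl, s q.1.1, ⟨s q.1.1, ?_, rfl⟩, (hM _ (hX _)).2.2⟩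
      rw [show (q.1.2 : ℕ) = g - 1 - (q.1.1 : ℕ) by omega]
      exact hs _
    · exact hab.elim
    · have hq := hp q
      rcases hab with ⟨h1, h2⟩ | ⟨h1, h2⟩
      · obtain ⟨x, hx, y, hy, hxy⟩ := h.stepJ p.1.1 p.1.2 (by rw [h1]; omega)
        refine ⟨x, ⟨x, hx, rfl⟩, y, ⟨y, ?_, rfl⟩, hxy⟩
        rw [← h1, ← h2]; exact hy
      · obtain ⟨x, hx, y, hy, hxy⟩ := h.stepI p.1.1 p.1.2 (by rw [h1]; omega)
        refine ⟨x, ⟨x, hx, rfl⟩, y, ⟨y, ?_, rfl⟩, hxy⟩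
        rw [← h1, ← h2]; exact hy
  refine Query.isMinorOf_of_branch (Q' := grateQuery g) μ ?_ ?_ ?_ ?_ ?_
  · rintro (i | p)
    · exact ⟨X i, rfl⟩
    · exact (h.ne _ _ (hp p)).image _
  · rintro (i | p)
    · exact connOn_singleton _ _
    · exact (h.conn _ _ (hp p)).image_val
  · rintro (i | p) (i' | q) hne
    · refine Set.disjoint_singleton.2 (hXne i i' ?_)
      rintro rfl; exact hne rfl
    · exact hXY i q
    · exact (hXY i' p).symm
    · refine Set.disjoint_image_of_injective Subtype.val_injective
        (h.disj _ _ _ _ (hp p) (hp q) ?_)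
      by_contra hcon
      push Not at hcon
      exact hne (congrArg Sum.inr (Subtype.ext (Prod.ext (Fin.ext hcon.1) (Fin.ext hcon.2))))
  · intro a b hab
    rcases ((SimpleGraph.fromRel_adj _ _ _).1 hab).2 with hh | hh
    · exact hadj a b hh
    · obtain ⟨x, hx, y, hy, hxy⟩ := hadj b a hh
      exact ⟨y, hy, x, hx, hxy.symm⟩
  · rintro (i | p)
    · exact ⟨fun _ => ⟨X i, rfl, (hM _ (hX i)).1⟩, fun _ => ⟨i, rfl⟩⟩
    · constructor
      · rintro ⟨i, hi⟩; cases hi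
      · rintro ⟨x, ⟨y, -, rfl⟩, hx⟩
        exact absurd hx y.2

end Final

/-- For every `g ≥ 1` there is `κ ≥ 1` such that every graphical conjunctive query
with linked matching number at least `κ` has the g-grate as a query minor. -/
theorem stmt_14 (g : ℕ) (hg : 1 ≤ g) :
    ∃ κ : ℕ, 1 ≤ κ ∧
      ∀ Q : Query, Q.HasLinkedMatchingOfSize κ → (grateQuery g).IsMinorOf Q := by
  classical
  obtain ⟨h, -, hh⟩ := exists_gridM ((4 * g * (4 * g) + 1) * g)
    (Nat.mul_pos (Nat.succ_pos _) hg)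
  refine ⟨8 * h + 1, by omega, ?_⟩
  rintro Q ⟨M, hMc, hM, hM', hwl⟩
  have hS : 8 * h + 1 ≤ {y : ↥(Q.freeᶜ) | ∃ x, (x, (y : Q.V)) ∈ M}.ncard := by
    refine hMc.trans ?_
    have hinj : Set.InjOn Prod.snd (M : Set (Q.V × Q.V)) := by
      intro p hp q hq hpq
      by_contra hne
      exact (hM' p hp q hq hne).2 hpq
    have himg : Subtype.val '' {y : ↥(Q.freeᶜ) | ∃ x, (x, (y : Q.V)) ∈ M} =
        ((M.image Prod.snd : Finset Q.V) : Set Q.V) := by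
      ext y
      simp only [Finset.coe_image, Set.mem_image, Set.mem_ofPred_eq]
      constructor
      · rintro ⟨y, ⟨x, hx⟩, rfl⟩
        exact ⟨_, hx, rfl⟩
      · rintro ⟨p, hp, rfl⟩
        exact ⟨⟨p.2, (hM p hp).2.1⟩, ⟨p.1, hp⟩, rfl⟩
    rw [← Set.ncard_image_of_injective _ Subtype.val_injective, himg, Set.ncard_coe_finset,
      Finset.card_image_of_injOn hinj]
  obtain ⟨X, E, hE, hlink⟩ := hh _ _ _ hwl.wl hS
  obtain ⟨D, c, R, hR⟩ := exists_rooted hg rfl hE hlink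
  obtain ⟨Y, hY⟩ := hR.exists_grateM
  exact hY.isMinorOf M hM hM'
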